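/- Let p be an odd prime. If p ≡ 1 (mod 4), write p = x^2 + 4y^2 with integers x, y; then Σ_{k=0}^{p−1} k^2·C(2k,k)^3/(−8)^k ≡ (10/27)x^2 − (4/9)p + p^2/(54x^2) (mod p^3) and Σ_{k=0}^{p−1} k^3·C(2k,k)^3/(−8)^k ≡ −(4/81)x^2 + (4/27)p − 17p^2/(324x^2) (mod p^3). If p ≡ 3 (mod 4) and p ≠ 3, then Σ_{k=0}^{p−1} k^2·C(2k,k)^3/(−8)^k ≡ (1/18)R_1(p) + (7/27)p (mod p^2) and Σ_{k=0}^{p−1} k^3·C(2k,k)^3/(−8)^k ≡ −(2/27)R_1(p) − (10/81)p (mod p^2). -/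

import Mathlib

/-- `a ≡ b (mod p^r)` for rationals: the numerator of `a - b` in lowest terms
is divisible by `p^r`. -/
def ratCongr (p r : ℕ) (a b : ℚ) : Prop := (p : ℤ)^r ∣ (a - b).num
/-- `R_1(p) = (2p + 2 - 2^(p-1)) * C((p-1)/2, ⌊p/4⌋)^2`. -/
def R1 (p : ℕ) : ℚ :=
  (2*(p:ℚ) + 2 - 2^(p-1)) * (((p-1)/2).choose (p/4) : ℚ)^2


section part1
open Finset

def aa {R : Type*} [CommRing R] (v : R) (j : ℕ) : R := -(2*(j:R)+1) * ((2*(j:R)+1)^2 - v)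
def bb {R : Type*} [CommRing R] (v : R) (j : ℕ) : R := ((j:R)+1) * (((j:R)+1)^2 - v)
def PP {R : Type*} [CommRing R] (n : ℕ) (v : R) (k : ℕ) : R :=
  (∏ j ∈ range k, aa v j) * ∏ j ∈ Ico k n, bb v j
def FX {R : Type*} [CommRing R] (n : ℕ) (v : R) : R := ∑ k ∈ range (n+1), PP n v k
def FB {R : Type*} [CommRing R] (n : ℕ) (v : R) : R :=
  ∑ k ∈ range (n+1), (3*(k:R)+1) * PP n v k
def FZ {R : Type*} [CommRing R] (n : ℕ) (v : R) : R :=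
  ∑ k ∈ range (n+1), (18*(k:R)^2+14*(k:R)+3-3*v) * PP n v k
def DD {R : Type*} [CommRing R] (n : ℕ) (v : R) : R := ∏ j ∈ range n, bb v j

def xx {K : Type*} [Field K] (v : K) (k : ℕ) : K := ∏ j ∈ range k, (aa v j / bb v j)

lemma xx_succ {K : Type*} [Field K] (v : K) (k : ℕ) : xx v (k+1) = xx v k * (aa v k / bb v k) := by
  unfold xx; rw [prod_range_succ]

structure Good {K : Type*} [Field K] (M : ℕ) (w : K) : Prop where
  h0 : ∀ j : ℕ, j < M → (j:K)+1 ≠ 0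
  h1 : ∀ j : ℕ, j ≤ M → (j:K) - w ≠ 0
  h2 : ∀ j : ℕ, j ≤ M → (j:K) - 1 - w ≠ 0
  h3 : ∀ j : ℕ, j ≤ M + 3 → (j:K) + w ≠ 0
  h4 : ∀ j : ℕ, j ≤ M → 2*(j:K) - 1 - w ≠ 0

lemma Good.mono {K : Type*} [Field K] {M : ℕ} {w : K} (h : Good (M+1) w) : Good M w :=
  ⟨fun j hj => h.h0 j (by omega), fun j hj => h.h1 j (by omega), fun j hj => h.h2 j (by omega),
   fun j hj => h.h3 j (by omega), fun j hj => h.h4 j (by omega)⟩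

lemma yy_eq {K : Type*} [Field K] (M : ℕ) (w : K) (h : Good M w) :
    xx ((w+2)^2) M = -(2+w)*(2*M+1+w)*(M-1-w)*(M-w) / (w*(2*M-1-w)*(M+1+w)*(M+2+w)) * xx (w^2) M := by
  induction M with
  | zero =>
    have a1 := h.h3 0 (by omega)
    have a2 := h.h3 1 (by omega)
    have a3 := h.h3 2 (by omega)
    have a4 := h.h4 0 (by omega)
    simp [xx] at *
    field_simp
    ring
  | succ M ih =>
    have ih := ih h.mono
    rw [xx_succ, xx_succ, ih]
    have b1 := h.h3 0 (by omega)
    have b2 := h.h3 (M+1) (by omega)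
    have b3 := h.h3 (M+2) (by omega)
    have b4 := h.h3 (M+3) (by omega)
    have b5 := h.h4 (M) (by omega)
    have b6 := h.h4 (M+1) (by omega)
    have b7 := h.h1 (M+1) (by omega)
    have b8 := h.h2 (M) (by omega)
    have b9 := h.h0 M (by omega)
    have e1 : bb (w^2) M = (M+1)*((M+1:ℕ)-w)*((M+1:ℕ)+w) := by simp [bb]; ring
    have e2 : bb ((w+2)^2) M = (M+1)*(M-1-w)*((M+3:ℕ)+w) := by simp [bb]; ring
    have e3 : aa (w^2) M = -(2*M+1)*(2*(M+1:ℕ)-1-w)*(2*M+1+w) := by simp [aa]; ring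
    have e4 : aa ((w+2)^2) M = -(2*M+1)*(2*M-1-w)*(2*M+3+w) := by simp [aa]; ring
    rw [e1,e2,e3,e4]
    simp only [Nat.cast_add, Nat.cast_one, Nat.cast_ofNat, Nat.cast_zero, zero_add] at *
    have c1 : (M:K)+1+1+w ≠ 0 := by convert b3 using 1; ring
    have c2 : (M:K)+1+2+w ≠ 0 := by convert b4 using 1; ring
    generalize (M:K) = m at *
    generalize xx (w^2) M = X at *
    field_simp
    ring

lemma tele {K : Type*} [Field K] (M : ℕ) (w : K) (h : Good M w) (κ s0 s1 s2 t0 t1 t2 u0 u1 u2 : K)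
   (hc : ∀ k : K, -(2+w)*(2*k+1+w)*(k-1-w)*(k-w)*(t0+t1*k+t2*k^2)
      - κ*(u0+u1*k+u2*k^2)*(w*(2*k-1-w)*(k+1+w)*(k+2+w)) =
      w*(-2*(2*k+1)*(2*k+1+w)*(2*k-1-w)*(s0+s1*(k+1)+s2*(k+1)^2)
        - 2*k*(k-w)*(k+2+w)*(s0+s1*k+s2*k^2))) :
   ∑ k ∈ range (M+1), ((t0+t1*k+t2*k^2) * xx ((w+2)^2) k - κ * ((u0+u1*k+u2*k^2) * xx (w^2) k))
    = -2*(2*M+1)*(2*M+1+w)*(s0+s1*(M+1)+s2*(M+1)^2) / ((M+1+w)*(M+2+w)) * xx (w^2) M := by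
  induction M with
  | zero =>
    have a1 := h.h3 0 (by omega)
    have a2 := h.h3 1 (by omega)
    have a3 := h.h3 2 (by omega)
    have a4 := h.h4 0 (by omega)
    have hc0 := hc 0
    rw [zero_add, sum_range_one]
    simp only [Nat.cast_zero, Nat.cast_one, Nat.cast_ofNat, zero_add] at a1 a2 a3 a4
    have hne : w*(1+w)^2 ≠ 0 := mul_ne_zero a1 (pow_ne_zero _ a2)
    have e2 : (2+w)*(t0 - κ*u0) = -2*(s0+s1+s2) := by
      apply mul_left_cancel₀ hne
      linear_combination -hc0
    simp only [xx, range_zero, prod_empty, Nat.cast_zero]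
    rw [mul_one, mul_one, mul_one, eq_div_iff (mul_ne_zero (by simpa using a2) (by simpa using a3))]
    linear_combination (1+w)*e2
  | succ M ih =>
    rw [sum_range_succ, ih h.mono, yy_eq _ w h, xx_succ]
    have b1 := h.h3 0 (by omega)
    have b2 := h.h3 (M+1) (by omega)
    have b3 := h.h3 (M+2) (by omega)
    have b4 := h.h3 (M+3) (by omega)
    have b6 := h.h4 (M+1) (by omega)
    have b7 := h.h1 (M+1) (by omega)
    have b9 := h.h0 M (by omega)
    have e1 : bb (w^2) M = (M+1)*((M+1:ℕ)-w)*((M+1:ℕ)+w) := by simp [bb]; ring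
    have e3 : aa (w^2) M = -(2*M+1)*(2*(M+1:ℕ)-1-w)*(2*M+1+w) := by simp [aa]; ring
    have := hc (M+1)
    rw [e1,e3]
    simp only [Nat.cast_add, Nat.cast_one, Nat.cast_ofNat, Nat.cast_zero, zero_add] at *
    have c1 : (M:K)+1+1+w ≠ 0 := by convert b3 using 1; ring
    have c2 : (M:K)+1+2+w ≠ 0 := by convert b4 using 1; ring
    generalize (M:K) = m at *
    generalize xx (w^2) M = X at *
    have key : ∀ T U S S' : K, -(2+w)*(2*(m+1)+1+w)*((m+1)-1-w)*((m+1)-w)*T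
      - κ*U*(w*(2*(m+1)-1-w)*((m+1)+1+w)*((m+1)+2+w)) =
      w*(-2*(2*(m+1)+1)*(2*(m+1)+1+w)*(2*(m+1)-1-w)*S'
        - 2*(m+1)*((m+1)-w)*((m+1)+2+w)*S) → 
       -2 * (2 * m + 1) * (2 * m + 1 + w) * S / ((m + 1 + w) * (m + 2 + w)) * X +
      (T * (-(2 + w) * (2 * (m + 1) + 1 + w) * (m + 1 - 1 - w) * (m + 1 - w) / (w * (2 * (m + 1) - 1 - w) * (m + 1 + 1 + w) * (m + 1 + 2 + w)) *
            (X * (-(2 * m + 1) * (2 * (m + 1) - 1 - w) * (2 * m + 1 + w) / ((m + 1) * (m + 1 - w) * (m + 1 + w))))) -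
        κ * (U * (X * (-(2 * m + 1) * (2 * (m + 1) - 1 - w) * (2 * m + 1 + w) / ((m + 1) * (m + 1 - w) * (m + 1 + w)))))) =
    -2 * (2 * (m + 1) + 1) * (2 * (m + 1) + 1 + w) * S' / ((m + 1 + 1 + w) * (m + 1 + 2 + w)) *
      (X * (-(2 * m + 1) * (2 * (m + 1) - 1 - w) * (2 * m + 1 + w) / ((m + 1) * (m + 1 - w) * (m + 1 + w)))) := by
      intro T U S S' H
      have hT : (2+w)*(2*(m+1)+1+w)*((m+1)-1-w)*((m+1)-w)*T = - κ*U*(w*(2*(m+1)-1-w)*((m+1)+1+w)*((m+1)+2+w)) -  w*(-2*(2*(m+1)+1)*(2*(m+1)+1+w)*(2*(m+1)-1-w)*S'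
        - 2*(m+1)*((m+1)-w)*((m+1)+2+w)*S) := by linear_combination -H
      have hT' : T * (-(2 + w) * (2 * (m + 1) + 1 + w) * (m + 1 - 1 - w) * (m + 1 - w) / (w * (2 * (m + 1) - 1 - w) * (m + 1 + 1 + w) * (m + 1 + 2 + w)) *
            (X * (-(2 * m + 1) * (2 * (m + 1) - 1 - w) * (2 * m + 1 + w) / ((m + 1) * (m + 1 - w) * (m + 1 + w))))) = ((2+w)*(2*(m+1)+1+w)*((m+1)-1-w)*((m+1)-w)*T) * (X * (2 * m + 1) * (2 * m + 1 + w) / (w * (m + 1 + 1 + w) * (m + 1 + 2 + w) * ((m + 1) * (m + 1 - w) * (m + 1 + w)))) := by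
        field_simp
      rw [hT', hT]
      field_simp
      ring
    exact key _ _ _ _ this

lemma telX {K : Type*} [Field K] (M : ℕ) (w : K) (h : Good M w) (h5 : 3*w+1 ≠ 0) (h6 : 3*w+5 ≠ 0) :
   ∑ k ∈ range (M+1), xx ((w+2)^2) k - (-3*(w+2)/(w*(3*w+1)*(3*w+5))) * ∑ k ∈ range (M+1), (18*(k:K)^2+14*k+3-3*w^2) * xx (w^2) k
    = -2*(2*M+1)*(2*M+1+w)*((w+2)*(2*(w+1)-(9*w+5)*(M+1)-6*(M+1)^2)/(w*(3*w+1)*(3*w+5))) / ((M+1+w)*(M+2+w)) * xx (w^2) M := by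
  have b1 := h.h3 0 (by omega)
  simp only [Nat.cast_zero, zero_add] at b1
  have := tele M w h (-3*(w+2)/(w*(3*w+1)*(3*w+5))) ((w+2)*(2*(w+1))/(w*(3*w+1)*(3*w+5))) (-(w+2)*(9*w+5)/(w*(3*w+1)*(3*w+5))) (-6*(w+2)/(w*(3*w+1)*(3*w+5))) 1 0 0 (3-3*w^2) 14 18 (by
    intro k
    have hq : (1/(w*(3*w+1)*(3*w+5))) * (w*(3*w+1)*(3*w+5)) = 1 :=
      one_div_mul_cancel (mul_ne_zero (mul_ne_zero b1 h5) h6)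
    simp only [div_eq_mul_inv, one_mul] at hq ⊢
    generalize (w*(3*w+1)*(3*w+5))⁻¹ = c at *
    linear_combination ((2+w)*(2*k+1+w)*(k-1-w)*(k-w)) * hq)
  rw [sum_sub_distrib, ← mul_sum] at this
  convert this using 2
  · apply sum_congr rfl; intros; ring
  · congr 1; apply sum_congr rfl; intros; ring
  · ring

lemma telZ {K : Type*} [Field K] (M : ℕ) (w : K) (h : Good M w) (h5 : (3:K) ≠ 0) :
   ∑ k ∈ range (M+1), (18*(k:K)^2+14*k+3-3*(w+2)^2) * xx ((w+2)^2) k - (-(w+2)*(3*w+1)*(3*w+5)/(3*w)) * ∑ k ∈ range (M+1), xx (w^2) k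
    = -2*(2*M+1)*(2*M+1+w)*((w+2)*(2*(w+1)-(9*w+13)*(M+1)+6*(M+1)^2)/(3*w)) / ((M+1+w)*(M+2+w)) * xx (w^2) M := by
  have b1 := h.h3 0 (by omega)
  simp only [Nat.cast_zero, zero_add] at b1
  have := tele M w h (-(w+2)*(3*w+1)*(3*w+5)/(3*w)) ((w+2)*(2*(w+1))/(3*w)) (-(w+2)*(9*w+13)/(3*w)) (6*(w+2)/(3*w)) (3-3*(w+2)^2) 14 18 1 0 0 (by
    intro k; field_simp; ring)
  rw [sum_sub_distrib, ← mul_sum] at this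
  convert this using 2
  · apply sum_congr rfl; intros; ring
  · congr 1; apply sum_congr rfl; intros; ring
  · ring

lemma telB {K : Type*} [Field K] (M : ℕ) (w : K) (h : Good M w) :
   ∑ k ∈ range (M+1), (3*(k:K)+1) * xx ((w+2)^2) k - (-(w+2)/w) * ∑ k ∈ range (M+1), (3*(k:K)+1) * xx (w^2) k
    = -2*(2*M+1)*(2*M+1+w)*(-(w+1)*(w+2)/w) / ((M+1+w)*(M+2+w)) * xx (w^2) M := by
  have b1 := h.h3 0 (by omega)
  simp only [Nat.cast_zero, zero_add] at b1
  have := tele M w h (-(w+2)/w) (-(w+1)*(w+2)/w) 0 0 1 3 0 1 3 0 (by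
    intro k; field_simp; ring)
  rw [sum_sub_distrib, ← mul_sum] at this
  convert this using 2
  · apply sum_congr rfl; intros; ring
  · congr 1; apply sum_congr rfl; intros; ring
  · ring
end part1

section part2
open Finset

lemma good_rat (N : ℕ) : Good N (2*(N:ℚ)+1) := by
  refine ⟨?_, ?_, ?_, ?_, ?_⟩
  · intro j hj; positivity
  · intro j hj h
    have : (j:ℚ) ≤ N := by exact_mod_cast hj
    linarith [(Nat.cast_nonneg N : (0:ℚ) ≤ N)]
  · intro j hj h
    have : (j:ℚ) ≤ N := by exact_mod_cast hj
    linarith [(Nat.cast_nonneg N : (0:ℚ) ≤ N)]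
  · intro j hj; positivity
  · intro j hj h
    have : (j:ℚ) ≤ N := by exact_mod_cast hj
    linarith [(Nat.cast_nonneg N : (0:ℚ) ≤ N)]

lemma y_last (N : ℕ) : xx (((2*(N:ℚ)+1)+2)^2) (N+1) =
    -8*(2*(N:ℚ)+3)*(2*N+1)/(3*(3*N+2)*(3*N+4)) * xx ((2*(N:ℚ)+1)^2) N := by
  rw [xx_succ, yy_eq N _ (good_rat N)]
  have e2 : bb ((2*(N:ℚ)+1+2)^2) N = -((N:ℚ)+1)*(N+2)*(3*N+4) := by simp [bb]; ring
  have e4 : aa ((2*(N:ℚ)+1+2)^2) N = (2*(N:ℚ)+1)*2*(4*N+4) := by simp [aa]; ring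
  rw [e2, e4]
  have : (2*(N:ℚ)-1-(2*N+1)) = -2 := by ring
  have h2 : ((N:ℚ)-1-(2*N+1)) = -(N+2) := by ring
  have h3 : ((N:ℚ)-(2*N+1)) = -(N+1) := by ring
  have h4 : ((N:ℚ)+1+(2*N+1)) = 3*N+2 := by ring
  have h5 : ((N:ℚ)+2+(2*N+1)) = 3*(N+1) := by ring
  rw [this, h2, h3, h4, h5]
  generalize xx ((2*(N:ℚ)+1)^2) N = X
  have a1 : 2*(N:ℚ)+1 ≠ 0 := by positivity
  have a2 : (N:ℚ)+1 ≠ 0 := by positivity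
  have a3 : (N:ℚ)+2 ≠ 0 := by positivity
  have a4 : 3*(N:ℚ)+2 ≠ 0 := by positivity
  have a5 : 3*(N:ℚ)+4 ≠ 0 := by positivity
  field_simp
  ring

def QX (N : ℕ) : ℚ := ∑ k ∈ range (N+1), xx ((2*(N:ℚ)+1)^2) k
def QB (N : ℕ) : ℚ := ∑ k ∈ range (N+1), (3*(k:ℚ)+1) * xx ((2*(N:ℚ)+1)^2) k
def QZ (N : ℕ) : ℚ := ∑ k ∈ range (N+1), (18*(k:ℚ)^2+14*(k:ℚ)+3-3*(2*(N:ℚ)+1)^2) * xx ((2*(N:ℚ)+1)^2) k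

lemma QX_succ (N : ℕ) : QX (N+1) = -3*(2*N+3)/((2*N+1)*(6*N+4)*(6*N+8)) * QZ N := by
  have := telX N _ (good_rat N) (by positivity) (by positivity)
  have e : (2*((N+1:ℕ):ℚ)+1) = (2*(N:ℚ)+1)+2 := by push_cast; ring
  unfold QX QZ
  rw [sum_range_succ, e, y_last]
  have t := sub_eq_iff_eq_add.mp this
  rw [t]
  have a1 : 2*(N:ℚ)+1 ≠ 0 := by positivity
  have a2 : (N:ℚ)+1 ≠ 0 := by positivity
  have a4 : 3*(N:ℚ)+2 ≠ 0 := by positivity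
  have a5 : 3*(N:ℚ)+4 ≠ 0 := by positivity
  have h4 : ((N:ℚ)+1+(2*N+1)) = 3*N+2 := by ring
  have h5 : ((N:ℚ)+2+(2*N+1)) = 3*(N+1) := by ring
  have h7 : 3*(2*(N:ℚ)+1)+1=2*(3*N+2) := by ring
  have h8 : 3*(2*(N:ℚ)+1)+5=2*(3*N+4) := by ring
  have h9 : (6*(N:ℚ)+4)=2*(3*N+2) := by ring
  have h10 : (6*(N:ℚ)+8)=2*(3*N+4) := by ring
  rw [h4, h5, h7, h8, h9, h10]
  generalize xx ((2*(N:ℚ)+1)^2) N = X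
  generalize ∑ k ∈ range (N+1), (18*(k:ℚ)^2+14*(k:ℚ)+3-3*(2*(N:ℚ)+1)^2) * xx ((2*(N:ℚ)+1)^2) k = S
  field_simp
  ring

lemma QZ_succ (N : ℕ) : QZ (N+1) = -(2*N+3)*(6*N+4)*(6*N+8)/(3*(2*N+1)) * QX N := by
  have := telZ N _ (good_rat N) (by norm_num)
  have e : (2*((N+1:ℕ):ℚ)+1) = (2*(N:ℚ)+1)+2 := by push_cast; ring
  unfold QX QZ
  rw [sum_range_succ, e, y_last]
  have t := sub_eq_iff_eq_add.mp this
  rw [t]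
  have a1 : 2*(N:ℚ)+1 ≠ 0 := by positivity
  have a2 : (N:ℚ)+1 ≠ 0 := by positivity
  have a4 : 3*(N:ℚ)+2 ≠ 0 := by positivity
  have a5 : 3*(N:ℚ)+4 ≠ 0 := by positivity
  have h4 : ((N:ℚ)+1+(2*N+1)) = 3*N+2 := by ring
  have h5 : ((N:ℚ)+2+(2*N+1)) = 3*(N+1) := by ring
  rw [h4, h5]
  generalize xx ((2*(N:ℚ)+1)^2) N = X
  generalize ∑ k ∈ range (N+1), xx ((2*(N:ℚ)+1)^2) k = S
  push_cast
  field_simp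
  ring

lemma QB_succ (N : ℕ) : QB (N+1) = -(2*N+3)/(2*N+1) * QB N := by
  have := telB N _ (good_rat N)
  have e : (2*((N+1:ℕ):ℚ)+1) = (2*(N:ℚ)+1)+2 := by push_cast; ring
  unfold QB
  rw [sum_range_succ, e, y_last]
  have t := sub_eq_iff_eq_add.mp this
  rw [t]
  have a1 : 2*(N:ℚ)+1 ≠ 0 := by positivity
  have a2 : (N:ℚ)+1 ≠ 0 := by positivity
  have a4 : 3*(N:ℚ)+2 ≠ 0 := by positivity
  have a5 : 3*(N:ℚ)+4 ≠ 0 := by positivity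
  have h4 : ((N:ℚ)+1+(2*N+1)) = 3*N+2 := by ring
  have h5 : ((N:ℚ)+2+(2*N+1)) = 3*(N+1) := by ring
  rw [h4, h5]
  generalize xx ((2*(N:ℚ)+1)^2) N = X
  generalize ∑ k ∈ range (N+1), (3*(k:ℚ)+1) * xx ((2*(N:ℚ)+1)^2) k = S
  push_cast
  field_simp
  ring

lemma QB_eq (N : ℕ) : QB N = (-1)^N * (2*N+1) := by
  induction N with
  | zero => simp [QB, xx]
  | succ N ih =>
    rw [QB_succ, ih]
    have a1 : 2*(N:ℚ)+1 ≠ 0 := by positivity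
    push_cast
    field_simp
    ring

lemma QXZ_zero (M : ℕ) : QZ (2*M) = 0 ∧ QX (2*M+1) = 0 := by
  induction M with
  | zero =>
    have : QZ 0 = 0 := by simp [QZ, xx]
    exact ⟨this, by rw [mul_zero, QX_succ, this, mul_zero]⟩
  | succ M ih =>
    have : QZ (2*(M+1)) = 0 := by
      rw [show 2*(M+1) = (2*M+1)+1 by ring, QZ_succ, ih.2, mul_zero]
    exact ⟨this, by rw [QX_succ, this, mul_zero]⟩

lemma QX_even (M : ℕ) : QX (2*M) = (4*M+1) * ∏ i ∈ range M, (4*(3*i+1)*(3*i+2) / ((6*i+5)*(6*i+7)) : ℚ) := by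
  induction M with
  | zero => simp [QX, xx]
  | succ M ih =>
    rw [show 2*(M+1) = (2*M+1)+1 by ring, QX_succ, QZ_succ, ih, prod_range_succ]
    generalize ∏ i ∈ range M, (4*(3*i+1)*(3*i+2) / ((6*i+5)*(6*i+7)) : ℚ) = P
    push_cast
    have h1 : (2*(2*(M:ℚ)+1)+1) ≠ 0 := by positivity
    have h2 : (2*(2*(M:ℚ))+1) ≠ 0 := by positivity
    have h3 : (6*(2*(M:ℚ)+1)+4) = 2*(6*M+5) := by ring
    have h4 : (6*(2*(M:ℚ)+1)+8) = 2*(6*M+7) := by ring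
    have h5 : (2*(2*(M:ℚ)+1)+1) = 4*M+3 := by ring
    have h6 : (2*(2*(M:ℚ))+1) = 4*M+1 := by ring
    rw [h3, h4, h6, h5]
    have a1 : 4*(M:ℚ)+1 ≠ 0 := by positivity
    have a2 : 4*(M:ℚ)+3 ≠ 0 := by positivity
    field_simp
    ring
end part2

section part3
open Finset

section maps
variable {R S : Type*} [CommRing R] [CommRing S] (f : R →+* S)
lemma map_aa (v : R) (j : ℕ) : f (aa v j) = aa (f v) j := by simp [aa, map_ofNat]
lemma map_bb (v : R) (j : ℕ) : f (bb v j) = bb (f v) j := by simp [bb]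
lemma map_PP (n : ℕ) (v : R) (k : ℕ) : f (PP n v k) = PP n (f v) k := by
  simp [PP, map_prod, map_aa, map_bb]
lemma map_DD (n : ℕ) (v : R) : f (DD n v) = DD n (f v) := by simp [DD, map_prod, map_bb]
lemma map_FX (n : ℕ) (v : R) : f (FX n v) = FX n (f v) := by simp [FX, map_sum, map_PP]
lemma map_FB (n : ℕ) (v : R) : f (FB n v) = FB n (f v) := by simp [FB, map_sum, map_PP, map_ofNat]
lemma map_FZ (n : ℕ) (v : R) : f (FZ n v) = FZ n (f v) := by simp [FZ, map_sum, map_PP, map_ofNat]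
end maps

lemma PP_eq {K : Type*} [Field K] (n k : ℕ) (hk : k ≤ n) (v : K) (h : ∀ j < n, bb v j ≠ 0) :
    PP n v k = DD n v * xx v k := by
  unfold PP DD xx
  rw [← prod_range_mul_prod_Ico _ hk, prod_div_distrib]
  have : ∏ j ∈ range k, bb v j ≠ 0 := prod_ne_zero_iff.mpr (fun j hj => h j (by simp at hj; omega))
  field_simp

lemma FX_eq {K : Type*} [Field K] (n : ℕ) (v : K) (h : ∀ j < n, bb v j ≠ 0) :
    FX n v = DD n v * ∑ k ∈ range (n+1), xx v k := by
  unfold FX; rw [mul_sum]; apply sum_congr rfl; intro k hk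
  rw [PP_eq n k (by simp at hk; omega) v h]
lemma FB_eq {K : Type*} [Field K] (n : ℕ) (v : K) (h : ∀ j < n, bb v j ≠ 0) :
    FB n v = DD n v * ∑ k ∈ range (n+1), (3*(k:K)+1) * xx v k := by
  unfold FB; rw [mul_sum]; apply sum_congr rfl; intro k hk
  rw [PP_eq n k (by simp at hk; omega) v h]; ring
lemma FZ_eq {K : Type*} [Field K] (n : ℕ) (v : K) (h : ∀ j < n, bb v j ≠ 0) :
    FZ n v = DD n v * ∑ k ∈ range (n+1), (18*(k:K)^2+14*(k:K)+3-3*v) * xx v k := by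
  unfold FZ; rw [mul_sum]; apply sum_congr rfl; intro k hk
  rw [PP_eq n k (by simp at hk; omega) v h]; ring

lemma bb_ne_rat (n j : ℕ) (hj : j < n) : bb ((2*(n:ℚ)+1)^2) j ≠ 0 := by
  have : bb ((2*(n:ℚ)+1)^2) j = -((j:ℚ)+1)*((2*n+1)-(j+1))*((j:ℚ)+1+(2*n+1)) := by simp [bb]; ring
  rw [this]
  have h : (j:ℚ) < n := by exact_mod_cast hj
  have h2 : (0:ℚ) < (2*n+1)-(j+1) := by linarith [(Nat.cast_nonneg n : (0:ℚ) ≤ n)]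
  have h3 : (0:ℚ) < (j:ℚ)+1 := by positivity
  have h4 : (0:ℚ) < (j:ℚ)+1+(2*n+1) := by positivity
  exact mul_ne_zero (mul_ne_zero (by linarith) h2.ne') h4.ne'

def OO (k : ℕ) : ℚ := ∏ i ∈ range k, (2*(i:ℚ)+1)

lemma OO_ne (k : ℕ) : OO k ≠ 0 := prod_ne_zero_iff.mpr (fun i _ => by positivity)

lemma OO_sym (a c : ℕ) : OO (a+c+1+c) = OO a * (2*(a+c)+1) * ∏ i ∈ range c, ((2*((a:ℚ)+c)+1)^2 - 4*((i:ℚ)+1)^2) := by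
  unfold OO
  rw [prod_range_add, prod_range_add, prod_range_add]
  rw [← prod_range_reflect (fun x => 2*((a+x:ℕ):ℚ)+1) c]
  have : ∀ i ∈ range c, (2*((a:ℚ)+c)+1)^2 - 4*((i:ℚ)+1)^2 = (2*((a+(c-1-i):ℕ):ℚ)+1) * (2*((a+c+1+i:ℕ):ℚ)+1) := by
    intro i hi
    simp at hi
    have : ((c-1-i:ℕ):ℚ) = c-1-i := by
      rw [Nat.sub_sub, Nat.cast_sub (by omega)]; push_cast; ring
    push_cast
    rw [this]
    ring
  rw [prod_congr rfl this, prod_mul_distrib]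
  simp
  ring

lemma OO_three (m : ℕ) : OO (3*m+1) = OO m * 3^m * ∏ i ∈ range m, ((6*(i:ℚ)+5)*(6*i+7)) := by
  induction m with
  | zero => simp [OO]
  | succ m ih =>
    have : OO (3*(m+1)+1) = OO (3*m+1) * (6*m+3)*(6*m+5)*(6*m+7) := by
      rw [show 3*(m+1)+1 = 3*m+1+1+1+1 by ring]
      unfold OO
      rw [prod_range_succ, prod_range_succ, prod_range_succ]; push_cast; ring
    rw [this, ih, prod_range_succ]
    have : OO (m+1) = OO m * (2*m+1) := by unfold OO; rw [prod_range_succ]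
    rw [this]; ring

lemma fact_three (m : ℕ) : ((3*m).factorial : ℚ) = 3^m * m.factorial * ∏ i ∈ range m, ((3*(i:ℚ)+1)*(3*i+2)) := by
  induction m with
  | zero => simp
  | succ m ih =>
    rw [show 3*(m+1) = 3*m+1+1+1 by ring, Nat.factorial_succ, Nat.factorial_succ, Nat.factorial_succ, Nat.factorial_succ, prod_range_succ]
    push_cast
    rw [ih]; ring

lemma QX_closed (m : ℕ) : QX (2*m) * (m.factorial * ∏ i ∈ range m, ((4*(m:ℚ)+1)^2 - 4*((i:ℚ)+1)^2))
    = 4^m * (3*m).factorial := by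
  have h1 := OO_sym m m
  rw [show m+m+1+m=3*m+1 by ring, OO_three] at h1
  have h2 : 3^m * ∏ i ∈ range m, ((6*(i:ℚ)+5)*(6*i+7)) = (4*m+1) * ∏ i ∈ range m, ((4*(m:ℚ)+1)^2 - 4*((i:ℚ)+1)^2) := by
    apply mul_left_cancel₀ (OO_ne m)
    rw [show (2*((m:ℚ)+m)+1) = 4*m+1 by ring] at h1
    linear_combination h1
  have hA : ∏ i ∈ range m, ((6*(i:ℚ)+5)*(6*i+7)) ≠ 0 := prod_ne_zero_iff.mpr (fun i _ => by positivity)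
  rw [QX_even, prod_div_distrib, fact_three]
  have : ∏ i ∈ range m, (4*(3*(i:ℚ)+1)*(3*i+2)) = 4^m * ∏ i ∈ range m, ((3*(i:ℚ)+1)*(3*i+2)) := by
    rw [← card_range m, ← prod_const, card_range, ← prod_mul_distrib]
    exact prod_congr rfl (fun i _ => by ring)
  rw [this]
  generalize ∏ i ∈ range m, ((6*(i:ℚ)+5)*(6*i+7)) = A at *
  generalize ∏ i ∈ range m, ((3*(i:ℚ)+1)*(3*i+2)) = U at *
  generalize ∏ i ∈ range m, ((4*(m:ℚ)+1)^2 - 4*((i:ℚ)+1)^2) = Y at *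
  have hY : (4*m+1) * Y / A = 3^m := by rw [← h2]; field_simp
  have : (4 * (m:ℚ) + 1) * (4 ^ m * U / A) * (m.factorial * Y) = 4^m * m.factorial * U * ((4*m+1) * Y / A) := by
    field_simp
  rw [this, hY]; ring

lemma QZ_closed (M : ℕ) : QZ (2*M+1) * (M.factorial * ∏ i ∈ range (M+1), ((4*(M:ℚ)+3)^2 - 4*((i:ℚ)+1)^2))
    = -16*4^M * (3*M+2).factorial * (2*M+1)*(6*M+5) := by
  have h1 := OO_sym M (M+1)
  have h0 : OO (M+(M+1)+1+(M+1)) = OO (3*M+1) * (6*M+3)*(6*M+5) := by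
    rw [show M+(M+1)+1+(M+1) = 3*M+1+1+1 by ring]
    unfold OO
    rw [prod_range_succ, prod_range_succ]; push_cast; ring
  rw [h0, OO_three] at h1
  have h2 : 3^M * (6*M+3)*(6*M+5)*∏ i ∈ range M, ((6*(i:ℚ)+5)*(6*i+7)) = (4*M+3) * ∏ i ∈ range (M+1), ((4*(M:ℚ)+3)^2 - 4*((i:ℚ)+1)^2) := by
    apply mul_left_cancel₀ (OO_ne M)
    rw [show (2*((M:ℚ)+(M+1:ℕ))+1) = 4*M+3 by push_cast; ring] at h1
    linear_combination h1
  have hA : ∏ i ∈ range M, ((6*(i:ℚ)+5)*(6*i+7)) ≠ 0 := prod_ne_zero_iff.mpr (fun i _ => by positivity)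
  rw [QZ_succ, QX_even, prod_div_distrib, Nat.factorial_succ, Nat.factorial_succ]
  push_cast
  rw [fact_three]
  have : ∏ i ∈ range M, (4*(3*(i:ℚ)+1)*(3*i+2)) = 4^M * ∏ i ∈ range M, ((3*(i:ℚ)+1)*(3*i+2)) := by
    rw [← card_range M, ← prod_const, card_range, ← prod_mul_distrib]
    exact prod_congr rfl (fun i _ => by ring)
  rw [this]
  have h4 : (4*(M:ℚ)+1) ≠ 0 := by positivity
  rw [show (2*(2*(M:ℚ))+1) = 4*M+1 by ring]
  have e : ∀ U V W Y G : ℚ, W ≠ 0 → (3^M * (6*M+3)*(6*M+5)*W = (4*M+3) * Y) → -(2 * (2 * (M:ℚ)) + 3) * (6 * (2 * M) + 4) * (6 * (2 * M) + 8) / (3 * (4 * M + 1)) *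
        ((4 * M + 1) * (V * U / W)) * (G * Y) = -16 * V * ((3 * M + 1 + 1) * ((3 * M + 1) * (3^M*G*U))) * (2 * M + 1) * (6 * M + 5) := by
    intro U V W Y G hW h
    have hY : (4*M+3) * Y / W = 3^M * (6*M+3)*(6*M+5) := by rw [← h]; field_simp
    have : -(2 * (2 * (M:ℚ)) + 3) * (6 * (2 * M) + 4) * (6 * (2 * M) + 8) / (3 * (4 * M + 1)) *
        ((4 * M + 1) * (V * U / W)) * (G * Y) = -(1/3)*(6 * (2 * M) + 4) * (6 * (2 * M) + 8) * V * U * G * ((4*M+3) * Y / W) := by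
      field_simp; ring
    rw [this, hY]; ring
  exact e _ _ _ _ _ hA h2

section ring
variable {R : Type*} [CommRing R]

lemma rat_to_ring (a b : ℤ) (h : (a:ℚ) = b) : (a : R) = b := by
  have : a = b := by exact_mod_cast h
  rw [this]

lemma cast_FX (n : ℕ) (v : ℤ) : ((FX n v : ℤ) : R) = FX n (v : R) := map_FX (Int.castRingHom R) n v
lemma cast_FB (n : ℕ) (v : ℤ) : ((FB n v : ℤ) : R) = FB n (v : R) := map_FB (Int.castRingHom R) n v
lemma cast_FZ (n : ℕ) (v : ℤ) : ((FZ n v : ℤ) : R) = FZ n (v : R) := map_FZ (Int.castRingHom R) n v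
lemma cast_DD (n : ℕ) (v : ℤ) : ((DD n v : ℤ) : R) = DD n (v : R) := map_DD (Int.castRingHom R) n v

lemma FB_R (n : ℕ) : FB (R := R) n ((2*(n:R)+1)^2) = (-1)^n * (2*n+1) * DD (R := R) n ((2*(n:R)+1)^2) := by
  have h : FB (R := ℚ) n ((2*(n:ℚ)+1)^2) = (-1)^n * (2*n+1) * DD (R := ℚ) n ((2*(n:ℚ)+1)^2) := by
    rw [FB_eq n _ (bb_ne_rat n), ← QB_eq]; unfold QB; ring
  have := rat_to_ring (R := R) (FB (R := ℤ) n ((2*(n:ℤ)+1)^2)) ((-1)^n * (2*n+1) * DD (R := ℤ) n ((2*(n:ℤ)+1)^2)) (by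
    push_cast [cast_FB, cast_DD]; exact h)
  push_cast [cast_FB, cast_DD] at this; exact this

lemma FZ_R (m : ℕ) : FZ (R := R) (2*m) ((4*(m:R)+1)^2) = 0 := by
  have h : FZ (R := ℚ) (2*m) ((4*(m:ℚ)+1)^2) = 0 := by
    have e : (4*(m:ℚ)+1) = 2*(2*m:ℕ)+1 := by push_cast; ring
    have := (QXZ_zero m).1
    rw [e, FZ_eq _ _ (bb_ne_rat _)]; unfold QZ at this; rw [this, mul_zero]
  have := rat_to_ring (R := R) (FZ (R := ℤ) (2*m) ((4*(m:ℤ)+1)^2)) 0 (by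
    push_cast [cast_FZ]; exact h)
  push_cast [cast_FZ] at this; exact this

lemma FX_R_odd (m : ℕ) : FX (R := R) (2*m+1) ((4*(m:R)+3)^2) = 0 := by
  have h : FX (R := ℚ) (2*m+1) ((4*(m:ℚ)+3)^2) = 0 := by
    have e : (4*(m:ℚ)+3) = 2*(2*m+1:ℕ)+1 := by push_cast; ring
    have := (QXZ_zero m).2
    rw [e, FX_eq _ _ (bb_ne_rat _)]; unfold QX at this; rw [this, mul_zero]
  have := rat_to_ring (R := R) (FX (R := ℤ) (2*m+1) ((4*(m:ℤ)+3)^2)) 0 (by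
    push_cast [cast_FX]; exact h)
  push_cast [cast_FX] at this; exact this

lemma FX_R (m : ℕ) : FX (R := R) (2*m) ((4*(m:R)+1)^2) * ((m.factorial:R) * ∏ i ∈ range m, ((4*(m:R)+1)^2 - 4*((i:R)+1)^2))
    = 4^m * (3*m).factorial * DD (R := R) (2*m) ((4*(m:R)+1)^2) := by
  have h : FX (R := ℚ) (2*m) ((4*(m:ℚ)+1)^2) * ((m.factorial:ℚ) * ∏ i ∈ range m, ((4*(m:ℚ)+1)^2 - 4*((i:ℚ)+1)^2))
    = 4^m * (3*m).factorial * DD (R := ℚ) (2*m) ((4*(m:ℚ)+1)^2) := by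
    rw [← QX_closed]
    have e : (4*(m:ℚ)+1) = 2*(2*m:ℕ)+1 := by push_cast; ring
    rw [e, FX_eq _ _ (bb_ne_rat _)]; unfold QX; ring
  have := rat_to_ring (R := R) (FX (R := ℤ) (2*m) ((4*(m:ℤ)+1)^2) * ((m.factorial:ℤ) * ∏ i ∈ range m, ((4*(m:ℤ)+1)^2 - 4*((i:ℤ)+1)^2)))
    (4^m * (3*m).factorial * DD (R := ℤ) (2*m) ((4*(m:ℤ)+1)^2)) (by
    push_cast [cast_FX, cast_DD]; exact h)
  push_cast [cast_FX, cast_DD] at this; exact this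

lemma FZ_R_odd (M : ℕ) : FZ (R := R) (2*M+1) ((4*(M:R)+3)^2) * ((M.factorial:R) * ∏ i ∈ range (M+1), ((4*(M:R)+3)^2 - 4*((i:R)+1)^2))
    = -16*4^M * (3*M+2).factorial * (2*M+1)*(6*M+5) * DD (R := R) (2*M+1) ((4*(M:R)+3)^2) := by
  have h : FZ (R := ℚ) (2*M+1) ((4*(M:ℚ)+3)^2) * ((M.factorial:ℚ) * ∏ i ∈ range (M+1), ((4*(M:ℚ)+3)^2 - 4*((i:ℚ)+1)^2))
    = -16*4^M * (3*M+2).factorial * (2*M+1)*(6*M+5) * DD (R := ℚ) (2*M+1) ((4*(M:ℚ)+3)^2) := by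
    rw [← QZ_closed]
    have e : (4*(M:ℚ)+3) = 2*(2*M+1:ℕ)+1 := by push_cast; ring
    rw [e, FZ_eq _ _ (bb_ne_rat _)]; unfold QZ; ring
  have := rat_to_ring (R := R) (FZ (R := ℤ) (2*M+1) ((4*(M:ℤ)+3)^2) * ((M.factorial:ℤ) * ∏ i ∈ range (M+1), ((4*(M:ℤ)+3)^2 - 4*((i:ℤ)+1)^2)))
    (-16*4^M * (3*M+2).factorial * (2*M+1)*(6*M+5) * DD (R := ℤ) (2*M+1) ((4*(M:ℤ)+3)^2)) (by
    push_cast [cast_FZ, cast_DD]; exact h)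
  push_cast [cast_FZ, cast_DD] at this; exact this
end ring
end part3

section part4
open Finset

lemma DD_shift {R : Type*} [CommRing R] (n : ℕ) (w : R) :
    DD n ((w+2)^2) * (((n:R)-1-w)*((n:R)-w)*(w+2)) = DD n (w^2) * (w*((n:R)+1+w)*((n:R)+2+w)) := by
  induction n with
  | zero => simp [DD]; ring
  | succ n ih =>
    have e1 : DD (n+1) ((w+2)^2) = DD n ((w+2)^2) * bb ((w+2)^2) n := by simp [DD, prod_range_succ]
    have e2 : DD (n+1) (w^2) = DD n (w^2) * bb (w^2) n := by simp [DD, prod_range_succ]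
    rw [e1, e2]
    simp only [bb]
    push_cast
    linear_combination ((n:R)+1)*(n+3+w)*(n+1-w) * ih

lemma shifts {K : Type*} [Field K] (n : ℕ) (w : K) (h : Good n w) (hn : 2*(n:K)+1 = 0)
    (hb : ∀ j < n, bb (w^2) j ≠ 0) (hb' : ∀ j < n, bb ((w+2)^2) j ≠ 0)
    (h5 : 3*w+1 ≠ 0) (h6 : 3*w+5 ≠ 0) (h3 : (3:K) ≠ 0) :
    (3*w+1)*(3*w+5) * FX n ((w+2)^2) = -3 * FZ n (w^2) ∧
    3 * FZ n ((w+2)^2) = -((3*w+1)*(3*w+5)) * FX n (w^2) ∧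
    FB n ((w+2)^2) = - FB n (w^2) := by
  have hw : w ≠ 0 := by simpa using h.h3 0 (by omega)
  have a1 := h.h3 (n+1) (by omega)
  have a2 := h.h3 (n+2) (by omega)
  push_cast at a1 a2
  have hD : DD n ((w+2)^2) * (w+2) = DD n (w^2) * w := by
    have := DD_shift n w
    apply mul_right_cancel₀ (mul_ne_zero a1 a2)
    linear_combination this + DD n ((w+2)^2) * (w+2) * (2*w + 2) * hn
  have hX := telX n w h h5 h6
  have hZ := telZ n w h h3
  have hB := telB n w h
  rw [hn] at hX hZ hB
  simp only [mul_zero, zero_mul, zero_div] at hX hZ hB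
  rw [FX_eq n _ hb, FX_eq n _ hb', FZ_eq n _ hb, FZ_eq n _ hb', FB_eq n _ hb, FB_eq n _ hb']
  rw [sub_eq_zero] at hX hZ hB
  rw [hX, hZ, hB]
  have hD' : DD n ((w+2)^2) * (w+2) / w = DD n (w^2) := by
    rw [hD]; field_simp
  rw [← hD']
  refine ⟨?_, ?_, ?_⟩
  · have hq : (w*(3*w+1)*(3*w+5))⁻¹ * (w*(3*w+1)*(3*w+5)) = 1 :=
      inv_mul_cancel₀ (mul_ne_zero (mul_ne_zero hw h5) h6)
    have hq2 : w⁻¹ * w = 1 := inv_mul_cancel₀ hw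
    have : w⁻¹ = (w*(3*w+1)*(3*w+5))⁻¹ * ((3*w+1)*(3*w+5)) := by
      apply mul_right_cancel₀ hw; rw [hq2]; linear_combination -hq
    simp only [div_eq_mul_inv]
    rw [this]
    ring
  · field_simp
  · field_simp
end part4

section part5
open Finset

section polyp
open Polynomial
variable {p : ℕ} [Fact p.Prime]

lemma two_ne (hp2 : p ≠ 2) : (2 : ZMod p) ≠ 0 := by
  intro h
  have : ((2:ℕ) : ZMod p) = 0 := by exact_mod_cast h
  rw [ZMod.natCast_eq_zero_iff] at this
  exact hp2 ((Nat.prime_dvd_prime_iff_eq Fact.out Nat.prime_two).mp this)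

lemma three_ne (hp3 : p ≠ 3) : (3 : ZMod p) ≠ 0 := by
  intro h
  have : ((3:ℕ) : ZMod p) = 0 := by exact_mod_cast h
  rw [ZMod.natCast_eq_zero_iff] at this
  exact hp3 ((Nat.prime_dvd_prime_iff_eq Fact.out Nat.prime_three).mp this)

lemma n_rel (n : ℕ) (hn : p = 2*n+1) : 2*(n:ZMod p)+1 = 0 := by
  have : ((2*n+1 : ℕ) : ZMod p) = 0 := by rw [ZMod.natCast_eq_zero_iff, ← hn]
  push_cast at this; exact this

lemma lin_ne (c : ZMod p) : (X + C c : (ZMod p)[X]) ≠ 0 := X_add_C_ne_zero c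

lemma poly_shifts (n : ℕ) (hn : p = 2*n+1) (hp3 : p ≠ 3) :
    (3*X+1)*(3*X+5) * FX n ((X+2)^2 : (ZMod p)[X]) = -3 * FZ n (X^2 : (ZMod p)[X]) ∧
    3 * FZ n ((X+2)^2 : (ZMod p)[X]) = -((3*X+1)*(3*X+5)) * FX n (X^2 : (ZMod p)[X]) ∧
    FB n ((X+2)^2 : (ZMod p)[X]) = - FB n (X^2 : (ZMod p)[X]) := by
  let K := FractionRing (ZMod p)[X]
  let f : (ZMod p)[X] →+* K := algebraMap _ K
  have hf : Function.Injective f := IsFractionRing.injective (ZMod p)[X] K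
  have hf0 : ∀ q : (ZMod p)[X], q ≠ 0 → f q ≠ 0 := fun q hq h => hq (hf (by rw [h, map_zero]))
  have hlin : ∀ (a c : ZMod p), a ≠ 0 → f (C a * X + C c) ≠ 0 := by
    intro a c ha
    apply hf0
    intro h
    have := congrArg (fun q => coeff q 1) h
    simp [coeff_C] at this
    exact ha this
  have h2 : (2 : ZMod p) ≠ 0 := two_ne (by omega)
  have h3 := three_ne hp3
  have hnat : ∀ j : ℕ, 0 < j → j < p → (j : K) ≠ 0 := by
    intro j hj hjp h
    have h1 : f (C (j : ZMod p)) ≠ 0 := by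
      apply hf0
      rw [Ne, C_eq_zero, ZMod.natCast_eq_zero_iff]
      exact fun h => absurd (Nat.le_of_dvd hj h) (by omega)
    apply h1
    rw [map_natCast, map_natCast, h]
  have hfX : ∀ a c : ℤ, f (C (a:ZMod p) * X + C (c:ZMod p)) = a * f X + c := by
    intro a c; simp
  have hg : Good n (f X) := by
    refine ⟨?_, ?_, ?_, ?_, ?_⟩
    · intro j hj
      have := hnat (j+1) (by omega) (by omega)
      push_cast at this; exact this
    · intro j hj
      have := hlin ((-1:ℤ)) (j:ℤ) (by simp)
      rw [hfX] at this; push_cast at this; convert this using 1; ring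
    · intro j hj
      have := hlin ((-1:ℤ)) ((j-1:ℤ):ℤ) (by simp)
      rw [hfX] at this; push_cast at this; convert this using 1; ring
    · intro j hj
      have := hlin ((1:ℤ)) (j:ℤ) (by simp)
      rw [hfX] at this; push_cast at this; convert this using 1; ring
    · intro j hj
      have := hlin ((-1:ℤ)) ((2*j-1:ℤ):ℤ) (by simp)
      rw [hfX] at this; push_cast at this; convert this using 1; ring
  have hb : ∀ j < n, bb ((f X)^2) j ≠ 0 := by
    intro j hj
    have e : bb ((f X)^2) j = ((j:K)+1)*(((j+1:ℕ):K) - f X)*(((j+1:ℕ):K) + f X) := by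
      simp only [bb]; push_cast; ring
    rw [e]
    exact mul_ne_zero (mul_ne_zero (hg.h0 j hj) (hg.h1 _ (by omega))) (hg.h3 _ (by omega))
  have hb' : ∀ j < n, bb ((f X+2)^2) j ≠ 0 := by
    intro j hj
    have e : bb ((f X+2)^2) j = ((j:K)+1)*((j:K) - 1- f X)*(((j+3:ℕ):K) + f X) := by
      simp only [bb]; push_cast; ring
    rw [e]
    exact mul_ne_zero (mul_ne_zero (hg.h0 j hj) (hg.h2 _ (by omega))) (hg.h3 _ (by omega))
  have hnK : 2*(n:K)+1 = 0 := by
    have := congrArg (fun q => f (C q)) (n_rel n hn)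
    simpa [map_ofNat C, map_ofNat f] using this
  have h5 : 3 * f X + 1 ≠ 0 := by
    have := hlin ((3:ℤ)) (1:ℤ) (by exact_mod_cast h3)
    rw [hfX] at this; push_cast at this; exact this
  have h6 : 3 * f X + 5 ≠ 0 := by
    have := hlin ((3:ℤ)) (5:ℤ) (by exact_mod_cast h3)
    rw [hfX] at this; push_cast at this; exact this
  have h3K : (3:K) ≠ 0 := by
    have := hf0 (C (3 : ZMod p)) (by rw [Ne, C_eq_zero]; exact h3)
    simpa [map_ofNat C, map_ofNat f] using this
  obtain ⟨A, B, C'⟩ := shifts n (f X) hg hnK hb hb' h5 h6 h3K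
  refine ⟨?_, ?_, ?_⟩
  · apply hf
    simp [map_FX, map_FZ, map_ofNat f]; linear_combination A
  · apply hf
    simp [map_FX, map_FZ, map_ofNat f]; linear_combination B
  · apply hf
    simpa [map_FB, map_ofNat f] using C'

lemma poly_zero_of_eval (f : (ZMod p)[X]) (hd : f.natDegree < p) (h : ∀ a, f.eval a = 0) : f = 0 := by
  by_contra hf
  have h1 := card_roots' f
  have : (univ : Finset (ZMod p)).val ≤ f.roots := by
    rw [Multiset.le_iff_subset (Finset.univ).nodup]
    intro a _
    rw [mem_roots hf]; exact h a
  have := Multiset.card_le_card this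
  simp [ZMod.card] at this
  omega

lemma periodic_all (f g : (ZMod p)[X]) (c : ZMod p) (hc : c ≠ 0) (hg : g ≠ 0)
    (h : f.comp (X + C c) * g = f * g.comp (X + C c)) (a : ZMod p) :
    f.comp (X + C a) * g = f * g.comp (X + C a) := by
  have key : ∀ k : ℕ, f.comp (X + C (k*c)) * g = f * g.comp (X + C (k*c)) := by
    intro k
    induction k with
    | zero => simp
    | succ k ih =>
      have h' := congrArg (fun q => q.comp (X + C (k*c))) h
      simp only [mul_comp, comp_assoc, add_comp, X_comp, C_comp] at h'
      have e : (X + C ((k:ZMod p)*c) + C c) = (X + C (((k+1:ℕ):ZMod p)*c)) := by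
        push_cast; rw [add_mul, one_mul, C_add, add_assoc]
      rw [e] at h'
      have hne : g.comp (X + C ((k:ZMod p)*c)) ≠ 0 := by
        intro hz
        rw [comp_eq_zero_iff] at hz
        rcases hz with hz | ⟨_, hz⟩
        · exact hg hz
        · have := congrArg (fun q => coeff q 1) hz
          simp [coeff_C] at this
      apply mul_right_cancel₀ hne
      linear_combination g * h' + g.comp (X + C (((k+1:ℕ):ZMod p)*c)) * ih
  have := key (a / c).val
  rwa [ZMod.natCast_zmod_val, div_mul_cancel₀ _ hc] at this

lemma periodic_ratio (f g : (ZMod p)[X]) (c : ZMod p) (hc : c ≠ 0) (hg : g ≠ 0)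
    (h : f.comp (X + C c) * g = f * g.comp (X + C c)) (hf' : f.natDegree < p) (hg' : g.natDegree < p) :
    C (g.eval 0) * f = C (f.eval 0) * g := by
  rw [← sub_eq_zero]
  apply poly_zero_of_eval
  · refine lt_of_le_of_lt (natDegree_sub_le _ _) (max_lt ?_ ?_)
    · exact lt_of_le_of_lt (natDegree_C_mul_le _ _) hf'
    · exact lt_of_le_of_lt (natDegree_C_mul_le _ _) hg'
  · intro a
    have := congrArg (fun q => eval 0 q) (periodic_all f g c hc hg h a)
    simp only [eval_mul, eval_comp, eval_add, eval_X, eval_C, zero_add] at this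
    simp only [eval_sub, eval_mul, eval_C]
    linear_combination this

lemma periodic_const (f : (ZMod p)[X]) (c : ZMod p) (hc : c ≠ 0)
    (h : f.comp (X + C c) = f) (hf' : f.natDegree < p) : f = C (f.eval 0) := by
  have := periodic_ratio f 1 c hc one_ne_zero (by simpa using h) hf' (by
    simp; exact (Fact.out : p.Prime).pos)
  simpa using this

lemma periodic_eval (f : (ZMod p)[X]) (c : ZMod p) (hc : c ≠ 0)
    (h : f.comp (X + C c) = f) (a : ZMod p) : f.eval a = f.eval 0 := by
  have := periodic_all f 1 c hc one_ne_zero (by simpa using h) a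
  have := congrArg (fun q => eval 0 q) this
  simpa [eval_comp] using this

lemma vanish_factor (f : (ZMod p)[X]) (h : ∀ a, f.eval a = 0) : ∃ g, f = (X^p - X) * g ∧
    (f ≠ 0 → f.natDegree = p + g.natDegree) := by
  have hp1 : 1 < p := (Fact.out : p.Prime).one_lt
  have hd : (X^p - X : (ZMod p)[X]).natDegree = p := FiniteField.X_pow_card_sub_X_natDegree_eq _ hp1
  have hm : (X^p - X : (ZMod p)[X]).Monic := by
    apply monic_X_pow_sub
    rw [degree_X]; exact_mod_cast hp1
  have hmod : f %ₘ (X^p - X) = 0 := by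
    apply poly_zero_of_eval
    · have := natDegree_modByMonic_lt f hm (by intro h; rw [h] at hd; simp at hd; omega)
      rwa [hd] at this
    · intro a
      have e := congrArg (eval a) (modByMonic_add_div f (X^p - X : (ZMod p)[X]))
      simp only [eval_add, eval_mul, eval_sub, eval_pow, eval_X, ZMod.pow_card, sub_self, zero_mul, add_zero] at e
      rw [e, h]
  refine ⟨f /ₘ (X^p - X), ?_, ?_⟩
  · have e := modByMonic_add_div f (X^p - X : (ZMod p)[X])
    rw [hmod, zero_add] at e; exact e.symm
  · intro hf
    have e := modByMonic_add_div f (X^p - X : (ZMod p)[X])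
    rw [hmod, zero_add] at e
    have hg : f /ₘ (X^p - X) ≠ 0 := by intro hz; rw [hz, mul_zero] at e; exact hf e.symm
    conv_lhs => rw [← e]
    rw [natDegree_mul hm.ne_zero hg, hd]

end polyp
end part5

section part6
open Finset

section polyq
open Polynomial

lemma aa_deg {R : Type*} [CommRing R] (j : ℕ) : (aa (X : R[X]) j).natDegree ≤ 1 := by
  have : aa (X : R[X]) j = C (2*(j:R)+1) * X + C (-(2*(j:R)+1)^3) := by
    simp [aa, map_ofNat C]; ring
  rw [this]; exact natDegree_linear_le
lemma bb_deg {R : Type*} [CommRing R] (j : ℕ) : (bb (X : R[X]) j).natDegree ≤ 1 := by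
  have : bb (X : R[X]) j = C (-((j:R)+1)) * X + C (((j:R)+1)^3) := by
    simp [bb]; ring
  rw [this]; exact natDegree_linear_le
lemma aa_coeff {R : Type*} [CommRing R] (j : ℕ) : (aa (X : R[X]) j).coeff 1 = 2*(j:R)+1 := by
  have : aa (X : R[X]) j = C (2*(j:R)+1) * X + C (-(2*(j:R)+1)^3) := by
    simp [aa, map_ofNat C]; ring
  rw [this, coeff_add, coeff_C_mul, coeff_X_one, mul_one, coeff_C_succ, add_zero]
lemma bb_coeff {R : Type*} [CommRing R] (j : ℕ) : (bb (X : R[X]) j).coeff 1 = -((j:R)+1) := by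
  have : bb (X : R[X]) j = C (-((j:R)+1)) * X + C (((j:R)+1)^3) := by
    simp [bb]; ring
  rw [this, coeff_add, coeff_C_mul, coeff_X_one, mul_one, coeff_C_succ, add_zero]

lemma prod_deg {R ι : Type*} [CommRing R] (s : Finset ι) (f : ι → R[X]) (h : ∀ i ∈ s, (f i).natDegree ≤ 1) :
    (∏ i ∈ s, f i).natDegree ≤ s.card := by
  refine (natDegree_prod_le s f).trans ?_
  refine (Finset.sum_le_card_nsmul s _ 1 h).trans ?_
  simp

lemma prod_coeff {R ι : Type*} [CommRing R] (s : Finset ι) (f : ι → R[X]) (h : ∀ i ∈ s, (f i).natDegree ≤ 1) :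
    (∏ i ∈ s, f i).coeff s.card = ∏ i ∈ s, (f i).coeff 1 := by
  have := coeff_prod_of_natDegree_le f 1 h (s := s)
  simpa using this

lemma PP_deg {R : Type*} [CommRing R] (n k : ℕ) (hk : k ≤ n) : (PP n (X : R[X]) k).natDegree ≤ n := by
  unfold PP
  refine natDegree_mul_le.trans ?_
  have h1 := prod_deg (range k) (aa (X : R[X])) (fun j _ => aa_deg j)
  have h2 := prod_deg (Ico k n) (bb (X : R[X])) (fun j _ => bb_deg j)
  simp at h1 h2
  omega

lemma PP_coeff {R : Type*} [CommRing R] (n k : ℕ) (hk : k ≤ n) : (PP n (X : R[X]) k).coeff n =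
    (∏ j ∈ range k, (2*(j:R)+1)) * ∏ j ∈ Ico k n, (-((j:R)+1)) := by
  unfold PP
  have h1 := prod_deg (range k) (aa (X : R[X])) (fun j _ => aa_deg j)
  have h2 := prod_deg (Ico k n) (bb (X : R[X])) (fun j _ => bb_deg j)
  have h3 := prod_coeff (range k) (aa (X : R[X])) (fun j _ => aa_deg j)
  have h4 := prod_coeff (Ico k n) (bb (X : R[X])) (fun j _ => bb_deg j)
  simp only [card_range, Nat.card_Ico, aa_coeff, bb_coeff] at h1 h2 h3 h4
  have := coeff_mul_add_eq_of_natDegree_le h1 h2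
  rw [h3, h4, show k + (n-k) = n by omega] at this
  exact this

lemma FX_deg {R : Type*} [CommRing R] (n : ℕ) : (FX n (X : R[X])).natDegree ≤ n := by
  unfold FX
  apply natDegree_sum_le_of_forall_le
  intro k hk; simp at hk
  exact PP_deg n k (by omega)
lemma FB_deg {R : Type*} [CommRing R] (n : ℕ) : (FB n (X : R[X])).natDegree ≤ n := by
  unfold FB
  apply natDegree_sum_le_of_forall_le
  intro k hk; simp at hk
  have : (3*(k:R[X])+1) = C (3*(k:R)+1) := by simp [map_ofNat C]
  rw [this]
  exact (natDegree_C_mul_le _ _).trans (PP_deg n k (by omega))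
lemma FZ_split {R : Type*} [CommRing R] (n : ℕ) : FZ n (X : R[X]) =
    (∑ k ∈ range (n+1), C (18*(k:R)^2+14*(k:R)+3) * PP n X k) + X * (C (-3) * FX n X) := by
  unfold FZ FX
  rw [mul_sum, mul_sum, ← sum_add_distrib]
  apply sum_congr rfl; intro k _
  simp [map_ofNat C]; ring
lemma FZ_deg_aux {R : Type*} [CommRing R] (n : ℕ) :
    (∑ k ∈ range (n+1), C (18*(k:R)^2+14*(k:R)+3) * PP n (X : R[X]) k).natDegree ≤ n := by
  apply natDegree_sum_le_of_forall_le
  intro k hk; simp at hk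
  exact (natDegree_C_mul_le _ _).trans (PP_deg n k (by omega))
lemma FZ_deg {R : Type*} [CommRing R] (n : ℕ) : (FZ n (X : R[X])).natDegree ≤ n+1 := by
  rw [FZ_split]
  refine (natDegree_add_le _ _).trans (max_le ((FZ_deg_aux n).trans (by omega)) ?_)
  refine natDegree_mul_le.trans ?_
  have := (natDegree_C_mul_le (-3:R) (FX n X)).trans (FX_deg n)
  have := natDegree_X_le (R := R)
  omega
lemma FZ_coeff {R : Type*} [CommRing R] (n : ℕ) : (FZ n (X : R[X])).coeff (n+1) = -3 * (FX n (X : R[X])).coeff n := by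
  rw [FZ_split, coeff_add, coeff_X_mul, coeff_C_mul, coeff_eq_zero_of_natDegree_lt, zero_add]
  have := FZ_deg_aux (R := R) n
  omega

variable {p : ℕ} [Fact p.Prime]

lemma FX_lead (n : ℕ) (hn : p = 2*n+1) : (FX n (X : (ZMod p)[X])).coeff n = (-1)^n * n.factorial * 3^n := by
  unfold FX
  rw [finset_sum_coeff]
  have : ∀ k ∈ range (n+1), (PP n (X : (ZMod p)[X]) k).coeff n = (-1)^n * n.factorial * (2^k * 1^(n-k) * (n.choose k)) := by
    intro k hk
    have hk : k ≤ n := by simp at hk; omega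
    rw [PP_coeff n k hk]
    have h1 : ∏ j ∈ range k, (2*(j:ZMod p)+1) = (-2)^k * (n.descFactorial k) := by
      rw [Nat.descFactorial_eq_prod_range]
      push_cast
      rw [show (-2 : ZMod p)^k = ∏ j ∈ range k, (-2) by simp, ← prod_mul_distrib]
      apply prod_congr rfl
      intro j hj; simp at hj
      rw [Nat.cast_sub (by omega)]
      linear_combination n_rel n hn
    have h2 : (k.factorial : ZMod p) * ∏ j ∈ Ico k n, (-((j:ZMod p)+1)) = (-1)^(n-k) * n.factorial := by
      rw [← prod_range_add_one_eq_factorial, ← prod_range_add_one_eq_factorial, prod_neg]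
      push_cast
      rw [← prod_range_mul_prod_Ico _ hk]
      simp only [Nat.card_Ico]; ring
    rw [h1, Nat.descFactorial_eq_factorial_mul_choose]
    have h3 : ((-1:ZMod p))^n = (-1)^k * (-1)^(n-k) := by rw [← pow_add]; congr 1; omega
    rw [h3, show (-2:ZMod p)^k = (-1)^k * 2^k by rw [← mul_pow]; norm_num]
    push_cast
    linear_combination (-1)^k * 2^k * (n.choose k : ZMod p) * h2
  rw [sum_congr rfl this, ← mul_sum, ← add_pow]
  norm_num

lemma expand_FX (n : ℕ) : expand (ZMod p) 2 (FX n X) = FX n (X^2) := by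
  have := map_FX (expand (ZMod p) 2 : (ZMod p)[X] →+* (ZMod p)[X]) n X
  simpa using this
lemma expand_FB (n : ℕ) : expand (ZMod p) 2 (FB n X) = FB n (X^2) := by
  have := map_FB (expand (ZMod p) 2 : (ZMod p)[X] →+* (ZMod p)[X]) n X
  simpa using this
lemma expand_FZ (n : ℕ) : expand (ZMod p) 2 (FZ n X) = FZ n (X^2) := by
  have := map_FZ (expand (ZMod p) 2 : (ZMod p)[X] →+* (ZMod p)[X]) n X
  simpa using this
lemma comp_FX (n : ℕ) (q r : (ZMod p)[X]) : (FX n q).comp r = FX n (q.comp r) := map_FX (compRingHom r) n q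
lemma comp_FB (n : ℕ) (q r : (ZMod p)[X]) : (FB n q).comp r = FB n (q.comp r) := map_FB (compRingHom r) n q
lemma comp_FZ (n : ℕ) (q r : (ZMod p)[X]) : (FZ n q).comp r = FZ n (q.comp r) := map_FZ (compRingHom r) n q

lemma sq_comp2 : (X^2 : (ZMod p)[X]).comp (X + C 2) = (X+2)^2 := by simp [map_ofNat C]

lemma FB_poly_zero (n : ℕ) (hn : p = 2*n+1) (hp3 : p ≠ 3) : FB n (X : (ZMod p)[X]) = 0 := by
  have h := (poly_shifts n hn hp3).2.2
  have h2 : (2 : ZMod p) ≠ 0 := two_ne (by omega)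
  have h4 : (2+2 : ZMod p) ≠ 0 := by
    have : (2+2 : ZMod p) = 2 * 2 := by norm_num
    rw [this]; exact mul_ne_zero h2 h2
  rw [← sq_comp2, ← comp_FB] at h
  have hh : (FB n (X^2 : (ZMod p)[X])).comp (X + C (2+2)) = FB n (X^2 : (ZMod p)[X]) := by
    have h' := congrArg (fun q => q.comp (X + C 2)) h
    simp only [neg_comp, comp_assoc, add_comp, X_comp, C_comp] at h'
    rw [h, add_assoc, ← C_add] at h'
    rw [h', neg_neg]
  have hd : (FB n (X^2 : (ZMod p)[X])).natDegree < p := by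
    rw [← expand_FB, natDegree_expand]
    have := FB_deg (R := ZMod p) n
    omega
  have hc := periodic_const _ _ h4 hh hd
  rw [hc] at h
  have h0 : (FB n (X^2 : (ZMod p)[X])).eval 0 = 0 := by
    rw [C_comp] at h
    have h5 : C (2 * eval 0 (FB n (X^2 : (ZMod p)[X]))) = 0 := by
      rw [C_mul, map_ofNat C]; linear_combination h
    rw [C_eq_zero] at h5
    exact (mul_eq_zero.mp h5).resolve_left h2
  rw [h0, C_0, ← expand_FB] at hc
  exact (expand_eq_zero (by norm_num)).mp hc

lemma XZ_coeff (n : ℕ) (hn : p = 2*n+1) (hp3 : p ≠ 3) (hZ0 : FZ n (0 : ZMod p) = 0) :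
    FX n (0 : ZMod p) * (FZ n (X : (ZMod p)[X])).coeff 1 = -3 * (n.factorial)^2 := by
  obtain ⟨hA, hB, -⟩ := poly_shifts n hn hp3
  have h2 : (2 : ZMod p) ≠ 0 := two_ne (by omega)
  have h3 := three_ne hp3
  have hp1 : 1 < p := (Fact.out : p.Prime).one_lt
  set QV := FX n (X : (ZMod p)[X]) * FZ n (X : (ZMod p)[X]) with hQV
  set Q := expand (ZMod p) 2 QV with hQ
  have hQ' : Q = FX n (X^2 : (ZMod p)[X]) * FZ n (X^2) := by
    rw [hQ, hQV, map_mul, expand_FX, expand_FZ]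
  have hper : Q.comp (X + C 2) = Q := by
    rw [hQ', mul_comp, comp_FX, comp_FZ, sq_comp2]
    have h3' : (3 : (ZMod p)[X]) ≠ 0 := by
      rw [← map_ofNat C]; rw [Ne, C_eq_zero]; exact h3
    have hne : ∀ c : ZMod p, (3*X + C c : (ZMod p)[X]) ≠ 0 := by
      intro c h
      have := congrArg (fun q => coeff q 1) h
      rw [← map_ofNat C] at this
      simp [coeff_C] at this
      exact h3 this
    have n1 := hne 1
    have n5 := hne 5
    rw [map_one] at n1; rw [map_ofNat C] at n5
    apply mul_left_cancel₀ (mul_ne_zero (mul_ne_zero h3' n1) n5)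
    linear_combination 3 * FZ n ((X+2)^2 : (ZMod p)[X]) * hA - 3 * FZ n (X^2 : (ZMod p)[X]) * hB
  have ev0 : ∀ q : (ZMod p)[X], q.eval 0 = q.coeff 0 := fun q => (coeff_zero_eq_eval_zero q).symm
  have hZc : (FZ n (X : (ZMod p)[X])).coeff 0 = 0 := by
    rw [coeff_zero_eq_eval_zero]
    have := map_FZ (evalRingHom (0:ZMod p)) n X
    simp at this; rw [this, hZ0]
  have hXc : (FX n (X : (ZMod p)[X])).coeff 0 = FX n 0 := by
    rw [coeff_zero_eq_eval_zero]
    have := map_FX (evalRingHom (0:ZMod p)) n X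
    simpa using this
  have hQ0 : Q.eval 0 = 0 := by
    rw [ev0, hQ]
    have := coeff_expand_mul (R := ZMod p) (p := 2) (by norm_num) QV 0
    rw [zero_mul] at this
    rw [this, hQV, mul_coeff_zero, hZc, mul_zero]
  obtain ⟨T, hT, hTd⟩ := vanish_factor Q (fun a => by rw [periodic_eval Q 2 h2 hper, hQ0])
  have hWne : (X^p - X : (ZMod p)[X]) ≠ 0 := FiniteField.X_pow_card_sub_X_ne_zero _ hp1
  have hW : (X^p - X : (ZMod p)[X]).comp (X + C 2) = X^p - X := by
    simp only [sub_comp, pow_comp, X_comp]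
    rw [add_pow_char (R := (ZMod p)[X]) (p := p), ← C_pow, ZMod.pow_card]; ring
  have hTper : T.comp (X + C 2) = T := by
    rw [hT, mul_comp, hW] at hper
    exact mul_left_cancel₀ hWne hper
  obtain ⟨U, hU, hUd⟩ := vanish_factor (T - C (T.eval 0)) (fun a => by
    rw [eval_sub, eval_C, periodic_eval T 2 h2 hTper, sub_self])
  have hQd : Q.natDegree ≤ 2 * p := by
    rw [hQ, natDegree_expand]
    have : QV.natDegree ≤ n + (n+1) := natDegree_mul_le.trans (add_le_add (FX_deg n) (FZ_deg n))
    omega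
  have hU0 : U = C (U.coeff 0) := by
    by_cases hTz : T - C (T.eval 0) = 0
    · rw [hTz] at hU
      have : U = 0 := by
        rcases mul_eq_zero.mp hU.symm with h | h
        · exact absurd h hWne
        · exact h
      rw [this]; simp
    · have hTne : T ≠ 0 := by
        intro h; apply hTz; rw [h]; simp
      have hQne : Q ≠ 0 := by rw [hT]; exact mul_ne_zero hWne hTne
      have h1 := hTd hQne
      have h2 := hUd hTz
      rw [natDegree_sub_C] at h2
      apply eq_C_of_natDegree_eq_zero
      omega
  set u := U.coeff 0
  set t := T.eval 0
  have hQe : Q = C t * (X^p - X) + C u * (X^(2*p) - 2 * X^(p+1) + X^2) := by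
    have : T = C t + (X^p - X) * C u := by rw [← hU0, ← hU]; ring
    rw [hT, this]; ring
  have c1 : Q.coeff 1 = 0 := by
    rw [hQ, coeff_expand (by norm_num)]; norm_num
  have hpodd : 3 ≤ p := by omega
  have e2 : (2 : (ZMod p)[X]) = C 2 := by rw [map_ofNat C]
  have ht : t = 0 := by
    rw [hQe, e2] at c1
    simp only [coeff_add, coeff_C_mul, coeff_sub, coeff_X_pow, coeff_X_one] at c1
    rw [if_neg (by omega), if_neg (by omega), if_neg (by omega), if_neg (by omega)] at c1
    simpa using c1
  have c2 : Q.coeff 2 = u := by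
    rw [hQe, ht, e2]
    simp only [coeff_add, coeff_C_mul, coeff_sub, coeff_X_pow]
    rw [if_neg (by omega : ¬ 2 = 2*p), if_neg (by omega : ¬ 2 = p+1)]
    simp
  have c3 : Q.coeff (2*p) = u := by
    rw [hQe, ht, e2]
    simp only [coeff_add, coeff_C_mul, coeff_sub, coeff_X_pow]
    rw [if_neg (by omega : ¬ 2*p = p+1), if_neg (by omega : ¬ 2*p = 2)]
    simp
  have d2 : Q.coeff 2 = FX n (0 : ZMod p) * (FZ n (X : (ZMod p)[X])).coeff 1 := by
    have := coeff_expand_mul' (R := ZMod p) (p := 2) (by norm_num) QV 1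
    rw [mul_one] at this
    rw [hQ, this, hQV, mul_coeff_one, hZc, hXc]; ring
  have d3 : Q.coeff (2*p) = (FX n (X : (ZMod p)[X])).coeff n * (-3 * (FX n (X : (ZMod p)[X])).coeff n) := by
    rw [hQ, coeff_expand_mul' (by norm_num), hQV]
    have := coeff_mul_add_eq_of_natDegree_le (FX_deg (R := ZMod p) n) (FZ_deg (R := ZMod p) n)
    rw [FZ_coeff] at this
    rw [← this]; congr 1; omega
  rw [← d2, c2, ← c3, d3, FX_lead n hn]
  have h9 : ((3:ZMod p)^n)^2 = 1 := by
    rw [← pow_mul, show n*2 = p-1 by omega]; exact ZMod.pow_card_sub_one_eq_one h3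
  have h1 : (((-1:ZMod p))^n)^2 = 1 := by rw [← pow_mul, mul_comm, pow_mul]; norm_num
  linear_combination -3*(n.factorial:ZMod p)^2 * (((-1:ZMod p))^n)^2 * h9 -3*(n.factorial:ZMod p)^2 * h1

end polyq
end part6

section part7
open Finset

section polyg
open Polynomial
variable {p : ℕ} [Fact p.Prime]

lemma prod_coeff_one {F : Type*} [Field F] (n : ℕ) (c d : ℕ → F) (hc : ∀ i < n, c i ≠ 0) :
    (∏ i ∈ range n, (C (c i) - C (d i) * X)).coeff 1 = -(∏ i ∈ range n, c i) * ∑ i ∈ range n, d i / c i := by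
  have h0 : ∀ n, (∏ i ∈ range n, (C (c i) - C (d i) * X)).coeff 0 = ∏ i ∈ range n, c i := by
    intro n
    rw [coeff_zero_eq_eval_zero, eval_prod]
    simp
  induction n with
  | zero => simp [coeff_one]
  | succ n ih =>
    rw [prod_range_succ, mul_coeff_one, ih (fun i hi => hc i (by omega)), h0, prod_range_succ, sum_range_succ]
    have := hc n (by omega)
    simp [coeff_C]
    field_simp
    ring

lemma ne_of_val (c : ℕ) (k : ℕ) (h : ¬ p ∣ c) (h2 : (c : ZMod p) = k) : (k : ZMod p) ≠ 0 := by
  rw [← h2, Ne, ZMod.natCast_eq_zero_iff]; exact h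

lemma seven_ne (n : ℕ) (hn : p = 2*n+1) (h4 : p % 4 = 1) (i : ℕ) (hi : i < n) : (12*(i:ZMod p)+7) ≠ 0 := by
  intro h
  have h' : ((12*i+7 : ℕ) : ZMod p) = 0 := by push_cast; exact h
  rw [ZMod.natCast_eq_zero_iff] at h'
  obtain ⟨k, hk⟩ := h'
  have hk6 : k < 6 := by
    by_contra hc
    have : p * 6 ≤ p * k := Nat.mul_le_mul_left _ (by omega)
    omega
  have hp3 : p % 3 ≠ 0 := by
    intro h3
    have := (Nat.prime_dvd_prime_iff_eq Nat.prime_three (Fact.out : p.Prime)).mp (Nat.dvd_of_mod_eq_zero h3)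
    omega
  interval_cases k <;> omega

lemma g_shift {R : Type*} [CommRing R] (n : ℕ) (w : R) :
    (∏ i ∈ range n, ((12*(i:R)+7)^2 - 9*(w+4)^2)) * ((12*n-5-3*w)*(7+3*w))
     = (∏ i ∈ range n, ((12*(i:R)+7)^2 - 9*w^2)) * ((-5-3*w)*(12*n+7+3*w)) := by
  induction n with
  | zero => simp
  | succ n ih =>
    rw [prod_range_succ, prod_range_succ]
    push_cast
    linear_combination (12*n+19+3*w)*(12*n+7-3*w) * ih

lemma FX_coeff1 (n : ℕ) (hn : p = 2*n+1) (h4 : p % 4 = 1) :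
    (FX n (X : (ZMod p)[X])).coeff 1 = - FX n (0 : ZMod p) * ∑ i ∈ range n, 9 / (12*(i:ZMod p)+7)^2 := by
  have hp3 : p ≠ 3 := by rintro rfl; omega
  obtain ⟨hA, hB, -⟩ := poly_shifts n hn hp3
  have h2 : (2 : ZMod p) ≠ 0 := two_ne (by omega)
  have h3 := three_ne hp3
  have h4' : (4 : ZMod p) ≠ 0 := by
    have : (4 : ZMod p) = 2 * 2 := by norm_num
    rw [this]; exact mul_ne_zero h2 h2
  set G : (ZMod p)[X] := ∏ i ∈ range n, (C ((12*(i:ZMod p)+7)^2) - C 9 * X) with hG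
  set g := expand (ZMod p) 2 G with hg
  set f := expand (ZMod p) 2 (FX n (X : (ZMod p)[X])) with hf
  have hf' : f = FX n (X^2) := by rw [hf, expand_FX]
  have hg' : g = ∏ i ∈ range n, ((12*(i:(ZMod p)[X])+7)^2 - 9*X^2) := by
    rw [hg, hG, map_prod]
    apply prod_congr rfl; intro i _
    rw [map_sub, map_mul, expand_C, expand_C, expand_X]
    simp [map_ofNat C]
  have hgc : g.comp (X + C 4) = ∏ i ∈ range n, ((12*(i:(ZMod p)[X])+7)^2 - 9*(X+4)^2) := by
    rw [hg', Polynomial.prod_comp]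
    apply prod_congr rfl; intro i _
    simp [map_ofNat C]
  have hfc : (3*X+7)*(3*X+11)* f.comp (X + C 4) = (3*X+1)*(3*X+5) * f := by
    have e1 := congrArg (fun q => q.comp (X + C 2)) hA
    simp only [mul_comp, comp_FX, comp_FZ, neg_comp, sq_comp2, pow_comp, add_comp, X_comp, ofNat_comp, one_comp, Nat.cast_ofNat] at e1
    rw [hf', comp_FX, pow_comp, X_comp]
    have e2 : ((X + C 2 + 2 : (ZMod p)[X])) = X + C 4 := by
      rw [add_assoc, show (2 : (ZMod p)[X]) = C 2 by rw [map_ofNat C], ← C_add]; norm_num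
    rw [e2, map_ofNat C 2] at e1
    linear_combination e1 - hB
  have hnX : 2*(n:(ZMod p)[X])+1 = 0 := by
    have := congrArg (C : ZMod p →+* (ZMod p)[X]) (n_rel n hn)
    simpa [map_ofNat C] using this
  have hgs := g_shift n (X : (ZMod p)[X])
  rw [← hgc, ← hg'] at hgs
  have hge0 : g.eval 0 = ∏ i ∈ range n, (12*(i:ZMod p)+7)^2 := by
    rw [hg', eval_prod]; apply prod_congr rfl; intro i _; simp
  have hge : g.eval 0 ≠ 0 := by
    rw [hge0, prod_ne_zero_iff]; intro i hi
    exact pow_ne_zero _ (seven_ne n hn h4 i (by simpa using hi))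
  have hgne : g ≠ 0 := by intro h; rw [h] at hge; simp at hge
  have hne : ∀ c : ZMod p, (3*X + C c : (ZMod p)[X]) ≠ 0 := by
      intro c h
      have := congrArg (fun q => coeff q 1) h
      rw [← map_ofNat C] at this
      simp [coeff_C] at this
      exact h3 this
  have n7 := hne 7
  have n11 := hne 11
  rw [map_ofNat C] at n7 n11
  have hrel : f.comp (X + C 4) * g = f * g.comp (X + C 4) := by
    apply mul_left_cancel₀ (mul_ne_zero n7 n11)
    linear_combination g * hfc + f * hgs - 6 * f * (g.comp (X + C 4) * (7+3*X) - g * (-5-3*X)) * hnX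
  have hfd : f.natDegree < p := by
    rw [hf, natDegree_expand]
    have := FX_deg (R := ZMod p) n
    omega
  have hgd : g.natDegree < p := by
    rw [hg, natDegree_expand]
    have : G.natDegree ≤ n := by
      have := prod_deg (range n) (fun i : ℕ => (C ((12*(i:ZMod p)+7)^2) - C 9 * X)) (by
        intro i _
        have : C ((12*(i:ZMod p)+7)^2) - C 9 * X = C (-9) * X + C ((12*(i:ZMod p)+7)^2) := by
          rw [C_neg]; ring
        rw [this]; exact natDegree_linear_le)
      rwa [card_range] at this
    omega
  have key := periodic_ratio f g 4 h4' hgne hrel hfd hgd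
  have key2 := congrArg (fun q => coeff q 2) key
  have ce : ∀ q : (ZMod p)[X], (expand (ZMod p) 2 q).coeff 2 = q.coeff 1 := by
    intro q
    have := coeff_expand_mul' (R := ZMod p) (p := 2) (by norm_num) q 1
    rwa [mul_one] at this
  simp only [coeff_C_mul] at key2
  rw [hf, hg, ce, ce, ← hf, ← hg] at key2
  have hG1 : G.coeff 1 = -(g.eval 0) * ∑ i ∈ range n, 9 / (12*(i:ZMod p)+7)^2 := by
    rw [hge0, hG]
    exact prod_coeff_one n (fun i => (12*(i:ZMod p)+7)^2) (fun _ => 9) (fun i hi => pow_ne_zero _ (seven_ne n hn h4 i hi))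
  have hf0 : f.eval 0 = FX n (0 : ZMod p) := by
    have := map_FX (evalRingHom (0:ZMod p)) n (X^2)
    rw [hf']
    simpa using this
  rw [hG1, hf0] at key2
  apply mul_left_cancel₀ hge
  rw [key2]; ring

def h2 (p : ℕ) [Fact p.Prime] (N : ℕ) : ZMod p := ∑ j ∈ range N, (((j:ZMod p)+1)^2)⁻¹

lemma sum_zmod {M : Type*} [AddCommMonoid M] (g : ZMod p → M) : ∑ j ∈ range p, g (j : ZMod p) = ∑ a : ZMod p, g a := by
  refine sum_nbij' (fun j => (j : ZMod p)) (fun a => a.val) ?_ ?_ ?_ ?_ ?_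
  · intros; simp
  · intro a _; simp [ZMod.val_lt]
  · intro a ha; simp at ha; exact ZMod.val_cast_of_lt ha
  · intro a _; simp
  · intros; rfl

lemma h2_full (hp : 3 < p) : h2 p (p-1) = 0 := by
  have h1 : ∑ j ∈ range p, (((j:ZMod p))^2)⁻¹ = h2 p (p-1) := by
    unfold h2
    rw [show range p = range (p-1+1) by congr 1; omega, sum_range_succ']
    simp
  rw [← h1, sum_zmod (fun a : ZMod p => (a^2)⁻¹)]
  have := FiniteField.sum_pow_lt_card_sub_one (K := ZMod p) 2 (by rw [ZMod.card]; omega)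
  rw [← this]
  refine sum_nbij' (fun a => a⁻¹) (fun a => a⁻¹) ?_ ?_ ?_ ?_ ?_ <;> simp

lemma h2_add (c k : ℕ) : h2 p (c+k) = h2 p c + ∑ t ∈ range k, (((c:ZMod p)+t+1)^2)⁻¹ := by
  unfold h2
  rw [sum_range_add]; push_cast; rfl

lemma h2_reflect (hp : 3 < p) (N : ℕ) (hN : N ≤ p-1) : h2 p (p-1-N) = - h2 p N := by
  have h := h2_add (p := p) N (p-1-N)
  rw [show N + (p-1-N) = p-1 by omega, h2_full hp, ← sum_range_reflect] at h
  have : ∑ j ∈ range (p-1-N), (((N:ZMod p) + ((p-1-N-1-j : ℕ):ZMod p) + 1)^2)⁻¹ = h2 p (p-1-N) := by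
    unfold h2
    apply sum_congr rfl
    intro j hj; simp at hj
    congr 1
    have : (((N + (p-1-N-1-j) + 1 + (j+1) : ℕ)) : ZMod p) = 0 := by
      rw [show N + (p-1-N-1-j) + 1 + (j+1) = p by omega]; simp
    push_cast at this
    rw [show (N:ZMod p) + ((p-1-N-1-j : ℕ):ZMod p) + 1 = -((j:ZMod p)+1) by linear_combination this]
    ring
  rw [this] at h
  linear_combination -h

lemma sum_three {M : Type*} [AddCommMonoid M] (f : ℕ → M) (a : ℕ) :
    ∑ j ∈ range (3*a), f j = ∑ t ∈ range a, f (3*t) + ∑ t ∈ range a, f (3*t+1) + ∑ t ∈ range a, f (3*t+2) := by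
  induction a with
  | zero => simp
  | succ a ih =>
    rw [show 3*(a+1) = 3*a+1+1+1 by ring, sum_range_succ, sum_range_succ, sum_range_succ, ih,
      sum_range_succ, sum_range_succ, sum_range_succ]
    abel

lemma scale_sum (s : Finset ℕ) (q : ZMod p) (f g : ℕ → ZMod p) (hq : q ≠ 0) (h : ∀ i ∈ s, f i = q * g i) :
   q^2 * ∑ i ∈ s, ((f i)^2)⁻¹ = ∑ i ∈ s, ((g i)^2)⁻¹ := by
  rw [mul_sum]
  apply sum_congr rfl
  intro i hi
  rw [h i hi, mul_pow, mul_inv, mul_inv_cancel_left₀ (pow_ne_zero _ hq)]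

lemma h2_main (m : ℕ) (hm : p = 4*m+1) :
   8 * ∑ i ∈ range (2*m), 9 / (12*(i:ZMod p)+7)^2 = -5 * h2 p m := by
  have hp3' : p % 3 ≠ 0 := by
    intro h3
    have := (Nat.prime_dvd_prime_iff_eq Nat.prime_three (Fact.out : p.Prime)).mp (Nat.dvd_of_mod_eq_zero h3)
    omega
  have hpp := (Fact.out : p.Prime).two_le
  have h3 : (3 : ZMod p) ≠ 0 := three_ne (by omega)
  have h2' : (2 : ZMod p) ≠ 0 := two_ne (by omega)
  have h12 : (12 : ZMod p) ≠ 0 := by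
    have : (12 : ZMod p) = 2*2*3 := by norm_num
    rw [this]; exact mul_ne_zero (mul_ne_zero h2' h2') h3
  have hm3 : m % 3 = 0 ∨ m % 3 = 1 := by omega
  have e9 : ∑ i ∈ range (2*m), 9 / (12*(i:ZMod p)+7)^2 = 9 * ∑ i ∈ range (2*m), ((12*(i:ZMod p)+7)^2)⁻¹ := by
    rw [mul_sum]; apply sum_congr rfl; intros; rw [div_eq_mul_inv]
  rw [e9]
  have hp0 : (4*(m:ZMod p)+1) = 0 := by
    have : ((4*m+1:ℕ) : ZMod p) = 0 := by rw [← hm]; simp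
    push_cast at this; exact this
  rcases hm3 with hm3 | hm3
  · obtain ⟨a, rfl⟩ : ∃ a, m = 3*a := ⟨m/3, by omega⟩
    push_cast at hp0
    have s1 := scale_sum (range (2*(3*a))) 12 (fun i => 12*(i:ZMod p)+7) (fun i => ((5*a:ℕ):ZMod p)+(i:ZMod p)+1) h12 (by
      intro i _; push_cast; linear_combination -5 * hp0)
    have a1 := h2_add (p := p) (5*a) (2*(3*a))
    have r1 := h2_reflect (p := p) (by omega) a (by omega)
    rw [show p-1-a = 5*a + 2*(3*a) by omega] at r1
    have r2 := h2_reflect (p := p) (by omega) (3*a) (by omega)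
    rw [show p-1-3*a = 8*a+a by omega] at r2
    have r3 := h2_reflect (p := p) (by omega) (4*a) (by omega)
    rw [show p-1-4*a = 8*a by omega] at r3
    have a2 := h2_add (p := p) (8*a) a
    have a3 := h2_add (p := p) (4*a) a
    rw [show 4*a+a = 5*a by ring] at a3
    have E : h2 p (3*a) = _ := sum_three (fun j => (((j:ZMod p)+1)^2)⁻¹) a
    have t0 := scale_sum (range a) 3 (fun t => ((3*t:ℕ):ZMod p)+1) (fun t => ((8*a:ℕ):ZMod p)+(t:ZMod p)+1) h3 (by
      intro i _; push_cast; linear_combination -2 * hp0)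
    have t1 := scale_sum (range a) 3 (fun t => ((3*t+1:ℕ):ZMod p)+1) (fun t => ((4*a:ℕ):ZMod p)+(t:ZMod p)+1) h3 (by
      intro i _; push_cast; linear_combination -1 * hp0)
    have t2 := scale_sum (range a) 3 (fun t => ((3*t+2:ℕ):ZMod p)+1) (fun t => (t:ZMod p)+1) h3 (by
      intro i _; push_cast; ring)
    have e2 : h2 p a = ∑ i ∈ range a, (((i:ZMod p)+1)^2)⁻¹ := rfl
    rw [← e2] at t2
    have E10 : 10 * h2 p (3*a) = h2 p a + h2 p (5*a) := by
      linear_combination 9 * E + t0 + t1 + t2 - a2 + r2 - r3 - a3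
    have : (2:ZMod p) * (8 * (9 * ∑ i ∈ range (2*(3*a)), ((12*(i:ZMod p)+7)^2)⁻¹)) = 2 * (-5 * h2 p (3*a)) := by
      linear_combination s1 - a1 + r1 + E10
    exact mul_left_cancel₀ h2' this
  · obtain ⟨a, rfl⟩ : ∃ a, m = 3*a+1 := ⟨m/3, by omega⟩
    push_cast at hp0
    have s1 := scale_sum (range (2*(3*a+1))) 12 (fun i => 12*(i:ZMod p)+7) (fun i => ((a:ℕ):ZMod p)+(i:ZMod p)+1) h12 (by
      intro i _; push_cast; linear_combination -1 * hp0)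
    have a1 := h2_add (p := p) (a) (2*(3*a+1))
    have r1 := h2_reflect (p := p) (by omega) (5*a+2) (by omega)
    rw [show p-1-(5*a+2) = a + 2*(3*a+1) by omega] at r1
    have r2 := h2_reflect (p := p) (by omega) (3*a+1) (by omega)
    rw [show p-1-(3*a+1) = 8*a+3+a by omega] at r2
    have r3 := h2_reflect (p := p) (by omega) (4*a+1) (by omega)
    rw [show p-1-(4*a+1) = 8*a+3 by omega] at r3
    have a2 := h2_add (p := p) (8*a+3) a
    have a3 := h2_add (p := p) (4*a+1) (a+1)
    rw [show 4*a+1+(a+1) = 5*a+2 by ring] at a3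
    have E : h2 p (3*a+1) = _ := sum_range_succ (fun j => (((j:ZMod p)+1)^2)⁻¹) (3*a)
    rw [sum_three (fun j => (((j:ZMod p)+1)^2)⁻¹) a] at E
    have t0 := scale_sum (range (a+1)) 3 (fun t => ((3*t:ℕ):ZMod p)+1) (fun t => ((4*a+1:ℕ):ZMod p)+(t:ZMod p)+1) h3 (by
      intro i _; push_cast; linear_combination -1 * hp0)
    rw [sum_range_succ] at t0
    have t1 := scale_sum (range a) 3 (fun t => ((3*t+1:ℕ):ZMod p)+1) (fun t => ((8*a+3:ℕ):ZMod p)+(t:ZMod p)+1) h3 (by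
      intro i _; push_cast; linear_combination -2 * hp0)
    have t2 := scale_sum (range a) 3 (fun t => ((3*t+2:ℕ):ZMod p)+1) (fun t => (t:ZMod p)+1) h3 (by
      intro i _; push_cast; ring)
    have e2 : h2 p a = ∑ i ∈ range a, (((i:ZMod p)+1)^2)⁻¹ := rfl
    rw [← e2] at t2
    have E10 : 10 * h2 p (3*a+1) = h2 p a + h2 p (5*a+2) := by
      linear_combination 9 * E + t0 + t1 + t2 - a2 + r2 - r3 - a3
    have : (2:ZMod p) * (8 * (9 * ∑ i ∈ range (2*(3*a+1)), ((12*(i:ZMod p)+7)^2)⁻¹)) = 2 * (-5 * h2 p (3*a+1)) := by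
      linear_combination s1 - a1 + r1 + E10
    exact mul_left_cancel₀ h2' this

lemma h2_half (n : ℕ) (hn : p = 2*n+1) (hp : 3 < p) : h2 p n = 0 := by
  have := h2_reflect hp n (by omega)
  rw [show p-1-n = n by omega] at this
  have h2' : (2 : ZMod p) ≠ 0 := two_ne (by omega)
  have : 2 * h2 p n = 0 := by linear_combination this
  exact (mul_eq_zero.mp this).resolve_left h2'

end polyg
end part7

section part8
open Finset

section rset
variable {R : Type*} [CommRing R]

def uu (i8 : R) (k : ℕ) : R := (k.centralBinom : R)^3 * i8^k
def ss (i8 : R) (p j : ℕ) : R := ∑ k ∈ range p, (k:R)^j * uu i8 k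

lemma uu_rec (i8 : R) (h : (-8)*i8 = 1) (k : ℕ) : ((k:R)+1)^3 * uu i8 (k+1) = -(2*(k:R)+1)^3 * uu i8 k := by
  have e := Nat.succ_mul_centralBinom_succ k
  have e' : ((k:R)+1) * ((k+1).centralBinom : R) = 2*(2*(k:R)+1) * (k.centralBinom : R) := by
      have e2 := congrArg (Nat.cast : ℕ → R) e
      push_cast at e2; linear_combination e2
  unfold uu
  have : ((k:R)+1)^3 * (((k+1).centralBinom : R)^3 * i8^(k+1)) = (((k:R)+1) * ((k+1).centralBinom : R))^3 * i8^k * i8 := by ring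
  rw [this, e']
  linear_combination -(2*(k:R)+1)^3 * (k.centralBinom : R)^3 * i8^k * h

lemma tel_ss (i8 : R) (h : (-8)*i8 = 1) (p : ℕ) (hp : (p:R)^3 = 0) :
    9 * ss i8 p 3 + 12 * ss i8 p 2 + 6 * ss i8 p 1 + ss i8 p 0 = 0 := by
  have key : ∀ N : ℕ, 9 * ss i8 N 3 + 12 * ss i8 N 2 + 6 * ss i8 N 1 + ss i8 N 0 = -(N:R)^3 * uu i8 N := by
    intro N
    induction N with
    | zero => simp [ss]
    | succ N ih =>
      have r := uu_rec i8 h N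
      unfold ss at *
      simp only [sum_range_succ]
      push_cast
      linear_combination ih + r
  rw [key, hp]; ring

lemma odd_prod (k : ℕ) : 2^k * ∏ j ∈ range k, (2*(j:R)+1) = k.centralBinom * k.factorial := by
  induction k with
  | zero => simp
  | succ k ih =>
    have e := Nat.succ_mul_centralBinom_succ k
    have e' : ((k:R)+1) * ((k+1).centralBinom : R) = 2*(2*(k:R)+1) * (k.centralBinom : R) := by
      have e2 := congrArg (Nat.cast : ℕ → R) e
      push_cast at e2; linear_combination e2
    rw [prod_range_succ, Nat.factorial_succ]
    push_cast
    linear_combination 2*(2*(k:R)+1)*ih - (k.factorial:R) * e'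

lemma PP_zero (n k : ℕ) (hk : k ≤ n) : (-8)^k * PP n (0:R) k = (n.factorial:R)^3 * (k.centralBinom:R)^3 := by
  have h1 : ∏ j ∈ range k, aa (0:R) j = (-1)^k * (∏ j ∈ range k, (2*(j:R)+1))^3 := by
    rw [← prod_pow, show (-1:R)^k = ∏ j ∈ range k, (-1) by simp, ← prod_mul_distrib]
    apply prod_congr rfl; intro j _; simp only [aa]; ring
  have h2 : ∏ j ∈ Ico k n, bb (0:R) j = (∏ j ∈ Ico k n, ((j:R)+1))^3 := by
    rw [← prod_pow]
    apply prod_congr rfl; intro j _; simp only [bb]; ring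
  have h3 : (n.factorial:R) = k.factorial * ∏ j ∈ Ico k n, ((j:R)+1) := by
    rw [← prod_range_add_one_eq_factorial, ← prod_range_add_one_eq_factorial]
    push_cast
    rw [← prod_range_mul_prod_Ico _ hk]
  unfold PP
  rw [h1, h2, h3]
  have h4 := odd_prod (R := R) k
  have h5 : (-8:R)^k = (-1)^k * (2^k)^3 := by
    rw [← pow_mul, mul_comm k 3, pow_mul, ← mul_pow]; norm_num
  have h6 : ((-1:R)^k)^2 = 1 := by rw [← pow_mul, mul_comm, pow_mul]; norm_num
  rw [h5]
  generalize (∏ j ∈ Ico k n, ((j:R)+1)) = t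
  have : (2^k * ∏ j ∈ range k, (2*(j:R)+1))^3 = (k.centralBinom * k.factorial)^3 := by rw [h4]
  generalize (∏ j ∈ range k, (2*(j:R)+1)) = w at *
  linear_combination t^3 * this + (2^k)^3*w^3*t^3 * h6

lemma PP_uu (i8 : R) (h : (-8)*i8 = 1) (n k : ℕ) (hk : k ≤ n) : PP n (0:R) k = (n.factorial:R)^3 * uu i8 k := by
  have := PP_zero (R := R) n k hk
  have e : (-8:R)^k * i8^k = 1 := by rw [← mul_pow, h, one_pow]
  unfold uu
  linear_combination i8^k * this - PP n (0:R) k * e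

lemma sum_cut (i8 : R) (n : ℕ) (hv : ∀ k, n < k → k < 2*n+1 → (k.centralBinom:R)^3 = 0) (f : ℕ → R) :
    ∑ k ∈ range (2*n+1), f k * uu i8 k = ∑ k ∈ range (n+1), f k * uu i8 k := by
  rw [← sum_range_add_sum_Ico _ (show n+1 ≤ 2*n+1 by omega)]
  rw [add_eq_left]
  apply sum_eq_zero
  intro k hk; simp at hk
  unfold uu; rw [hv k (by omega) (by omega)]; ring

lemma FX_ss (i8 : R) (h : (-8)*i8 = 1) (n : ℕ) (hv : ∀ k, n < k → k < 2*n+1 → (k.centralBinom:R)^3 = 0) :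
    FX n (0:R) = (n.factorial:R)^3 * ss i8 (2*n+1) 0 := by
  unfold ss FX
  rw [sum_cut i8 n hv (fun k => (k:R)^0), mul_sum]
  apply sum_congr rfl; intro k hk; simp at hk
  rw [PP_uu i8 h n k (by omega)]; ring
lemma FB_ss (i8 : R) (h : (-8)*i8 = 1) (n : ℕ) (hv : ∀ k, n < k → k < 2*n+1 → (k.centralBinom:R)^3 = 0) :
    FB n (0:R) = (n.factorial:R)^3 * (3 * ss i8 (2*n+1) 1 + ss i8 (2*n+1) 0) := by
  unfold ss FB
  rw [sum_cut i8 n hv (fun k => (k:R)^0), sum_cut i8 n hv (fun k => (k:R)^1), mul_sum, ← sum_add_distrib, mul_sum]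
  apply sum_congr rfl; intro k hk; simp at hk
  rw [PP_uu i8 h n k (by omega)]; ring
lemma FZ_ss (i8 : R) (h : (-8)*i8 = 1) (n : ℕ) (hv : ∀ k, n < k → k < 2*n+1 → (k.centralBinom:R)^3 = 0) :
    FZ n (0:R) = (n.factorial:R)^3 * (18 * ss i8 (2*n+1) 2 + 14 * ss i8 (2*n+1) 1 + 3 * ss i8 (2*n+1) 0) := by
  unfold ss FZ
  rw [sum_cut i8 n hv (fun k => (k:R)^0), sum_cut i8 n hv (fun k => (k:R)^1), sum_cut i8 n hv (fun k => (k:R)^2),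
    mul_sum, mul_sum, mul_sum, ← sum_add_distrib, ← sum_add_distrib, mul_sum]
  apply sum_congr rfl; intro k hk; simp at hk
  rw [PP_uu i8 h n k (by omega)]; ring

lemma DD_zero (n : ℕ) : DD n (0:R) = (n.factorial:R)^3 := by
  unfold DD
  rw [← prod_range_add_one_eq_factorial]
  push_cast
  rw [← prod_pow]
  apply prod_congr rfl; intro j _; simp only [bb]; ring

lemma prod_one_add_sq (x : R) (hx : x^2 = 0) (c : ℕ → R) (k : ℕ) :
    ∏ i ∈ range k, (1 + x * c i) = 1 + x * ∑ i ∈ range k, c i := by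
  induction k with
  | zero => simp
  | succ k ih =>
    rw [prod_range_succ, sum_range_succ, ih]
    linear_combination (∑ i ∈ range k, c i) * c k * hx

lemma prod_one_add_cube (x : R) (hx : x^3 = 0) (c : ℕ → R) (k : ℕ) :
    2 * ∏ i ∈ range k, (1 + x * c i) = 2 + 2 * x * ∑ i ∈ range k, c i
      + x^2 * ((∑ i ∈ range k, c i)^2 - ∑ i ∈ range k, (c i)^2) := by
  induction k with
  | zero => simp
  | succ k ih =>
    rw [prod_range_succ, sum_range_succ, sum_range_succ]
    linear_combination (1 + x * c k) * ih + ((∑ i ∈ range k, c i)^2 - ∑ i ∈ range k, (c i)^2) * c k * hx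
end rset

section zm
variable {p : ℕ} [Fact p.Prime] {r : ℕ}

lemma zinv (a : ℕ) (h : ¬ p ∣ a) : (a : ZMod (p^r)) * (a : ZMod (p^r))⁻¹ = 1 := by
  apply ZMod.coe_mul_inv_eq_one
  exact (((Nat.Prime.coprime_iff_not_dvd Fact.out).mpr h).symm).pow_right r

lemma zunit (a : ℕ) (h : ¬ p ∣ a) : IsUnit (a : ZMod (p^r)) := IsUnit.of_mul_eq_one _ (zinv a h)

lemma fact_unit (a : ℕ) (h : a < p) : IsUnit (a.factorial : ZMod (p^r)) := by
  apply zunit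
  rw [Nat.Prime.dvd_factorial Fact.out]; omega

lemma P_pow : (p : ZMod (p^r))^r = 0 := by
  have : ((p^r : ℕ) : ZMod (p^r)) = 0 := ZMod.natCast_self _
  push_cast at this; exact this

lemma binom_van (hr : r ≤ 3) (n : ℕ) (hn : p = 2*n+1) (k : ℕ) (h1 : n < k) (h2 : k < 2*n+1) :
    (k.centralBinom : ZMod (p^r))^3 = 0 := by
  have : p ∣ k.centralBinom := by
    rw [Nat.centralBinom]
    exact Nat.Prime.dvd_choose Fact.out (by omega) (by omega) (by omega)
  obtain ⟨c, hc⟩ := this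
  have e : (p : ZMod (p^r))^3 = 0 := by
    rw [show 3 = r + (3-r) by omega, pow_add, P_pow, zero_mul]
  rw [hc]; push_cast; rw [mul_pow, e, zero_mul]

lemma exists_i8 (hp2 : p ≠ 2) : ∃ i8 : ZMod (p^r), (-8)*i8 = 1 := by
  refine ⟨-((8:ℕ):ZMod (p^r))⁻¹, ?_⟩
  have := zinv (p := p) (r := r) 8 (by
    intro h
    have h2 : p ∣ 2^3 := by norm_num; exact h
    exact hp2 ((Nat.prime_dvd_prime_iff_eq Fact.out Nat.prime_two).mp ((Fact.out : p.Prime).dvd_of_dvd_pow h2)))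
  push_cast at this ⊢
  linear_combination this

lemma case3_R (M : ℕ) (hM : p = 4*M+3) (i8 : ZMod (p^2)) (h8 : (-8)*i8 = 1) :
    ss i8 p 0 = 0 ∧ 3 * ss i8 p 1 = -(p : ZMod (p^2)) ∧
    18 * ss i8 p 2 + 14 * ss i8 p 1 = (2*(p : ZMod (p^2))+2-2^(p-1)) * ((2*M+1).choose M : ZMod (p^2))^2 := by
  set P := (p : ZMod (p^2)) with hP
  have hPP : P = 4*(M:ZMod (p^2))+3 := by
    have := congrArg (Nat.cast : ℕ → ZMod (p^2)) hM
    push_cast at this; exact this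
  have hP2 : P^2 = 0 := P_pow
  have hv := fun k => binom_van (p := p) (r := 2) (by norm_num) (2*M+1) (by omega) k
  have e1 : p = 2*(2*M+1)+1 := by omega
  have fx := FX_ss i8 h8 (2*M+1) hv
  have fb := FB_ss i8 h8 (2*M+1) hv
  have fz := FZ_ss i8 h8 (2*M+1) hv
  rw [← e1] at fx fb fz
  have un : IsUnit ((2*M+1).factorial : ZMod (p^2)) := fact_unit _ (by omega)
  have un3 : IsUnit (((2*M+1).factorial : ZMod (p^2))^3) := un.pow 3
  have gx := FX_R_odd (R := ZMod (p^2)) M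
  have gb := FB_R (R := ZMod (p^2)) (2*M+1)
  have gz := FZ_R_odd (R := ZMod (p^2)) M
  rw [← hPP, hP2] at gx gz
  have hPP' : 2*((2*M+1:ℕ):ZMod (p^2))+1 = P := by rw [hPP]; push_cast; ring
  rw [hPP', hP2, DD_zero] at gb
  rw [DD_zero] at gz
  rw [fx] at gx
  have s0 : ss i8 p 0 = 0 := by
    apply un3.mul_left_cancel; rw [gx, mul_zero]
  have s1 : 3 * ss i8 p 1 = -P := by
    apply un3.mul_left_cancel
    rw [fb, s0, Odd.neg_one_pow ⟨M, rfl⟩] at gb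
    linear_combination gb
  refine ⟨s0, s1, ?_⟩
  rw [fz, s0] at gz
  set c : ℕ → ZMod (p^2) := fun i => ((M+1+i : ℕ) : ZMod (p^2))⁻¹ with hc
  have hci : ∀ i < M+1, ((M+1+i : ℕ) : ZMod (p^2)) * c i = 1 := by
    intro i hi
    apply zinv
    intro hd
    have := Nat.le_of_dvd (by omega) hd
    omega
  set A : ZMod (p^2) := ∏ i ∈ range (M+1), ((M+1+i : ℕ) : ZMod (p^2)) with hA
  set δ := ∑ i ∈ range (M+1), c i with hδ
  have hfac : ((2*M+1).factorial : ZMod (p^2)) = M.factorial * A := by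
    rw [hA, ← prod_range_add_one_eq_factorial, ← prod_range_add_one_eq_factorial,
      show 2*M+1 = M + (M+1) by ring, prod_range_add]
    push_cast
    congr 1; apply prod_congr rfl; intros; ring
  have hAu : IsUnit A := by
    rw [hfac] at un; exact isUnit_of_mul_isUnit_right un
  have hMu : IsUnit (M.factorial : ZMod (p^2)) := fact_unit _ (by omega)
  have q1 : ∏ i ∈ range (M+1), (P - ((M+1+i : ℕ) : ZMod (p^2))) = (-1)^(M+1) * (A * (1 - P*δ)) := by
    have := prod_one_add_sq (-P) (by rw [neg_pow, hP2]; ring) c (M+1)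
    rw [← hδ] at this
    rw [show 1 - P*δ = 1 + -P*δ by ring, ← this, hA, ← prod_mul_distrib, show (-1:ZMod (p^2))^(M+1) = ∏ j ∈ range (M+1), (-1) by simp, ← prod_mul_distrib]
    apply prod_congr rfl; intro i hi; simp at hi
    linear_combination -P * hci i (by omega)
  have q2 : ∏ i ∈ range (M+1), (P - 2*((M+1+i : ℕ) : ZMod (p^2))) * 2 = (-1)^(M+1) * (A * 2^(2*(M+1)) * (1 - P*2⁻¹*δ)) := by
    have h2 := zinv (p := p) (r := 2) 2 (by
      intro hd; have := Nat.le_of_dvd (by omega) hd; omega)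
    push_cast at h2
    have := prod_one_add_sq (-P*2⁻¹) (by rw [neg_mul, neg_pow, mul_pow, hP2]; ring) c (M+1)
    rw [← hδ] at this
    rw [show 1 - P*2⁻¹*δ = 1 + -P*2⁻¹*δ by ring, ← this, hA, pow_mul, show ((2:ZMod (p^2))^2)^(M+1) = ∏ j ∈ range (M+1), 2^2 by simp, ← prod_mul_distrib, ← prod_mul_distrib, show (-1:ZMod (p^2))^(M+1) = ∏ j ∈ range (M+1), (-1) by simp, ← prod_mul_distrib]
    apply prod_congr rfl; intro i hi; simp at hi
    linear_combination -4*P*2⁻¹ * hci i (by omega) - 2 * P * h2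
  have q3 : ∏ i ∈ range (M+1), (P - 2*((M+1+i : ℕ) : ZMod (p^2))) * 2 = 2 * A := by
    rw [← prod_range_reflect]
    have od := odd_prod (R := ZMod (p^2)) (M+1)
    have : ∏ i ∈ range (M+1), (P - 2*((M+1+(M+1-1-i) : ℕ) : ZMod (p^2))) * 2 = 2^(M+1) * ∏ j ∈ range (M+1), (2*(j:ZMod (p^2))+1) := by
      rw [show (2:ZMod (p^2))^(M+1) = ∏ j ∈ range (M+1), 2 by simp, ← prod_mul_distrib]
      apply prod_congr rfl; intro i hi; simp at hi
      have : M + 1 + (M+1-1-i) + i = 2*M+1 := by omega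
      have : ((M + 1 + (M+1-1-i) : ℕ) : ZMod (p^2)) + i = 2*M+1 := by
        have e2 := congrArg (Nat.cast : ℕ → ZMod (p^2)) this
        rw [Nat.cast_add] at e2; rw [e2]; push_cast; ring
      rw [hPP]
      linear_combination -4 * this
    rw [this, od]
    have cb : ((M+1).centralBinom * (M+1).factorial) * (M+1).factorial = (2*(M+1)).factorial := by
      have := Nat.choose_mul_factorial_mul_factorial (show M+1 ≤ 2*(M+1) by omega)
      rw [show 2*(M+1) - (M+1) = M+1 by omega] at this
      exact this
    have cb2 : (2*(M+1)).factorial = (2*(M+1)) * (2*M+1).factorial := by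
      rw [show 2*(M+1) = (2*M+1)+1 by ring, Nat.factorial_succ]
    have hM1u : IsUnit ((M+1).factorial : ZMod (p^2)) := fact_unit _ (by omega)
    apply hM1u.mul_right_cancel
    have cb' : (((M+1).centralBinom * (M+1).factorial) * (M+1).factorial : ZMod (p^2)) = (2*(M+1)) * (2*M+1).factorial := by
      have e2 := congrArg (Nat.cast : ℕ → ZMod (p^2)) (cb.trans cb2)
      push_cast at e2; exact e2
    rw [cb', hfac, Nat.factorial_succ]; push_cast; ring
  have q4 : 2^(p-1) * (1 - P*δ) = 1 := by
    have h2 := zinv (p := p) (r := 2) 2 (by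
      intro hd; have := Nat.le_of_dvd (by omega) hd; omega)
    push_cast at h2
    have e : (-1)^(M+1) * (A * 2^(2*(M+1)) * (1 - P*2⁻¹*δ)) = 2 * A := by rw [← q2, q3]
    have e2 : ((-1)^(M+1) * (A * 2^(2*(M+1)) * (1 - P*2⁻¹*δ)))^2 = (2 * A)^2 := by rw [e]
    have hs : ((-1:ZMod (p^2))^(M+1))^2 = 1 := by rw [← pow_mul, mul_comm, pow_mul]; norm_num
    have ht : ((2:ZMod (p^2))^(2*(M+1)))^2 = 2^2 * 2^(p-1) := by
      rw [← pow_mul, ← pow_add]; congr 1; omega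
    have u4 : IsUnit ((2:ZMod (p^2))^2) := (IsUnit.of_mul_eq_one _ h2).pow 2
    apply (u4.mul (hAu.pow 2)).mul_left_cancel
    have : ((-1)^(M+1) * (A * 2^(2*(M+1)) * (1 - P*2⁻¹*δ)))^2 = ((-1)^(M+1))^2 * A^2 * (2^(2*(M+1)))^2 * ((1 - P*δ) + (1-2*2⁻¹) * P * δ + P^2*2⁻¹^2*δ^2) := by ring
    rw [this, hs, ht, hP2, h2] at e2
    linear_combination e2
  have f3 : ((3*M+2).factorial : ZMod (p^2)) = (2*M+1).factorial * ((-1)^(M+1) * (A * (1 - P*δ))) := by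
    rw [← q1, ← prod_range_reflect, ← prod_range_add_one_eq_factorial, ← prod_range_add_one_eq_factorial,
      show 3*M+2 = 2*M+1 + (M+1) by ring, prod_range_add]
    push_cast
    congr 1; apply prod_congr rfl; intro i hi; simp at hi
    have : M + 1 + (M+1-1-i) + i = 2*M+1 := by omega
    have : ((M + 1 + (M+1-1-i) : ℕ) : ZMod (p^2)) + i = 2*M+1 := by
        have e2 := congrArg (Nat.cast : ℕ → ZMod (p^2)) this
        rw [Nat.cast_add] at e2; rw [e2]; push_cast; ring
    rw [hPP]
    push_cast at this
    linear_combination this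
  have pr : ∏ i ∈ range (M+1), ((0:ZMod (p^2)) - 4*((i:ZMod (p^2))+1)^2) = (-1)^(M+1) * 4^(M+1) * (((M+1).factorial : ℕ) : ZMod (p^2))^2 := by
    rw [← prod_range_add_one_eq_factorial]
    push_cast
    rw [← prod_pow, ← mul_pow, show ((-1:ZMod (p^2))*4)^(M+1) = ∏ j ∈ range (M+1), (-1*4) by simp, ← prod_mul_distrib]
    apply prod_congr rfl; intros; ring
  rw [pr, f3] at gz
  have ch : ((2*M+1).choose M : ZMod (p^2)) * M.factorial * (M+1).factorial = (2*M+1).factorial := by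
    have := Nat.choose_mul_factorial_mul_factorial (show M ≤ 2*M+1 by omega)
    rw [show 2*M+1-M = M+1 by omega] at this
    have e2 := congrArg (Nat.cast : ℕ → ZMod (p^2)) this
    push_cast at e2; exact e2
  have q5 : 2^(p-1) = 1 + P*δ := by
    have h : (1 - P*δ)*(1+P*δ) = 1 := by linear_combination -δ^2 * hP2
    linear_combination (1+P*δ) * q4 - 2^(p-1) * h
  rw [q5]
  have hs : ((-1:ZMod (p^2))^(M+1))^2 = 1 := by rw [← pow_mul, mul_comm, pow_mul]; norm_num
  have u4 : IsUnit ((4:ZMod (p^2))^(M+1)) := by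
    have := zunit (p := p) (r := 2) 4 (by
      intro h
      have h2 : p ∣ 2^2 := by norm_num; exact h
      have := Nat.le_of_dvd (by norm_num) ((Fact.out : p.Prime).dvd_of_dvd_pow h2)
      omega)
    push_cast at this
    exact this.pow _
  have us : IsUnit ((-1:ZMod (p^2))^(M+1)) := (isUnit_one.neg).pow _
  have uM1 : IsUnit ((M+1).factorial : ZMod (p^2)) := fact_unit _ (by omega)
  set W := 18 * ss i8 p 2 + 14 * ss i8 p 1 with hW
  have gz2 : W * (M.factorial * ((M+1).factorial)^2) = (1 + 2*P) * ((2*M+1).factorial * (A * (1-P*δ))) := by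
    apply (un3.mul (us.mul u4)).mul_left_cancel
    have h1 : (6*(M:ZMod (p^2))+5)*(2*(2*M+1))*2 = (P-1)*(3*P+1) := by rw [hPP]; ring
    linear_combination gz - 4*4^M * ((2*M+1).factorial * ((-1)^(M+1) * (A * (1 - P*δ)))) * ((2*M+1).factorial:ZMod (p^2))^3 * (h1 + 3*hP2)
  apply ((hMu.pow 2).mul (uM1.pow 2)).mul_left_cancel
  have ch2 : (((2*M+1).choose M : ZMod (p^2)) * M.factorial * (M+1).factorial)^2 = (M.factorial * A)*((2*M+1).factorial) := by
    rw [ch, ← hfac]; ring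
  linear_combination (M.factorial:ZMod (p^2)) * gz2 - (2*P+2-(1+P*δ)) * ch2 - 2*δ * (2*M+1).factorial * M.factorial * A * hP2
end zm
end part8

section part9
open Finset Polynomial

section s9
variable {p : ℕ} [Fact p.Prime]

lemma P3_zero : (p : ZMod (p^3))^3 = 0 := P_pow

def red (p : ℕ) : ZMod (p^3) →+* ZMod p := ZMod.castHom (dvd_pow_self p (by norm_num)) (ZMod p)

lemma red_lift (a b : ZMod (p^3)) (h : red p a = red p b) : (p : ZMod (p^3))^2 * a = (p : ZMod (p^3))^2 * b := by
  have h1 : red p (a - b) = 0 := by rw [map_sub, h, sub_self]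
  obtain ⟨z, hz⟩ := ZMod.intCast_surjective (a - b)
  rw [← hz, map_intCast, ZMod.intCast_zmod_eq_zero_iff_dvd] at h1
  obtain ⟨c, hc⟩ := h1
  have : (p : ZMod (p^3))^2 * (a - b) = 0 := by
    rw [← hz, hc]; push_cast
    linear_combination (c : ZMod (p^3)) * P3_zero (p := p)
  linear_combination this

lemma red_inv (a : ℕ) (h : ¬ p ∣ a) : red p ((a : ZMod (p^3))⁻¹) = (a : ZMod p)⁻¹ := by
  have := congrArg (red p) (zinv (p := p) (r := 3) a h)
  rw [map_mul, map_one, map_natCast] at this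
  exact eq_inv_of_mul_eq_one_right this

lemma exp_poly (F : ℤ[X]) : aeval ((p : ZMod (p^3))^2) F = aeval (0 : ZMod (p^3)) F + (p : ZMod (p^3))^2 * ((F.coeff 1 : ℤ) : ZMod (p^3)) := by
  have h3 := P3_zero (p := p)
  induction F using Polynomial.induction_on' with
  | add f g hf hg => rw [map_add, map_add, hf, hg, coeff_add]; push_cast; ring
  | monomial n a =>
    rw [aeval_monomial, aeval_monomial, coeff_monomial]
    rcases n with _ | _ | n
    · simp
    · simp; ring
    · have : ((p : ZMod (p^3))^2)^(n+1+1) = 0 := by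
        rw [← pow_mul, show 2*(n+1+1) = 3 + (2*n+1) by ring, pow_add, h3, zero_mul]
      rw [this]; simp

lemma exp_FX (n : ℕ) : ∃ c : ZMod (p^3), FX n ((p : ZMod (p^3))^2) = FX n 0 + (p : ZMod (p^3))^2 * c ∧
    red p c = (FX n (X : (ZMod p)[X])).coeff 1 := by
  refine ⟨(((FX n (X : ℤ[X])).coeff 1 : ℤ) : ZMod (p^3)), ?_, ?_⟩
  · have := exp_poly (p := p) (FX n (X : ℤ[X]))
    have e : ∀ a : ZMod (p^3), aeval a (FX n (X : ℤ[X])) = FX n a := by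
      intro a
      have := map_FX (aeval a : ℤ[X] →ₐ[ℤ] ZMod (p^3)).toRingHom n X
      simpa using this
    rw [e, e] at this; exact this
  · rw [map_intCast]
    have := map_FX (mapRingHom (Int.castRingHom (ZMod p))) n X
    simp only [coe_mapRingHom, map_X] at this
    rw [← this, coeff_map]; simp
lemma exp_FB (n : ℕ) : ∃ c : ZMod (p^3), FB n ((p : ZMod (p^3))^2) = FB n 0 + (p : ZMod (p^3))^2 * c ∧
    red p c = (FB n (X : (ZMod p)[X])).coeff 1 := by
  refine ⟨(((FB n (X : ℤ[X])).coeff 1 : ℤ) : ZMod (p^3)), ?_, ?_⟩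
  · have := exp_poly (p := p) (FB n (X : ℤ[X]))
    have e : ∀ a : ZMod (p^3), aeval a (FB n (X : ℤ[X])) = FB n a := by
      intro a
      have := map_FB (aeval a : ℤ[X] →ₐ[ℤ] ZMod (p^3)).toRingHom n X
      simpa using this
    rw [e, e] at this; exact this
  · rw [map_intCast]
    have := map_FB (mapRingHom (Int.castRingHom (ZMod p))) n X
    simp only [coe_mapRingHom, map_X] at this
    rw [← this, coeff_map]; simp
lemma exp_FZ (n : ℕ) : ∃ c : ZMod (p^3), FZ n ((p : ZMod (p^3))^2) = FZ n 0 + (p : ZMod (p^3))^2 * c ∧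
    red p c = (FZ n (X : (ZMod p)[X])).coeff 1 := by
  refine ⟨(((FZ n (X : ℤ[X])).coeff 1 : ℤ) : ZMod (p^3)), ?_, ?_⟩
  · have := exp_poly (p := p) (FZ n (X : ℤ[X]))
    have e : ∀ a : ZMod (p^3), aeval a (FZ n (X : ℤ[X])) = FZ n a := by
      intro a
      have := map_FZ (aeval a : ℤ[X] →ₐ[ℤ] ZMod (p^3)).toRingHom n X
      simpa using this
    rw [e, e] at this; exact this
  · rw [map_intCast]
    have := map_FZ (mapRingHom (Int.castRingHom (ZMod p))) n X
    simp only [coe_mapRingHom, map_X] at this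
    rw [← this, coeff_map]; simp

def EE (p m : ℕ) : ZMod (p^3) := ∑ i ∈ range m, (((i+1 : ℕ) : ZMod (p^3))⁻¹)^2
def cc (p m i : ℕ) : ZMod (p^3) := ((m+1+i : ℕ) : ZMod (p^3))⁻¹
def dl (p m : ℕ) : ZMod (p^3) := ∑ i ∈ range m, cc p m i

lemma red_EE (m : ℕ) (h : m < p) : red p (EE p m) = h2 p m := by
  unfold EE h2
  rw [map_sum]
  apply sum_congr rfl; intro i hi; simp at hi
  rw [map_pow, red_inv _ (fun hd => by have := Nat.le_of_dvd (by omega) hd; omega)]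
  push_cast; rw [inv_pow]

lemma EE_full (n : ℕ) (hn : p = 2*n+1) (hp : 3 < p) : (p : ZMod (p^3))^2 * EE p n = 0 := by
  have := red_lift (p := p) (EE p n) 0 (by rw [red_EE _ (by omega), h2_half n hn hp, map_zero])
  rw [this, mul_zero]

lemma EE_add (m : ℕ) : EE p (2*m) = EE p m + ∑ i ∈ range m, (cc p m i)^2 := by
  unfold EE cc
  rw [two_mul, sum_range_add]
  congr 1; apply sum_congr rfl; intro i _; rw [show m+i+1 = m+1+i by ring]

lemma cc_mul (m i : ℕ) (hm : p = 4*m+1) (h : i < m) : ((m+1+i : ℕ) : ZMod (p^3)) * cc p m i = 1 := by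
  apply zinv
  intro hd; have := Nat.le_of_dvd (by omega) hd; omega

lemma cc_sq (m : ℕ) (hm : p = 4*m+1) : (p : ZMod (p^3))^2 * ∑ i ∈ range m, (cc p m i)^2 = -(p : ZMod (p^3))^2 * EE p m := by
  have hm0 : m ≠ 0 := by rintro rfl; exact (Fact.out : p.Prime).one_lt.ne' (by omega)
  have := EE_full (p := p) (2*m) (by omega) (by omega)
  rw [EE_add] at this
  linear_combination this

lemma DD_P2 (n : ℕ) (hn : p = 2*n+1) (hp : 3 < p) : DD n ((p : ZMod (p^3))^2) = (n.factorial : ZMod (p^3))^3 := by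
  have h := prod_one_add_sq (-(p : ZMod (p^3))^2) (by linear_combination (p : ZMod (p^3)) * P3_zero (p := p))
    (fun i => (((i+1 : ℕ) : ZMod (p^3))⁻¹)^2) n
  have h2 := EE_full n hn hp
  unfold EE at h2
  have h3 : ∏ i ∈ range n, (1 + -(p : ZMod (p^3))^2 * (((i+1 : ℕ) : ZMod (p^3))⁻¹)^2) = 1 := by
    rw [h]; linear_combination -h2
  have e : (n.factorial : ZMod (p^3)) = ∏ i ∈ range n, ((i+1 : ℕ) : ZMod (p^3)) := by
    rw [← prod_range_add_one_eq_factorial]; push_cast; rfl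
  rw [← mul_one ((n.factorial : ZMod (p^3))^3), ← h3, e, ← prod_pow, ← prod_mul_distrib]
  unfold DD
  apply prod_congr rfl; intro i hi; simp at hi
  have z := zinv (p := p) (r := 3) (i+1) (fun hd => by have := Nat.le_of_dvd (by omega) hd; omega)
  unfold bb
  generalize (((i+1 : ℕ) : ZMod (p^3))⁻¹) = w at *
  push_cast at *
  linear_combination ((p : ZMod (p^3))^2 * ((i : ZMod (p^3))+1) * (1 + (i+1)*w)) * z

lemma wilson4 (n : ℕ) (hn : p = 2*n+1) : (n.factorial : ZMod p)^4 = 1 := by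
  have w := ZMod.wilsons_lemma p
  rw [show p - 1 = n + n by omega, ← prod_range_add_one_eq_factorial, prod_range_add,
    prod_range_add_one_eq_factorial] at w
  have : ((∏ x ∈ range n, (n + x + 1) : ℕ) : ZMod p) = (-1)^n * (n.factorial : ZMod p) := by
    rw [← prod_range_reflect, ← prod_range_add_one_eq_factorial, show (-1:ZMod p)^n = ∏ j ∈ range n, (-1) by simp]
    push_cast
    rw [← prod_mul_distrib]
    apply prod_congr rfl; intro i hi; simp at hi
    have e : n + (n-1-i) + 1 + (i+1) = p := by omega
    have e2 := congrArg (Nat.cast : ℕ → ZMod p) e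
    rw [Nat.cast_add, Nat.cast_add, Nat.cast_add, ZMod.natCast_self] at e2
    push_cast at e2
    linear_combination e2
  rw [Nat.cast_mul, this] at w
  have hs : ((-1:ZMod p)^n)^2 = 1 := by rw [← pow_mul, mul_comm, pow_mul]; norm_num
  have w2 : ((n.factorial : ZMod p) * ((-1)^n * (n.factorial : ZMod p)))^2 = (-1)^2 := by rw [w]
  linear_combination w2 - (n.factorial : ZMod p)^4 * hs
end s9
end part9

section part10
open Finset Polynomial

section s10
variable {p : ℕ} [Fact p.Prime]

lemma fac_split (R : Type*) [CommRing R] (m : ℕ) : ((2*m).factorial : R) = m.factorial * ∏ i ∈ range m, ((m+1+i : ℕ) : R) := by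
  rw [← prod_range_add_one_eq_factorial, ← prod_range_add_one_eq_factorial, two_mul, prod_range_add]
  push_cast
  congr 1; apply prod_congr rfl; intros; ring

lemma unit_of_red (a : ZMod (p^3)) (h : red p a ≠ 0) : IsUnit a := by
  obtain ⟨z, rfl⟩ := ZMod.natCast_zmod_surjective a
  apply zunit
  rw [map_natCast] at h
  intro hd; exact h ((ZMod.natCast_eq_zero_iff _ _).mpr hd)

lemma QQ (m : ℕ) (hm : p = 4*m+1) (c : ZMod (p^3)) :
    2 * ∏ i ∈ range m, (((m+1+i : ℕ) : ZMod (p^3)) + c * (p:ZMod (p^3))) =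
    (∏ i ∈ range m, ((m+1+i : ℕ) : ZMod (p^3))) * (2 + 2 * c * (p:ZMod (p^3)) * dl p m + c^2 * (p:ZMod (p^3))^2 * ((dl p m)^2 + EE p m)) := by
  have h := prod_one_add_cube (c * (p:ZMod (p^3))) (by rw [mul_pow, P3_zero, mul_zero]) (cc p m) m
  have e : ∏ i ∈ range m, (((m+1+i : ℕ) : ZMod (p^3)) + c * (p:ZMod (p^3))) = (∏ i ∈ range m, ((m+1+i : ℕ) : ZMod (p^3))) * ∏ i ∈ range m, (1 + c * (p:ZMod (p^3)) * cc p m i) := by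
    rw [← prod_mul_distrib]
    apply prod_congr rfl; intro i hi; simp at hi
    linear_combination -c * (p:ZMod (p^3)) * cc_mul m i hm hi
  have s := cc_sq m hm
  rw [e]
  change _ = 2 + 2 * (c * (p:ZMod (p^3))) * dl p m + _ at h
  unfold dl at *
  linear_combination (∏ i ∈ range m, ((m+1+i : ℕ) : ZMod (p^3))) * (h - c^2 * s)

lemma case1_A (m : ℕ) (hm : p = 4*m+1) (i8 : ZMod (p^3)) (h8 : (-8)*i8 = 1) :
    IsUnit (ss i8 p 0) ∧ 3 * ss i8 p 1 + ss i8 p 0 = (p : ZMod (p^3)) ∧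
    (18 * ss i8 p 2 + 14 * ss i8 p 1 + 3 * ss i8 p 0) * ss i8 p 0 = 3 * (p : ZMod (p^3))^2 ∧
    8 * ss i8 p 0 = ((2*m).choose m : ZMod (p^3))^2 *
      (8 - 8 * (p : ZMod (p^3)) * dl p m + 4 * (p : ZMod (p^3))^2 * (dl p m)^2 + (p : ZMod (p^3))^2 * EE p m) := by
  set P := (p : ZMod (p^3)) with hP
  have hPP : P = 4*(m:ZMod (p^3))+1 := by
    have := congrArg (Nat.cast : ℕ → ZMod (p^3)) hm
    push_cast at this; exact this
  have hm0 : m ≠ 0 := by rintro rfl; exact (Fact.out : p.Prime).one_lt.ne' (by omega)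
  have hp3 : p ≠ 3 := by omega
  have hP3 : P^3 = 0 := P3_zero
  have hv := fun k => binom_van (p := p) (r := 3) (by norm_num) (2*m) (by omega) k
  have e1 : p = 2*(2*m)+1 := by omega
  have fx := FX_ss i8 h8 (2*m) hv
  have fb := FB_ss i8 h8 (2*m) hv
  have fz := FZ_ss i8 h8 (2*m) hv
  rw [← e1] at fx fb fz
  have un : IsUnit ((2*m).factorial : ZMod (p^3)) := fact_unit _ (by omega)
  have un3 : IsUnit (((2*m).factorial : ZMod (p^3))^3) := un.pow 3
  have gx := FX_R (R := ZMod (p^3)) m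
  have gb := FB_R (R := ZMod (p^3)) (2*m)
  have gz := FZ_R (R := ZMod (p^3)) m
  rw [← hPP] at gx gz
  have hPP' : 2*((2*m:ℕ):ZMod (p^3))+1 = P := by rw [hPP]; push_cast; ring
  rw [hPP', DD_P2 (2*m) e1 (by omega)] at gb
  rw [DD_P2 (2*m) e1 (by omega)] at gx
  obtain ⟨cb, hcb, rcb⟩ := exp_FB (p := p) (2*m)
  obtain ⟨cx, hcx, rcx⟩ := exp_FX (p := p) (2*m)
  obtain ⟨cz, hcz, rcz⟩ := exp_FZ (p := p) (2*m)
  rw [← hP] at hcb hcx hcz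
  rw [FB_poly_zero (2*m) e1 hp3, coeff_zero] at rcb
  have tb := red_lift cb 0 (by rw [rcb, map_zero])
  have s1 : 3 * ss i8 p 1 + ss i8 p 0 = P := by
    apply un3.mul_left_cancel
    rw [Even.neg_one_pow ⟨m, by ring⟩] at gb
    linear_combination gb - hcb - fb - tb
  have rx : 8 * red p cx = 5 * FX (2*m) (0 : ZMod p) * h2 p m := by
    rw [rcx, FX_coeff1 (2*m) e1 (by omega)]
    linear_combination - FX (2*m) (0 : ZMod p) * h2_main m hm
  have tx := red_lift (8*cx) (5 * FX (2*m) (0 : ZMod (p^3)) * EE p m) (by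
    simp only [map_mul, map_ofNat, map_FX, map_zero, red_EE m (show m < p by omega)]; exact rx)
  set A : ZMod (p^3) := ∏ i ∈ range m, ((m+1+i : ℕ) : ZMod (p^3)) with hA
  have fs := fac_split (ZMod (p^3)) m
  rw [← hA] at fs
  have hAu : IsUnit A := by rw [fs] at un; exact isUnit_of_mul_isUnit_right un
  have hmu : IsUnit (m.factorial : ZMod (p^3)) := fact_unit _ (by omega)
  have f3 : ((3*m).factorial : ZMod (p^3)) = (2*m).factorial * ((-1)^m * ∏ i ∈ range m, (((m+1+i : ℕ) : ZMod (p^3)) + (-1) * (p:ZMod (p^3)))) := by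
    rw [← prod_range_reflect (fun i => (((m+1+i : ℕ) : ZMod (p^3)) + (-1) * (p:ZMod (p^3)))), ← prod_range_add_one_eq_factorial, ← prod_range_add_one_eq_factorial,
      show 3*m = 2*m + m by ring, prod_range_add, show (-1:ZMod (p^3))^m = ∏ j ∈ range m, (-1) by simp]
    push_cast
    rw [← prod_mul_distrib]
    congr 1; apply prod_congr rfl; intro i hi; simp at hi
    have : m + 1 + (m-1-i) + i = 2*m := by omega
    have e2 := congrArg (Nat.cast : ℕ → ZMod (p^3)) this
    push_cast at e2
    rw [← hP, hPP]
    linear_combination e2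
  have q := QQ m hm (-1)
  rw [← hA, ← hP] at q
  have pr : 4 * ∏ i ∈ range m, (P^2 - 4*((i:ZMod (p^3))+1)^2) = (-1)^m * 4^m * ((m.factorial : ℕ) : ZMod (p^3))^2 * (4 - P^2 * EE p m) := by
    have u4 := zinv (p := p) (r := 3) 4 (by
      intro h
      have h2 : p ∣ 2^2 := by norm_num; exact h
      have := Nat.le_of_dvd (by norm_num) ((Fact.out : p.Prime).dvd_of_dvd_pow h2)
      omega)
    have h := prod_one_add_sq (-P^2*((4:ℕ):ZMod (p^3))⁻¹) (by linear_combination P * (((4:ℕ):ZMod (p^3))⁻¹)^2 * hP3)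
      (fun i => (((i+1 : ℕ) : ZMod (p^3))⁻¹)^2) m
    have e : ∏ i ∈ range m, (P^2 - 4*((i:ZMod (p^3))+1)^2) = (-1)^m * 4^m * ((m.factorial : ℕ) : ZMod (p^3))^2 * ∏ i ∈ range m, (1 + (-P^2*((4:ℕ):ZMod (p^3))⁻¹) * (((i+1 : ℕ) : ZMod (p^3))⁻¹)^2) := by
      rw [← prod_range_add_one_eq_factorial, Nat.cast_prod, ← prod_pow, ← mul_pow, show ((-1:ZMod (p^3))*4)^m = ∏ j ∈ range m, (-1*4) by simp, ← prod_mul_distrib, ← prod_mul_distrib]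
      apply prod_congr rfl; intro i hi; simp at hi
      have z := zinv (p := p) (r := 3) (i+1) (fun hd => by have := Nat.le_of_dvd (by omega) hd; omega)
      generalize (((i+1 : ℕ) : ZMod (p^3))⁻¹) = w at *
      generalize ((4 : ℕ) : ZMod (p^3))⁻¹ = w4 at *
      push_cast at *
      linear_combination -P^2 * u4 - P^2 * (4*w4) * (1+((i:ZMod (p^3))+1)*w) * z
    rw [e, h]
    unfold EE
    generalize ((4 : ℕ) : ZMod (p^3))⁻¹ = w4 at *
    push_cast at *
    linear_combination -(-1)^m * 4^m * ((m.factorial : ℕ) : ZMod (p^3))^2 * P^2 * (∑ i ∈ range m, (((i+1 : ZMod (p^3)))⁻¹)^2) * u4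
  have ch : ((2*m).choose m : ZMod (p^3)) * m.factorial * m.factorial = (2*m).factorial := by
    have := Nat.choose_mul_factorial_mul_factorial (show m ≤ 2*m by omega)
    rw [show 2*m-m = m by omega] at this
    have e2 := congrArg (Nat.cast : ℕ → ZMod (p^3)) this
    push_cast at e2; exact e2
  set D := dl p m with hD
  set E := EE p m with hE
  set Ch := ((2*m).choose m : ZMod (p^3)) with hCh
  set f := ((m.factorial : ℕ) : ZMod (p^3)) with hf
  set g := (((2*m).factorial : ℕ) : ZMod (p^3)) with hg
  set S := ss i8 p 0 with hS
  have us : IsUnit ((-1:ZMod (p^3))^m) := (isUnit_one.neg).pow _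
  have u2 : IsUnit (2:ZMod (p^3)) := by
    have := zunit (p := p) (r := 3) 2 (by
      intro h
      have := Nat.le_of_dvd (by norm_num) h
      omega)
    push_cast at this
    exact this
  have u4 : IsUnit ((4:ZMod (p^3))^m) := by
    have := (u2.mul u2).pow m
    norm_num at this
    exact this
  have hAf : A = Ch * f := by
    apply hmu.mul_left_cancel
    linear_combination -ch - fs
  have x1 : 8 * FX (2*m) (P^2) = g^3 * (S * (8 + 5*P^2*E)) := by
    linear_combination 8 * hcx + tx + (8 + 5*P^2*E) * fx
  have x2 : S * (8 + 5*P^2*E) * (4 - P^2*E) = Ch^2 * (16 * (2 - 2*P*D + P^2*(D^2+E))) := by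
    apply (((un3.mul (us.mul u4)).mul (hmu.pow 4))).mul_left_cancel
    have x3 : (g^3 * (S * (8 + 5*P^2*E))) * (f * ((-1)^m * 4^m * f^2 * (4 - P^2 * E))) = 16 * 4^m * ((-1)^m * g * (A * (2 - 2*P*D+P^2*(D^2+E)))) * g^3 := by
      rw [← x1, ← pr]
      linear_combination 32 * gx + 32 * 4^m * g^3 * f3 + 16 * 4^m * (-1)^m * g^4 * q
    rw [hAf, ← ch] at x3
    rw [← ch]
    linear_combination f * x3
  have x4 : P^2 * S = P^2 * Ch^2 := by
    apply (u2.pow 5).mul_left_cancel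
    linear_combination P^2 * x2 + (-12 * P * E * S + 5 * P^3*E^2*S  + Ch^2 * (-32*D + 16*P*(D^2+E))) * hP3
  have x5 : 8 * S = Ch^2 * (8 - 8 * P * D + 4 * P^2 * D^2 + P^2 * E) := by
    apply (u2.pow 2).mul_left_cancel
    linear_combination x2 - 12 * E * x4 + 5 * P * E^2 * S * hP3
  have hm4 : 4*(m : ZMod p)+1 = 0 := by
    have := congrArg (Nat.cast : ℕ → ZMod p) hm
    rw [ZMod.natCast_self] at this
    push_cast at this; exact this.symm
  have hz0 := FZ_R (R := ZMod p) m
  rw [hm4, zero_pow two_ne_zero] at hz0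
  have xz := XZ_coeff (2*m) e1 hp3 hz0
  rw [← rcz] at xz
  have w4 := wilson4 (p := p) (2*m) e1
  have e : red p (FX (2*m) 0) = red p (g^3 * S) := by rw [fx]
  rw [map_FX, map_zero] at e
  rw [e] at xz
  have rg : red p g = ((2*m).factorial : ZMod p) := by rw [hg, map_natCast]
  have uS : red p S ≠ 0 := by
    intro h0
    rw [map_mul, h0] at xz
    have hG : ((2*m).factorial : ZMod p) ≠ 0 := by
      intro h; rw [h] at w4; norm_num at w4
    have h3 := three_ne (p := p) hp3
    have : (3:ZMod p) * ((2*m).factorial : ZMod p)^2 = 0 := by linear_combination xz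
    exact mul_ne_zero h3 (pow_ne_zero 2 hG) this
  have tz := red_lift (S * cz) (-3 * g^3) (by
    simp only [map_mul, map_pow, map_neg, map_ofNat, rg] at xz ⊢
    generalize ((2*m).factorial : ZMod p) = G at *
    linear_combination G * xz - (red p S * red p cz)*w4)
  refine ⟨unit_of_red _ uS, s1, ?_, x5⟩
  apply un3.mul_left_cancel
  linear_combination -S * hcz + S * gz - tz - S * fz
end s10
end part10

section part11
open Finset

section s11
variable {p : ℕ} [Fact p.Prime]

def tm (a : ZMod p) : ZMod (p^3) := (a.val : ZMod (p^3))^(p^2)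

lemma red_natCast_val (a : ZMod p) : red p ((a.val : ℕ) : ZMod (p^3)) = a := by
  rw [map_natCast, ZMod.natCast_zmod_val]

lemma dvd_of_red (x : ZMod (p^3)) (h : red p x = 0) : (p : ZMod (p^3)) ∣ x := by
  obtain ⟨z, rfl⟩ := ZMod.natCast_zmod_surjective x
  rw [map_natCast, ZMod.natCast_eq_zero_iff] at h
  obtain ⟨c, rfl⟩ := h
  exact ⟨c, by push_cast; rfl⟩

lemma pow_eq_of_red (x y : ZMod (p^3)) (h : red p x = red p y) : x^(p^2) = y^(p^2) := by
  have h1 := dvd_sub_pow_of_dvd_sub (dvd_of_red (x - y) (by rw [map_sub, h, sub_self])) 2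
  rw [show (p : ZMod (p^3))^(2+1) = 0 from P3_zero, zero_dvd_iff] at h1
  exact sub_eq_zero.mp h1

lemma tm_red (x : ZMod (p^3)) : tm (red p x) = x^(p^2) := by
  unfold tm
  apply pow_eq_of_red
  rw [red_natCast_val]

lemma red_tm (a : ZMod p) : red p (tm a) = a := by
  unfold tm; rw [map_pow, red_natCast_val, ZMod.pow_card_pow]

lemma tm_mul (a b : ZMod p) : tm (a*b) = tm a * tm b := by
  have := tm_red (p := p) ((a.val : ZMod (p^3)) * b.val)
  rw [map_mul, red_natCast_val, red_natCast_val, mul_pow] at this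
  exact this

lemma tm_one : tm (1 : ZMod p) = 1 := by
  have := tm_red (p := p) 1
  rw [map_one, one_pow] at this; exact this

lemma tm_zero : tm (0 : ZMod p) = 0 := by
  have := tm_red (p := p) 0
  rw [map_zero, zero_pow (pow_ne_zero 2 (Fact.out : p.Prime).ne_zero)] at this; exact this

lemma tm_neg_one (hp : p ≠ 2) : tm (-1 : ZMod p) = -1 := by
  have := tm_red (p := p) (-1)
  rw [map_neg, map_one, Odd.neg_one_pow (((Fact.out : p.Prime).odd_of_ne_two hp).pow)] at this; exact this

lemma tm_pow (a : ZMod p) (k : ℕ) : tm (a^k) = tm a ^ k := by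
  induction k with
  | zero => simp [tm_one]
  | succ k ih => rw [pow_succ a, pow_succ (tm a), tm_mul, ih]

lemma tm_card (a : ZMod p) (h : a ≠ 0) : tm a ^ (p-1) = 1 := by
  rw [← tm_pow, ZMod.pow_card_sub_one_eq_one h, tm_one]

lemma exists_gen : ∃ g : (ZMod p)ˣ, (∀ x, x ∈ Subgroup.zpowers g) ∧ orderOf g = p - 1 := by
  obtain ⟨g, hg⟩ := IsCyclic.exists_generator (α := (ZMod p)ˣ)
  refine ⟨g, hg, ?_⟩
  rw [orderOf_eq_card_of_forall_mem_zpowers hg, Nat.card_eq_fintype_card, ZMod.card_units]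

lemma tm_sum (j : ℕ) (hj : 0 < j) : ∑ t : ZMod p, tm t ^ j = if (p-1) ∣ j then (p : ZMod (p^3)) - 1 else 0 := by
  split_ifs with h
  · obtain ⟨c, rfl⟩ := h
    rw [← sum_erase_add _ _ (mem_univ (0 : ZMod p)), tm_zero, zero_pow hj.ne', add_zero]
    rw [sum_congr rfl (g := fun _ => (1 : ZMod (p^3)))]
    · rw [sum_const, card_erase_of_mem (mem_univ _), card_univ, ZMod.card, nsmul_eq_mul, mul_one,
        Nat.cast_sub (Fact.out : p.Prime).one_le, Nat.cast_one]
    · intro t ht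
      rw [pow_mul, tm_card t (ne_of_mem_erase ht), one_pow]
  · obtain ⟨g, hg, ho⟩ := exists_gen (p := p)
    have h1 : tm (g : ZMod p) ^ j * ∑ t : ZMod p, tm t ^ j = ∑ t : ZMod p, tm t ^ j := by
      rw [mul_sum]
      simp only [← mul_pow, ← tm_mul]
      exact Fintype.sum_equiv (Units.mulLeft g) _ _ (fun x => by simp)
    have hu : IsUnit (tm (g : ZMod p) ^ j - 1) := by
      apply unit_of_red
      rw [map_sub, map_pow, red_tm, map_one]
      intro h0
      apply h
      rw [← ho]
      apply orderOf_dvd_of_pow_eq_one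
      ext; push_cast; linear_combination h0
    apply hu.mul_left_cancel
    linear_combination h1

lemma tm_one_sub (t : ZMod p) : tm (1 - t) = (1 - tm t)^(p^2) := by
  rw [← tm_red, map_sub, map_one, red_tm]

lemma tm_bin (j N : ℕ) (hj : 0 < j) : ∑ t : ZMod p, tm t ^ j * (1 - tm t)^N =
    ((p : ZMod (p^3)) - 1) * ∑ k ∈ (range (N+1)).filter (fun k => (p-1) ∣ (j + k)), (-1)^k * (N.choose k : ZMod (p^3)) := by
  have : ∀ t : ZMod p, tm t ^ j * (1 - tm t)^N = ∑ k ∈ range (N+1), (-1)^k * (N.choose k : ZMod (p^3)) * tm t ^ (j+k) := by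
    intro t
    rw [show 1 - tm t = -tm t + 1 by ring, add_pow, mul_sum]
    apply sum_congr rfl; intro k _
    rw [neg_pow, pow_add]; simp; ring
  simp only [this]
  rw [sum_comm, sum_filter, mul_sum]
  apply sum_congr rfl; intro k _
  rw [← mul_sum, tm_sum _ (by omega)]
  split_ifs <;> ring

lemma filt1 (m : ℕ) (hm : 0 < m) : (range (2*m+1)).filter (fun k => 4*m ∣ (3*m + k)) = {m} := by
  ext k; simp only [mem_filter, mem_range, mem_singleton]
  constructor
  · rintro ⟨h, c, hc⟩
    have : c = 1 := by
      have h1 : 0 < c := by by_contra h; have : c = 0 := by omega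
                            subst this; omega
      have h2 : c < 2 := by by_contra h; have : 4*m*2 ≤ 4*m*c := Nat.mul_le_mul_left _ (by omega)
                            omega
      omega
    subst this; omega
  · rintro rfl; exact ⟨by omega, 1, by omega⟩

lemma filt2 (m : ℕ) (hm : 0 < m) : (range (6*m+1)).filter (fun k => 4*m ∣ (3*m + k)) = {m, 5*m} := by
  ext k; simp only [mem_filter, mem_range, mem_singleton, mem_insert]
  constructor
  · rintro ⟨h, c, hc⟩
    have h1 : 0 < c := by by_contra h; have : c = 0 := by omega
                          subst this; omega
    have h2 : c < 3 := by by_contra h; have : 4*m*3 ≤ 4*m*c := Nat.mul_le_mul_left _ (by omega)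
                          omega
    interval_cases c <;> omega
  · rintro (rfl | rfl)
    · exact ⟨by omega, 1, by omega⟩
    · exact ⟨by omega, 2, by omega⟩

lemma filt3 (m : ℕ) (hm : 0 < m) : (range (10*m+1)).filter (fun k => 4*m ∣ (3*m + k)) = {m, 5*m, 9*m} := by
  ext k; simp only [mem_filter, mem_range, mem_singleton, mem_insert]
  constructor
  · rintro ⟨h, c, hc⟩
    have h1 : 0 < c := by by_contra h; have : c = 0 := by omega
                          subst this; omega
    have h2 : c < 4 := by by_contra h; have : 4*m*4 ≤ 4*m*c := Nat.mul_le_mul_left _ (by omega)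
                          omega
    interval_cases c <;> omega
  · rintro (rfl | rfl | rfl)
    · exact ⟨by omega, 1, by omega⟩
    · exact ⟨by omega, 2, by omega⟩
    · exact ⟨by omega, 3, by omega⟩

lemma tm_quad (m : ℕ) (hm : p = 4*m+1) (t : ZMod p) :
    8 * tm (1-t)^(2*m) = 15 * (1 - tm t)^(2*m) - 10 * (1 - tm t)^(6*m) + 3 * (1 - tm t)^(10*m) := by
  have hm0 : m ≠ 0 := by rintro rfl; exact (Fact.out : p.Prime).one_lt.ne' (by omega)
  by_cases ht : t = 1
  · subst ht
    rw [sub_self, tm_one, tm_zero, sub_self, zero_pow (by omega), zero_pow (by omega), zero_pow (by omega)]; ring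
  · set y := 1 - tm t with hy
    set e := tm (1-t)^(2*m) with he
    have hne : 1 - t ≠ 0 := sub_ne_zero.mpr (Ne.symm ht)
    have e2 : e^2 = 1 := by
      rw [he, ← pow_mul, show 2*m*2 = p-1 by omega, tm_card _ hne]
    have hr : red p (e * y^(2*m) - 1) = 0 := by
      rw [he, hy]
      simp only [map_sub, map_mul, map_pow, red_tm, map_one]
      rw [← pow_add, show 2*m+2*m = p-1 by omega, ZMod.pow_card_sub_one_eq_one hne, sub_self]
    obtain ⟨c, hc⟩ := dvd_of_red _ hr
    have h3 : (e * y^(2*m) - 1)^3 = 0 := by rw [hc, mul_pow, P3_zero, zero_mul]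
    rw [show 6*m = 2*m*3 by ring, show 10*m = 2*m*5 by ring, pow_mul y (2*m) 3, pow_mul y (2*m) 5]
    generalize y^(2*m) = w at *
    clear_value e
    linear_combination (-e * (3 * e^2*w^2 + 9 * e * w + 8)) * h3 + (3*w^5*(e^4+e^2+1) - 10*w^3*(e^2+1) + 15*w) * e2

lemma alpha_bin (m : ℕ) (hm : p = 4*m+1) :
    8 * ∑ t : ZMod p, tm t ^ (3*m) * tm (1-t)^(2*m) = ((p : ZMod (p^3)) - 1) * (-1)^m *
      (15 * ((2*m).choose m : ZMod (p^3)) - 20 * ((6*m).choose m : ZMod (p^3)) + 6 * ((10*m).choose m : ZMod (p^3))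
        + 3 * ((10*m).choose (5*m) : ZMod (p^3))) := by
  have hm0 : 0 < m := by
    rcases Nat.eq_zero_or_pos m with rfl | h
    · exact absurd (show p = 1 by omega) (Fact.out : p.Prime).one_lt.ne'
    · exact h
  have h1 := tm_bin (p := p) (3*m) (2*m) (by omega)
  have h2 := tm_bin (p := p) (3*m) (6*m) (by omega)
  have h3 := tm_bin (p := p) (3*m) (10*m) (by omega)
  rw [show p - 1 = 4*m by omega] at h1 h2 h3
  rw [filt1 m hm0, sum_singleton] at h1
  rw [filt2 m hm0, sum_pair (by omega)] at h2
  rw [filt3 m hm0, sum_insert (by simp; omega), sum_pair (by omega)] at h3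
  have s5 : (-1 : ZMod (p^3))^(5*m) = (-1)^m := by
    rw [show 5*m = m + 2*(2*m) by ring, pow_add, pow_mul]; simp
  have s9 : (-1 : ZMod (p^3))^(9*m) = (-1)^m := by
    rw [show 9*m = m + 2*(4*m) by ring, pow_add, pow_mul]; simp
  rw [s5, Nat.choose_symm_of_eq_add (show 6*m = 5*m + m by ring)] at h2
  rw [s5, s9, Nat.choose_symm_of_eq_add (show 10*m = 9*m + m by ring)] at h3
  have e : 8 * ∑ t : ZMod p, tm t ^ (3*m) * tm (1-t)^(2*m) =
     15 * ∑ t : ZMod p, tm t ^ (3*m) * (1-tm t)^(2*m) - 10 * ∑ t : ZMod p, tm t ^ (3*m) * (1-tm t)^(6*m) + 3 * ∑ t : ZMod p, tm t ^ (3*m) * (1-tm t)^(10*m) := by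
    simp only [mul_sum]
    rw [← sum_sub_distrib, ← sum_add_distrib]
    apply sum_congr rfl; intro t _
    linear_combination tm t ^ (3*m) * tm_quad m hm t
  rw [e, h1, h2, h3]; ring
end s11
end part11

section part12
open Finset

section s12
variable {p : ℕ} [Fact p.Prime]

lemma choose_asc (R : Type*) [CommRing R] (a k : ℕ) : ((a+k).choose k : R) * (k.factorial : R) = ∏ i ∈ range k, ((a+1+i : ℕ) : R) := by
  have h := Nat.ascFactorial_eq_factorial_mul_choose a k
  rw [Nat.ascFactorial_eq_prod_range] at h
  have h2 := congrArg (Nat.cast : ℕ → R) h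
  rw [Nat.cast_prod, Nat.cast_mul] at h2
  rw [h2]; ring

lemma prod_shift {R : Type*} [CommRing R] (f : ℕ → R) (k : ℕ) : (∏ i ∈ range k, f i) * f k = (∏ i ∈ range k, f (i+1)) * f 0 := by
  rw [← prod_range_succ, prod_range_succ']

lemma ch_f (m : ℕ) (hm : p = 4*m+1) : (∏ i ∈ range m, ((m+1+i : ℕ) : ZMod (p^3))) = ((2*m).choose m : ZMod (p^3)) * (m.factorial : ZMod (p^3)) := by
  rw [two_mul, choose_asc]

lemma PP4 (m : ℕ) (hm : p = 4*m+1) : (p : ZMod (p^3)) = 4*(m:ZMod (p^3))+1 := by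
  have := congrArg (Nat.cast : ℕ → ZMod (p^3)) hm
  push_cast at this; exact this

lemma b1 (m : ℕ) (hm : p = 4*m+1) : 4 * ((6*m).choose m : ZMod (p^3)) * (3 * (p : ZMod (p^3)) - 1) =
    (5 * (p : ZMod (p^3)) - 1) * ((2*m).choose m : ZMod (p^3)) * (2 + 2 * (p : ZMod (p^3)) * dl p m + (p:ZMod (p^3))^2 * ((dl p m)^2 + EE p m)) := by
  have h1 := choose_asc (ZMod (p^3)) (5*m) m
  have h2 := prod_shift (fun i => ((5*m+1+i : ℕ) : ZMod (p^3))) m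
  have q := QQ m hm 1
  have e := PP4 m hm
  rw [ch_f m hm] at q
  have h3 : ∏ i ∈ range m, ((5*m+1+(i+1) : ℕ) : ZMod (p^3)) = ∏ i ∈ range m, (((m+1+i : ℕ) : ZMod (p^3)) + 1 * (p : ZMod (p^3))) := by
    apply prod_congr rfl; intro i _; rw [e]; push_cast; ring
  have hmu : IsUnit (m.factorial : ZMod (p^3)) := fact_unit _ (by omega)
  apply hmu.mul_left_cancel
  rw [h3, ← h1, show 5*m+m = 6*m by ring] at h2
  push_cast at h2 q
  generalize ∏ i ∈ range m, ((m : ZMod (p^3)) + 1 + i + 1 * (p : ZMod (p^3))) = B at *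
  set P := (p : ZMod (p^3)) with hP
  linear_combination 8 * h2 + 4 * (5*(m : ZMod (p^3))+1) * q + (12 * ((6*m).choose m : ZMod (p^3)) * (m.factorial : ZMod (p^3)) - 5 * ((2*m).choose m : ZMod (p^3)) * (m.factorial : ZMod (p^3)) * (2 + 2 * P * dl p m + P^2 * ((dl p m)^2 + EE p m))) * e

lemma b2 (m : ℕ) (hm : p = 4*m+1) : 4 * ((10*m).choose m : ZMod (p^3)) * ((5 * (p : ZMod (p^3)) - 3) * (5 * (p : ZMod (p^3)) - 1)) =
    (9 * (p : ZMod (p^3)) - 5) * (9 * (p : ZMod (p^3)) - 1) * ((2*m).choose m : ZMod (p^3)) * (1 + 2 * (p : ZMod (p^3)) * dl p m + 2 * (p:ZMod (p^3))^2 * ((dl p m)^2 + EE p m)) := by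
  have h1 := choose_asc (ZMod (p^3)) (9*m) m
  have h2 := prod_shift (fun i => ((9*m+1+i : ℕ) : ZMod (p^3))) m
  have h2' := prod_shift (fun i => ((9*m+1+(i+1) : ℕ) : ZMod (p^3))) m
  have q := QQ m hm 2
  have e := PP4 m hm
  rw [ch_f m hm] at q
  have h3 : ∏ i ∈ range m, ((9*m+1+(i+1+1) : ℕ) : ZMod (p^3)) = ∏ i ∈ range m, (((m+1+i : ℕ) : ZMod (p^3)) + 2 * (p : ZMod (p^3))) := by
    apply prod_congr rfl; intro i _; rw [e]; push_cast; ring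
  have hmu : IsUnit (m.factorial : ZMod (p^3)) := fact_unit _ (by omega)
  have u2 : IsUnit (2:ZMod (p^3)) := by
    have := zunit (p := p) (r := 3) 2 (by
      intro h
      have := Nat.le_of_dvd (by norm_num) h
      have := (Fact.out : p.Prime).two_le
      omega)
    push_cast at this
    exact this
  apply (u2.mul hmu).mul_left_cancel
  rw [h3] at h2'
  rw [← h1, show 9*m+m = 10*m by ring] at h2
  generalize ∏ i ∈ range m, (((m+1+i : ℕ) : ZMod (p^3)) + 2 * (p : ZMod (p^3))) = B at *
  generalize ∏ i ∈ range m, ((9*m+1+(i+1) : ℕ) : ZMod (p^3)) = B' at *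
  push_cast at h2 h2'
  rw [e] at q ⊢
  generalize (m : ZMod (p^3)) = M at *
  linear_combination 32 * (10*M+2) * h2 + 32 * (9*M+1) * h2' + 16 * (9*M+1) * (9*M+2) * q + 0 * e
end s12
end part12

section part13
open Finset

section s13
variable {p : ℕ} [Fact p.Prime]

lemma b3_nat (m q : ℕ) (hm : q = 4*m+1) : (10*m).choose (5*m) * ((10*m+1)*(10*m+2)) * (∏ i ∈ range m, (q+1+i))^2
    = (2*q).choose q * (5*m+1)^2 * ∏ i ∈ range (2*m), (2*q+1+i) := by
  have h1 : (2*q).factorial * ∏ i ∈ range (2*m), (2*q+1+i) = (10*m+2).factorial := by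
    rw [← Nat.ascFactorial_eq_prod_range, Nat.factorial_mul_ascFactorial]; congr 1; omega
  have h2 : q.factorial * ∏ i ∈ range m, (q+1+i) = (5*m+1).factorial := by
    rw [← Nat.ascFactorial_eq_prod_range, Nat.factorial_mul_ascFactorial]; congr 1; omega
  have h3 := Nat.choose_mul_factorial_mul_factorial (show q ≤ 2*q by omega)
  rw [show 2*q-q = q by omega] at h3
  have h4 := Nat.choose_mul_factorial_mul_factorial (show 5*m ≤ 10*m by omega)
  rw [show 10*m-5*m = 5*m by omega] at h4
  rw [Nat.factorial_succ] at h2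
  rw [Nat.factorial_succ, Nat.factorial_succ] at h1
  have hq : 0 < q.factorial^2 := by positivity
  apply Nat.eq_of_mul_eq_mul_left hq
  generalize ∏ i ∈ range (2*m), (2*q+1+i) = A at *
  generalize ∏ i ∈ range m, (q+1+i) = B at *
  calc q.factorial^2 * ((10*m).choose (5*m) * ((10*m+1)*(10*m+2)) * B^2)
      = (10*m).choose (5*m) * ((10*m+1)*(10*m+2)) * (q.factorial * B)^2 := by ring
    _ = (5*m+1)^2 * ((10*m+1+1) * ((10*m+1) * ((10*m).choose (5*m) * (5*m).factorial * (5*m).factorial))) := by rw [h2]; ring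
    _ = _ := by rw [h4, ← h1, ← h3]; ring

lemma two_unit (hp2 : p ≠ 2) : IsUnit (2:ZMod (p^3)) := by
  have := zunit (p := p) (r := 3) 2 (by
      intro h
      have := Nat.le_of_dvd (by norm_num) h
      have := (Fact.out : p.Prime).two_le
      omega)
  push_cast at this
  exact this

lemma wolst_prod (m : ℕ) (hm : p = 4*m+1) :
    ∏ i ∈ range (4*m), ((p+1+i : ℕ) : ZMod (p^3)) = ((4*m).factorial : ZMod (p^3)) := by
  have e := PP4 m hm
  have P3 : (p:ZMod (p^3))^3 = 0 := P3_zero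
  have key : ∀ c : ZMod (p^3), ∏ i ∈ range (4*m), (c * (p:ZMod (p^3)) + 1 + (i:ZMod (p^3))) = ∏ i ∈ range (2*m), ((c * (p:ZMod (p^3)) + 1 + (i:ZMod (p^3))) * ((c+1) * (p:ZMod (p^3)) - 1 - (i:ZMod (p^3)))) := by
    intro c
    rw [prod_mul_distrib, show 4*m = 2*m + 2*m by ring, prod_range_add]
    congr 1
    rw [← prod_range_reflect]
    apply prod_congr rfl; intro i hi; simp at hi
    have : 2*m-1-i + 1 + i = 2*m := by omega
    have e2 := congrArg (Nat.cast : ℕ → ZMod (p^3)) this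
    push_cast at e2
    push_cast
    linear_combination e2 - e
  have k0 := key 0
  have k1 := key 1
  have f : ((4*m).factorial : ZMod (p^3)) = ∏ i ∈ range (4*m), (0 * (p:ZMod (p^3)) + 1 + (i:ZMod (p^3))) := by
    rw [← prod_range_add_one_eq_factorial]; push_cast
    apply prod_congr rfl; intros; ring
  rw [f, k0]
  have : ∏ i ∈ range (4*m), ((p+1+i : ℕ) : ZMod (p^3)) = ∏ i ∈ range (4*m), (1 * (p:ZMod (p^3)) + 1 + (i:ZMod (p^3))) := by
    apply prod_congr rfl; intros; push_cast; ring
  rw [this, k1]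
  have hs := prod_one_add_sq ((p:ZMod (p^3))^2) (by rw [← pow_mul]; exact pow_eq_zero_of_le (by norm_num) P3) (fun i => -2 * (((i+1:ℕ):ZMod (p^3))⁻¹)^2) (2*m)
  have hE := EE_full (p := p) (2*m) (by omega) (by have := (Fact.out : p.Prime).two_le; omega)
  rw [← mul_sum] at hs
  change _ = 1 + (p:ZMod (p^3))^2 * (-2 * EE p (2*m)) at hs
  have hs' : ∏ i ∈ range (2*m), (1 + (p:ZMod (p^3))^2 * (-2 * (((i+1:ℕ):ZMod (p^3))⁻¹)^2)) = 1 := by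
    rw [hs]; linear_combination -2 * hE
  refine Eq.trans ?_ ((congrArg (fun z => _ * z) hs').trans (mul_one _))
  beta_reduce
  rw [← prod_mul_distrib]
  clear key k0 k1 f hs hs' hE this
  apply prod_congr rfl; intro i hi; simp at hi
  have v := zinv (p := p) (r := 3) (i+1) (Nat.not_dvd_of_pos_of_lt (by omega) (by omega))
  set w := ((i+1:ℕ):ZMod (p^3))⁻¹
  push_cast at v
  clear_value w
  generalize (i:ZMod (p^3)) = I at *
  generalize (p:ZMod (p^3)) = P at *
  linear_combination 2 * (I+1) * w^2 * P3 - 2*P^2*(1+(I+1)*w) * v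

lemma wolst (m : ℕ) (hm : p = 4*m+1) : ((2*p).choose p : ZMod (p^3)) = 2 := by
  have h := choose_asc (ZMod (p^3)) p (4*m)
  rw [wolst_prod m hm] at h
  have u : IsUnit ((4*m).factorial : ZMod (p^3)) := fact_unit _ (by omega)
  have h1 : ((p+4*m).choose (4*m) : ZMod (p^3)) = 1 := by
    apply u.mul_right_cancel; rw [h, one_mul]
  have h2 := Nat.add_one_mul_choose_eq (p+4*m) (4*m)
  rw [show p+4*m+1 = 2*p by omega, show 4*m+1 = p by omega] at h2
  have h3 : (2*p).choose p = 2 * (p+4*m).choose (4*m) := by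
    apply Nat.eq_of_mul_eq_mul_right (Fact.out : p.Prime).pos
    rw [← h2]; ring
  rw [h3]; push_cast; rw [h1, mul_one]

lemma b3 (m : ℕ) (hm : p = 4*m+1) : 4 * ((10*m).choose (5*m) : ZMod (p^3)) * ((5 * (p : ZMod (p^3)) - 3) * (5 * (p : ZMod (p^3)) - 1)) =
    2 * (5 * (p : ZMod (p^3)) - 1)^2 * ((2*m).choose m : ZMod (p^3)) * (1 + 2 * (p : ZMod (p^3)) * dl p m + 2 * (p:ZMod (p^3))^2 * (dl p m)^2 + (p:ZMod (p^3))^2 * EE p m) := by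
  have n := congrArg (Nat.cast : ℕ → ZMod (p^3)) (b3_nat m p hm)
  have P3 : (p:ZMod (p^3))^3 = 0 := P3_zero
  have e := PP4 m hm
  rw [Nat.cast_mul, Nat.cast_mul, Nat.cast_mul, Nat.cast_mul, Nat.cast_mul, wolst m hm, Nat.cast_pow, Nat.cast_prod, Nat.cast_prod] at n
  have q := QQ m hm 2
  rw [ch_f m hm] at q
  set H := ∑ i ∈ range m, ((i+1:ℕ):ZMod (p^3))⁻¹ with hH
  have hmu : IsUnit (m.factorial : ZMod (p^3)) := fact_unit _ (by omega)
  have u2 := two_unit (p := p) (by omega)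
  have g : ∀ c : ZMod (p^3), 2 * ∏ i ∈ range m, (((i+1 : ℕ) : ZMod (p^3)) + c * (p:ZMod (p^3))) = (m.factorial : ZMod (p^3)) * (2 + 2 * c * (p:ZMod (p^3)) * H + c^2 * (p:ZMod (p^3))^2 * (H^2 - EE p m)) := by
    intro c
    have h := prod_one_add_cube (c * (p:ZMod (p^3))) (by rw [mul_pow, P3, mul_zero]) (fun i => ((i+1:ℕ):ZMod (p^3))⁻¹) m
    rw [← hH] at h
    change _ = 2 + 2 * (c * (p:ZMod (p^3))) * H + (c * (p:ZMod (p^3)))^2 * (H^2 - EE p m) at h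
    have e : ∏ i ∈ range m, (((i+1 : ℕ) : ZMod (p^3)) + c * (p:ZMod (p^3))) = (m.factorial : ZMod (p^3)) * ∏ i ∈ range m, (1 + c * (p:ZMod (p^3)) * ((i+1:ℕ):ZMod (p^3))⁻¹) := by
      rw [← prod_range_add_one_eq_factorial, Nat.cast_prod, ← prod_mul_distrib]
      apply prod_congr rfl; intro i hi; simp at hi
      have v := zinv (p := p) (r := 3) (i+1) (Nat.not_dvd_of_pos_of_lt (by omega) (by omega))
      linear_combination -c * (p:ZMod (p^3)) * v
    rw [e]
    linear_combination (m.factorial : ZMod (p^3)) * h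
  have g1 := g 1
  have g2 := g 2
  have r1 : ∏ i ∈ range m, ((p+1+i : ℕ) : ZMod (p^3)) = ∏ i ∈ range m, (((i+1 : ℕ) : ZMod (p^3)) + 1 * (p:ZMod (p^3))) := by
    apply prod_congr rfl; intros; push_cast; ring
  have r2 : ∏ i ∈ range (2*m), ((2*p+1+i : ℕ) : ZMod (p^3)) = (∏ i ∈ range m, (((i+1 : ℕ) : ZMod (p^3)) + 2 * (p:ZMod (p^3)))) * ∏ i ∈ range m, (((m+1+i : ℕ) : ZMod (p^3)) + 2 * (p : ZMod (p^3))) := by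
    rw [two_mul m, prod_range_add]
    congr 1 <;> (apply prod_congr rfl; intros; push_cast; ring)
  rw [r1, r2] at n
  have ub : IsUnit (∏ i ∈ range m, (((i+1 : ℕ) : ZMod (p^3)) + 1 * (p:ZMod (p^3)))) := by
    rw [← r1, ← Nat.cast_prod]
    apply zunit
    intro hd
    rw [Prime.dvd_finset_prod_iff (Fact.out : p.Prime).prime] at hd
    obtain ⟨i, hi, hd⟩ := hd
    simp at hi
    rw [add_assoc, Nat.dvd_add_right (dvd_refl p)] at hd
    have := Nat.le_of_dvd (by omega) hd
    omega
  generalize ∏ i ∈ range m, (((i+1 : ℕ) : ZMod (p^3)) + 1 * (p:ZMod (p^3))) = B at *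
  generalize ∏ i ∈ range m, (((i+1 : ℕ) : ZMod (p^3)) + 2 * (p:ZMod (p^3))) = B2 at *
  generalize ∏ i ∈ range m, (((m+1+i : ℕ) : ZMod (p^3)) + 2 * (p:ZMod (p^3))) = Q at *
  generalize (m.factorial : ZMod (p^3)) = F at *
  have hr : ∀ D E : ZMod (p^3), ∀ C, 2 * Q = C * F * (2 + 2*2*(p : ZMod (p^3))*D + 2^2*(p : ZMod (p^3))^2*(D^2+E)) → 2 * B = F * (2 + 2 * 1 * (p : ZMod (p^3)) * H + 1^2 * (p : ZMod (p^3))^2 * (H^2 - E)) →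
      2 * B2 = F * (2 + 2 * 2 * (p : ZMod (p^3)) * H + 2^2 * (p : ZMod (p^3))^2 * (H^2 - E)) → B2 * Q = B^2 * C * (1 + 2 * (p : ZMod (p^3)) * D + 2 * (p : ZMod (p^3))^2 * D^2 + (p : ZMod (p^3))^2 * E) := by
    intro D E C a1 a2 a3
    generalize (p : ZMod (p^3)) = P at *
    have s1 : B2 = F * (1 + 2 * P * H + 2*P^2*(H^2-E)) := by
      apply u2.mul_left_cancel; linear_combination a3
    have s2 : Q = C * F * (1 + 2 * P * D + 2*P^2*(D^2+E)) := by
      apply u2.mul_left_cancel; linear_combination a1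
    have s3 : B^2 = F^2 * (1 + 2 * P * H + 2*P^2*H^2 - P^2*E) := by
      apply (u2.mul u2).mul_left_cancel
      linear_combination (2*B + F * (2 + 2 * 1 * P * H + 1^2 * P^2 * (H^2 - E))) * a2 + F^2 * (4*H^3 - 4*H*E + P*(H^2-E)^2) * P3
    rw [s1, s2, s3]
    linear_combination (F^2*C*(2*H*E-2*D*E+P*(2*H^2*E-2*E*D^2-3*E^2))) * P3
  have hq := hr _ _ _ q g1 g2
  push_cast at n
  apply (ub.pow 2).mul_left_cancel
  rw [hq] at n
  generalize (m : ZMod (p^3)) = M at *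
  generalize (p : ZMod (p^3)) = P at *
  have hM : P = 4*M+1 := e
  subst hM
  linear_combination 16 * n
end s13
end part13

section part14
open Finset

section s14
variable {p : ℕ} [Fact p.Prime]

lemma alpha_C (m : ℕ) (hm : p = 4*m+1) (α : ZMod (p^3)) (hα : α = ∑ t : ZMod p, tm t^(3*m) * tm (1-t)^(2*m)) :
    16 * α * (-1)^m = -((2*m).choose m : ZMod (p^3)) * (16 - 8 * (p : ZMod (p^3)) * dl p m + 2 * (p : ZMod (p^3))^2 * (dl p m)^2 + (p : ZMod (p^3))^2 * EE p m) := by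
  have ab := alpha_bin (p := p) m hm
  rw [← hα] at ab
  have h1 := b1 m hm
  have h2 := b2 m hm
  have h3 := b3 m hm
  have P3 : (p:ZMod (p^3))^3 = 0 := P3_zero
  have p5 : 5 ≤ p := by have := (Fact.out : p.Prime).two_le; omega
  have hK : IsUnit (4 * (3 * (p:ZMod (p^3)) - 1) * ((5*(p:ZMod (p^3))-3) * (5*(p:ZMod (p^3))-1))) := by
    apply unit_of_red
    simp only [map_mul, map_sub, map_ofNat, map_natCast, map_one, CharP.cast_eq_zero, mul_zero]
    have : ((12:ℕ) : ZMod p) ≠ 0 := by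
      rw [Ne, ZMod.natCast_eq_zero_iff, show 12 = 2*2*3 by norm_num]
      intro hd
      rw [(Fact.out : p.Prime).dvd_mul, (Fact.out : p.Prime).dvd_mul] at hd
      rcases hd with (h | h) | h <;> · have := Nat.le_of_dvd (by norm_num) h; omega
    intro h; apply this; push_cast; linear_combination -h
  have hs : ((-1:ZMod (p^3))^m)^2 = 1 := by rw [← pow_mul, mul_comm, pow_mul]; simp
  apply hK.mul_left_cancel
  generalize (-1:ZMod (p^3))^m = s at *
  generalize dl p m = D at *
  generalize EE p m = E at *
  generalize ((2*m).choose m : ZMod (p^3)) = C at *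
  generalize ((6*m).choose m : ZMod (p^3)) = B1 at *
  generalize ((10*m).choose m : ZMod (p^3)) = B2 at *
  generalize ((10*m).choose (5*m) : ZMod (p^3)) = B3 at *
  generalize (p:ZMod (p^3)) = P at *
  linear_combination (4 * (3 * P - 1) * ((5*P-3) * (5*P-1))) * (2 * s * ab + 2*(P-1)*(15*C-20*B1+6*B2+3*B3) * hs)
    + 2*(P-1)*(-20 * ((5*P-3) * (5*P-1)) * h1 + 6*(3*P-1)*h2 + 3 * (3*P-1) * h3)
    + C * (2816*P - 1792 - 2368*P^2*D + 2816*P*D - 960*D + 2632*P^3*D^2 - 4184*P^2*D^2 + 2040*P*D^2 + 1732*P^3*E - 2924*P^2*E + 1564*P*E - 360*D^2 - 308*E) * P3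

lemma alpha_sq (m : ℕ) (hm : p = 4*m+1) (α : ZMod (p^3)) (hα : α = ∑ t : ZMod p, tm t^(3*m) * tm (1-t)^(2*m))
    (i8 : ZMod (p^3)) (h8 : (-8)*i8 = 1) : α^2 = ss i8 p 0 := by
  have h1 := alpha_C m hm α hα
  obtain ⟨-, -, -, h2⟩ := case1_A m hm i8 h8
  have P3 : (p:ZMod (p^3))^3 = 0 := P3_zero
  have hs : ((-1:ZMod (p^3))^m)^2 = 1 := by rw [← pow_mul, mul_comm, pow_mul]; simp
  have u2 := two_unit (p := p) (by omega)
  apply (u2.pow 8).mul_left_cancel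
  generalize (-1:ZMod (p^3))^m = s at *
  generalize dl p m = D at *
  generalize EE p m = E at *
  generalize ((2*m).choose m : ZMod (p^3)) = C at *
  generalize (p:ZMod (p^3)) = P at *
  generalize ss i8 p 0 = S at *
  linear_combination (-256*α^2) * hs + (16*α*s - C * (16 - 8 * P * D + 2 * P^2 * D^2 + P^2 * E)) * h1 - 32 * h2
    + C^2 * (-16*D*(2*D^2+E) + P * (2*D^2+E)^2) * P3
end s14
end part14

section part15
open Finset

section s15
variable {p : ℕ} [Fact p.Prime]

lemma I_sq : (⟨0,1⟩ : GaussianInt)^2 = -1 := by decide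

lemma I_prim : IsPrimitiveRoot (⟨0,1⟩ : GaussianInt) 4 := by
  apply IsPrimitiveRoot.mk_of_lt _ (by norm_num)
  · decide
  · intro l h1 h2
    interval_cases l <;> decide

lemma exists_char (m : ℕ) (hm : p = 4*m+1) : ∃ (g : (ZMod p)ˣ) (χ : MulChar (ZMod p) GaussianInt),
    (∀ x, x ∈ Subgroup.zpowers g) ∧ orderOf g = p - 1 ∧ χ g = ⟨0,1⟩ := by
  obtain ⟨g, hg, ho⟩ := exists_gen (p := p)
  let ζ : GaussianIntˣ := ⟨⟨0,1⟩, ⟨0,-1⟩, by decide, by decide⟩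
  have hζ : ζ ∈ rootsOfUnity (Fintype.card (ZMod p)ˣ) GaussianInt := by
    rw [mem_rootsOfUnity, ZMod.card_units, show p - 1 = 4*m by omega, pow_mul]
    have : ζ^4 = 1 := by
      ext1
      push_cast
      decide
    rw [this, one_pow]
  exact ⟨g, MulChar.ofRootOfUnity hζ hg, hg, ho, MulChar.ofRootOfUnity_spec hζ hg⟩

lemma J_norm (χ : MulChar (ZMod p) GaussianInt) (g : (ZMod p)ˣ) (hχ : χ g = ⟨0,1⟩) :
    jacobiSum χ (χ^2) * star (jacobiSum χ (χ^2)) = (p : GaussianInt) := by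
  apply GaussianInt.toComplex_injective
  rw [map_mul, GaussianInt.toComplex_star]
  set F := GaussianInt.toComplex
  have e2 : ∀ ψ : MulChar (ZMod p) GaussianInt, (ψ.ringHomComp F)⁻¹ = (ψ.ringHomComp F).ringHomComp (starRingEnd ℂ) := by
    intro ψ
    rw [← MulChar.star_eq_inv]; rfl
  have hI : F ⟨0,1⟩ = Complex.I := by simp [F, GaussianInt.toComplex_def']
  have c1 : (χ.ringHomComp F) g = Complex.I := by
    rw [MulChar.ringHomComp_apply, hχ, hI]
  have c2 : ((χ^2).ringHomComp F) g = -1 := by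
    rw [MulChar.ringHomComp_apply, MulChar.pow_apply_coe, hχ, map_pow, hI, Complex.I_sq]
  have key := jacobiSum_mul_jacobiSum_inv (F := ZMod p) (F' := ℂ) (χ := χ.ringHomComp F) (φ := (χ^2).ringHomComp F)
    (by rw [ringChar.eq_zero, ZMod.ringChar_zmod_n]; exact (Fact.out : p.Prime).ne_zero.symm)
    (by
      intro h; rw [h, MulChar.one_apply_coe] at c1
      have := congrArg Complex.re c1; simp at this)
    (by
      intro h; rw [h, MulChar.one_apply_coe] at c2; norm_num at c2)
    (by
      intro h
      have := congrArg (fun ψ => ψ (g : ZMod p)) h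
      simp only [MulChar.mul_apply, c1, c2, MulChar.one_apply_coe] at this
      have := congrArg Complex.re this; simp at this)
  rw [e2, e2, jacobiSum_ringHomComp, jacobiSum_ringHomComp, jacobiSum_ringHomComp, ZMod.card] at key
  rw [key, map_natCast]

lemma J_parity (m : ℕ) (hm : p = 4*m+1) (χ : MulChar (ZMod p) GaussianInt) (g : (ZMod p)ˣ) (hg : ∀ x, x ∈ Subgroup.zpowers g) (hχ : χ g = ⟨0,1⟩) :
    Odd (jacobiSum χ (χ^2)).re ∧ Even (jacobiSum χ (χ^2)).im := by
  have h4 : χ^4 = 1 := by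
    rw [MulChar.eq_iff hg, MulChar.pow_apply_coe, hχ, MulChar.one_apply_coe]; decide
  obtain ⟨z, -, hz⟩ := exists_jacobiSum_eq_neg_one_add (F := ZMod p) (n := 4) (by norm_num) (χ := χ) (ψ := χ^2) (μ := ⟨0,1⟩) h4
    (by rw [← pow_mul, mul_comm, pow_mul, h4, one_pow]) (by rw [ZMod.card]; exact ⟨m, by omega⟩) I_prim
  have e : ((⟨0,1⟩ : GaussianInt) - 1)^2 = ⟨0,-2⟩ := by decide
  rw [hz, e]
  constructor
  · exact ⟨z.im - 1, by simp; ring⟩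
  · exact ⟨-z.re, by simp; ring⟩

lemma exists_ab (m : ℕ) (hm : p = 4*m+1) (α : ZMod (p^3)) (hα : α = ∑ t : ZMod p, tm t^(3*m) * tm (1-t)^(2*m)) :
    ∃ a b : ℤ, Odd a ∧ Even b ∧ a^2+b^2 = p ∧ ∃ β : ZMod (p^3), α * β = (p : ZMod (p^3)) ∧ α + β = 2 * (a : ZMod (p^3)) := by
  obtain ⟨g, χ, hg, ho, hχ⟩ := exists_char (p := p) m hm
  have hm0 : m ≠ 0 := by rintro rfl; exact (Fact.out : p.Prime).one_lt.ne' (by omega)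
  obtain ⟨pa, pb⟩ := J_parity m hm χ g hg hχ
  have hn := J_norm χ g hχ
  set J := jacobiSum χ (χ^2) with hJ
  have g2 : (g : ZMod p)^(2*m) = -1 := by
    have h1 : (g : ZMod p)^(4*m) = 1 := by
      have := ZMod.pow_card_sub_one_eq_one (p := p) g.ne_zero
      rwa [show p - 1 = 4*m by omega] at this
    have h2 : (g : ZMod p)^(2*m) ≠ 1 := by
      intro h
      have : g^(2*m) = 1 := by ext; push_cast; exact h
      have := orderOf_dvd_of_pow_eq_one this
      rw [ho] at this
      have := Nat.le_of_dvd (by omega) this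
      omega
    have h3 : ((g : ZMod p)^(2*m) - 1) * ((g : ZMod p)^(2*m) + 1) = 0 := by
      have : ((g : ZMod p)^(2*m))^2 = 1 := by rw [← pow_mul, ← h1]; congr 1; ring
      linear_combination this
    rcases mul_eq_zero.mp h3 with h | h
    · exact absurd (sub_eq_zero.mp h) h2
    · exact eq_neg_of_add_eq_zero_left h
  have t2 : tm (g : ZMod p)^(2*m) = -1 := by rw [← tm_pow, g2, tm_neg_one (by omega)]
  set j := tm (g : ZMod p)^(3*m) with hj
  have hjj : j * j = ((-1 : ℤ) : ZMod (p^3)) := by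
    rw [hj, ← pow_add, show 3*m+3*m = 2*m*3 by ring, pow_mul, t2]; push_cast; ring
  let φ : GaussianInt →+* ZMod (p^3) := Zsqrtd.lift ⟨j, hjj⟩
  have φd : ∀ z : GaussianInt, φ z = z.re + z.im * j := fun z => rfl
  have c1 : ∀ t : ZMod p, φ (χ t) = tm t^(3*m) := by
    intro t
    by_cases ht : t = 0
    · rw [ht, MulChar.map_zero, map_zero, tm_zero, zero_pow (by omega)]
    · obtain ⟨k, hk⟩ : ∃ k : ℕ, g^k = Units.mk0 t ht := by
        have := hg (Units.mk0 t ht)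
        rw [← mem_powers_iff_mem_zpowers] at this
        exact this
      have hk' : t = (g : ZMod p)^k := by
        have := congrArg (Units.val) hk
        push_cast at this
        exact this.symm
      rw [hk', map_pow, map_pow, hχ, tm_pow, φd]
      simp only [Int.cast_zero, Int.cast_one, zero_add, one_mul]
      rw [hj, ← pow_mul, ← pow_mul, mul_comm]
  have c2 : ∀ t : ZMod p, φ ((χ^2) t) = tm t^(2*m) := by
    intro t
    rw [MulChar.pow_apply' _ (by norm_num), map_pow, c1, ← pow_mul]
    by_cases ht : t = 0
    · rw [ht, tm_zero, zero_pow (by omega), zero_pow (by omega)]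
    · have := tm_card t ht
      rw [show p - 1 = 4*m by omega] at this
      rw [show 3*m*2 = 4*m+2*m by ring, pow_add, this, one_mul]
  have hφJ : φ J = α := by
    rw [hα, hJ, jacobiSum, map_sum]
    apply sum_congr rfl; intro t _
    rw [map_mul, c1, c2]
  refine ⟨J.re, J.im, pa, pb, ?_, φ (star J), ?_, ?_⟩
  · have := congrArg Zsqrtd.re hn
    simp at this
    rw [← this]; ring
  · rw [← hφJ, ← map_mul, hn, map_natCast]
  · rw [← hφJ, φd, φd]; simp; ring

lemma sq_unique (q : ℕ) (hq : q.Prime) (a b x z : ℤ) (ha : Odd a) (hb : Even b) (hx : Odd x) (hz : Even z) (h1 : a^2+b^2 = q) (h2 : x^2+z^2 = q) :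
    a^2 = x^2 := by
  have hqp : (0:ℤ) < q := by exact_mod_cast hq.pos
  have hqo : Odd (q:ℤ) := by rw [← h1]; exact ha.pow.add_even (by rw [pow_two]; exact hb.mul_left b)
  have hd : (q:ℤ) ∣ (a*z-b*x)*(a*z+b*x) := ⟨a^2-x^2, by linear_combination a^2 * h2 - x^2 * h1⟩
  have key : ∀ b : ℤ, Even b → a^2+b^2 = q → (q:ℤ) ∣ a*z-b*x → a^2 = x^2 := by
    intro b hb h1 hd
    obtain ⟨c, hc⟩ := hd
    have e1 : (a*z-b*x)^2 + (a*x+b*z)^2 = q^2 := by linear_combination (x^2+z^2) * h1 + (q:ℤ) * h2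
    have hev : Even (a*z-b*x) := (hz.mul_left a).sub (hb.mul_right x)
    have hc2 : Even c := by
      rw [hc] at hev
      rcases Int.even_mul.mp hev with h | h
      · exact absurd hqo (Int.not_odd_iff_even.mpr h)
      · exact h
    obtain ⟨d, rfl⟩ := hc2
    have hd0 : d = 0 := by
      by_contra hd
      have : 1 ≤ d^2 := by have := sq_pos_of_ne_zero hd; omega
      rw [hc] at e1
      nlinarith [sq_nonneg (a*x+b*z), mul_pos hqp hqp]
    have e2 : a*z = b*x := by rw [hd0] at hc; linear_combination hc
    have e3 : (q:ℤ) * (a^2-x^2) = 0 := by linear_combination (a*z+b*x)*e2 - a^2 * h2 + x^2 * h1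
    rcases mul_eq_zero.mp e3 with h | h
    · omega
    · linarith
  have hqi : Prime (q:ℤ) := Nat.prime_iff_prime_int.mp hq
  rcases hqi.dvd_or_dvd hd with h | h
  · exact key b hb h1 h
  · exact key (-b) hb.neg (by linear_combination h1) (by rw [neg_mul, sub_neg_eq_add]; exact h)

end s15
end part15

section part16
open Finset

section s16
lemma transfer (p r : ℕ) (hp : p.Prime) (a : ℚ) (D z : ℤ) (hD : ¬ (p:ℤ) ∣ D) (h : (D:ℚ) * a = z) (hz : (p:ℤ)^r ∣ z) : (p:ℤ)^r ∣ a.num := by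
  have e : D * a.num = z * a.den := by
    have h1 : (a.den : ℚ) ≠ 0 := by exact_mod_cast a.den_nz
    have h2 : a * a.den = a.num := Rat.mul_den_eq_num a
    have : (D:ℚ) * a.num = z * a.den := by rw [← h2, ← h]; ring
    exact_mod_cast this
  have hc : IsCoprime ((p:ℤ)^r) D := by
    apply IsCoprime.pow_left
    exact ((Nat.prime_iff_prime_int.mp hp).coprime_iff_not_dvd).mpr hD
  apply hc.dvd_of_dvd_mul_left
  rw [e]; exact hz.mul_right _

lemma trans_sum (p r j : ℕ) [hp : Fact p.Prime] (hp2 : p ≠ 2) (i8 : ZMod (p^r)) (h8 : (-8)*i8 = 1) (A B : ℤ) (hA : ¬ (p:ℤ) ∣ A)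
    (rhs : ℚ) (hr : (A:ℚ) * rhs = B) (h : (A : ZMod (p^r)) * ss i8 p j = (B : ZMod (p^r))) :
    ratCongr p r (∑ k ∈ range p, (k:ℚ)^j * ((2*k).choose k : ℚ)^3 / (-8)^k) rhs := by
  unfold ratCongr
  set N : ℤ := ∑ k ∈ range p, (k:ℤ)^j * (k.centralBinom:ℤ)^3 * (-8)^(p-k) with hN
  apply transfer p r hp.out _ ((-8)^p * A) (A * N - (-8)^p * B)
  · intro hd
    have pp := Nat.prime_iff_prime_int.mp hp.out
    rcases pp.dvd_or_dvd hd with h | h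
    · have h1 := pp.dvd_of_dvd_pow h
      rw [dvd_neg, show (8:ℤ) = 2^3 by norm_num] at h1
      have h2 := pp.dvd_of_dvd_pow h1
      have h3 : p ∣ 2 := by exact_mod_cast h2
      exact hp2 ((Nat.prime_dvd_prime_iff_eq hp.out Nat.prime_two).mp h3)
    · exact hA h
  · have : (-8:ℚ)^p * ∑ k ∈ range p, (k:ℚ)^j * ((2*k).choose k : ℚ)^3 / (-8)^k = N := by
      rw [hN, mul_sum]; push_cast
      apply sum_congr rfl; intro k hk; simp at hk
      have e : (-8:ℚ)^p = (-8)^(p-k) * (-8)^k := by rw [← pow_add]; congr 1; omega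
      rw [e, Nat.centralBinom]
      have : (-8:ℚ)^k ≠ 0 := by positivity
      field_simp
    push_cast
    linear_combination (A:ℚ) * this - (-8:ℚ)^p * hr
  · have hNs : (N : ZMod (p^r)) = (-8)^p * ss i8 p j := by
      rw [hN, ss, mul_sum]; push_cast
      apply sum_congr rfl; intro k hk; simp at hk
      have e : (-8:ZMod (p^r))^p = (-8)^(p-k) * (-8)^k := by rw [← pow_add]; congr 1; omega
      have e2 : (-8:ZMod (p^r))^k * i8^k = 1 := by rw [← mul_pow, h8, one_pow]
      rw [uu, e]
      linear_combination (-(k:ZMod (p^r))^j * (k.centralBinom:ZMod (p^r))^3 * (-8)^(p-k)) * e2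
    have := (ZMod.intCast_zmod_eq_zero_iff_dvd (A * N - (-8)^p * B) (p^r)).mp (by
      push_cast
      rw [hNs]
      linear_combination (-8:ZMod (p^r))^p * h)
    push_cast at this
    exact this

end s16
end part16

theorem statement0 (p : ℕ) (hp : p.Prime) (hp2 : p ≠ 2) :
    (∀ x y : ℤ, p % 4 = 1 → (p : ℤ) = x^2 + 4*y^2 →
      ratCongr p 3
        (∑ k ∈ Finset.range p, (k:ℚ)^2 * ((2*k).choose k : ℚ)^3 / (-8)^k)
        (10/27*(x:ℚ)^2 - 4/9*(p:ℚ) + (p:ℚ)^2/(54*(x:ℚ)^2)) ∧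
      ratCongr p 3
        (∑ k ∈ Finset.range p, (k:ℚ)^3 * ((2*k).choose k : ℚ)^3 / (-8)^k)
        (-(4/81)*(x:ℚ)^2 + 4/27*(p:ℚ) - 17*(p:ℚ)^2/(324*(x:ℚ)^2))) ∧
    (p % 4 = 3 → p ≠ 3 →
      ratCongr p 2
        (∑ k ∈ Finset.range p, (k:ℚ)^2 * ((2*k).choose k : ℚ)^3 / (-8)^k)
        (1/18*R1 p + 7/27*(p:ℚ)) ∧
      ratCongr p 2
        (∑ k ∈ Finset.range p, (k:ℚ)^3 * ((2*k).choose k : ℚ)^3 / (-8)^k)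
        (-(2/27)*R1 p - 10/81*(p:ℚ))) := by
  haveI : Fact p.Prime := ⟨hp⟩
  have pp := Nat.prime_iff_prime_int.mp hp
  have n2 : ¬ (p:ℤ) ∣ 2 := by
    intro h
    have h3 : p ∣ 2 := by exact_mod_cast h
    exact hp2 ((Nat.prime_dvd_prime_iff_eq hp Nat.prime_two).mp h3)
  have n3 : p ≠ 3 → ¬ (p:ℤ) ∣ 3 := by
    intro h3 h
    have h' : p ∣ 3 := by exact_mod_cast h
    exact h3 ((Nat.prime_dvd_prime_iff_eq hp Nat.prime_three).mp h')
  constructor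
  · intro x y h4 hxy
    obtain ⟨m, hm⟩ : ∃ m, p = 4*m+1 := ⟨p/4, by omega⟩
    obtain ⟨i8, h8⟩ := exists_i8 (p := p) (r := 3) hp2
    obtain ⟨hu, s1, s2, -⟩ := case1_A m hm i8 h8
    have tl := tel_ss i8 h8 p P3_zero
    have sq := alpha_sq m hm _ rfl i8 h8
    obtain ⟨a, b, ha, hb, hab, β, hβ1, hβ2⟩ := exists_ab (p := p) m hm _ rfl
    have hpo : Odd (p:ℤ) := ⟨2*m, by rw [hm]; push_cast; ring⟩
    have hxo : Odd x := by
      by_contra hx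
      rw [Int.not_odd_iff_even] at hx
      obtain ⟨c, rfl⟩ := hx
      rw [hxy] at hpo
      exact (Int.not_odd_iff_even.mpr ⟨2*c^2+2*y^2, by ring⟩) hpo
    have hax := sq_unique p hp a b x (2*y) ha hb hxo ⟨y, by ring⟩ hab (by rw [hxy]; ring)
    have hx0 : x ≠ 0 := by rintro rfl; simp at hxo
    have hnx : ¬ (p:ℤ) ∣ x := by
      intro ⟨c, hc⟩
      have hc0 : c ≠ 0 := by rintro rfl; apply hx0; rw [hc]; ring
      have h1 : 1 ≤ c^2 := by have := sq_pos_of_ne_zero hc0; omega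
      have h2 : (2:ℤ) ≤ p := by exact_mod_cast hp.two_le
      have h3 : (p:ℤ)^2 * c^2 ≤ p := by
        have : (p:ℤ)^2 * c^2 = x^2 := by rw [hc]; ring
        rw [this]; nlinarith [sq_nonneg y]
      nlinarith
    have hX : 4 * (x:ZMod (p^3))^2 * ss i8 p 0 = (ss i8 p 0)^2 + 2 * (p:ZMod (p^3)) * ss i8 p 0 + (p:ZMod (p^3))^2 := by
      have h1 := congrArg (Int.cast : ℤ → ZMod (p^3)) hax
      push_cast at h1
      rw [← sq]
      generalize (∑ t : ZMod p, tm t^(3*m) * tm (1-t)^(2*m)) = α at *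
      rw [← h1]
      linear_combination (-(α + β + 2 * (a:ZMod (p^3))) * α^2) * hβ2 + (α * β + (p:ZMod (p^3)) + 2 * α^2) * hβ1
    have P3 : (p:ZMod (p^3))^3 = 0 := P3_zero
    have u2 := two_unit (p := p) hp2
    have p3 : p ≠ 3 := by omega
    have xq : (x:ℚ) ≠ 0 := by exact_mod_cast hx0
    constructor
    · apply trans_sum p 3 2 hp2 i8 h8 (54*x^2) (20*x^4-24*p*x^2+p^2)
      · intro hd
        rw [show (54:ℤ) = 2*3^3 by norm_num] at hd
        rcases pp.dvd_or_dvd hd with h | h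
        · rcases pp.dvd_or_dvd h with h | h
          · exact n2 h
          · exact n3 p3 (pp.dvd_of_dvd_pow h)
        · exact hnx (pp.dvd_of_dvd_pow h)
      · push_cast; field_simp; ring
      · apply ((u2.pow 4).mul (hu.pow 2)).mul_left_cancel
        push_cast
        generalize ss i8 p 0 = S at *
        generalize ss i8 p 1 = S1 at *
        generalize ss i8 p 2 = S2 at *
        generalize ss i8 p 3 = S3 at *
        generalize (x:ZMod (p^3)) = X at *
        generalize (p:ZMod (p^3)) = P at *
        linear_combination (4*(54*S2*S) - 20*(4*X^2*S+(S^2+2*P*S+P^2)) + 96*P*S)*hX + 4*(S^2+2*P*S+P^2)*(3*s2-14*S*s1) + (32*S+16*P)*P3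
    · apply trans_sum p 3 3 hp2 i8 h8 (324*x^2) (-16*x^4+48*p*x^2-17*p^2)
      · intro hd
        rw [show (324:ℤ) = 2^2*3^4 by norm_num] at hd
        rcases pp.dvd_or_dvd hd with h | h
        · rcases pp.dvd_or_dvd h with h | h
          · exact n2 (pp.dvd_of_dvd_pow h)
          · exact n3 p3 (pp.dvd_of_dvd_pow h)
        · exact hnx (pp.dvd_of_dvd_pow h)
      · push_cast; field_simp; ring
      · apply (hu.pow 2).mul_left_cancel
        push_cast
        generalize ss i8 p 0 = S at *
        generalize ss i8 p 1 = S1 at *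
        generalize ss i8 p 2 = S2 at *
        generalize ss i8 p 3 = S3 at *
        generalize (x:ZMod (p^3)) = X at *
        generalize (p:ZMod (p^3)) = P at *
        have hV : 81*S3*S = -S^2+10*P*S-18*P^2 := by
          linear_combination 9*S*tl - 2*(3*s2-14*S*s1) - 18*S*s1
        linear_combination (81*S3*S + (4*X^2*S+(S^2+2*P*S+P^2)) - 12*P*S)*hX + (S^2+2*P*S+P^2)*hV + (-34*S-17*P)*P3
  · intro h4 p3
    obtain ⟨M, hM⟩ : ∃ M, p = 4*M+3 := ⟨p/4, by omega⟩
    obtain ⟨i8, h8⟩ := exists_i8 (p := p) (r := 2) hp2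
    obtain ⟨s0, s1, s2⟩ := case3_R M hM i8 h8
    have tl := tel_ss i8 h8 p (pow_eq_zero_of_le (show 2 ≤ 3 by norm_num) P_pow)
    have hR : R1 p = (((2*p+2-2^(p-1)) * ((2*M+1).choose M)^2 : ℤ) : ℚ) := by
      unfold R1
      rw [show (p-1)/2 = 2*M+1 by omega, show p/4 = M by omega]; push_cast; ring
    constructor
    · apply trans_sum p 2 2 hp2 i8 h8 54 (3*((2*p+2-2^(p-1)) * ((2*M+1).choose M)^2)+14*p)
      · intro hd
        rw [show (54:ℤ) = 2*3^3 by norm_num] at hd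
        rcases pp.dvd_or_dvd hd with h | h
        · exact n2 h
        · exact n3 p3 (pp.dvd_of_dvd_pow h)
      · rw [hR]; push_cast; ring
      · push_cast
        linear_combination 3*s2 - 14*s1
    · apply trans_sum p 2 3 hp2 i8 h8 81 (-6*((2*p+2-2^(p-1)) * ((2*M+1).choose M)^2)-10*p)
      · intro hd
        rw [show (81:ℤ) = 3^4 by norm_num] at hd
        exact n3 p3 (pp.dvd_of_dvd_pow hd)
      · rw [hR]; push_cast; ring
      · push_cast
        linear_combination 9*tl - 6*s2 + 10*s1 - 9*s0
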